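/- arXiv:1612.01732 — 4 statements merged into one kernel-verified Lean document; each statement's English description precedes it below -/
import Mathlib

section
/- For every positive integer m and every integer n ≥ 3, there is an injective group homomorphism from G(P_m) into G(C_n) if and only if m + 1 ≤ n. -/
open SimpleGraph

/-- The set of commutator relations of a graph: one commutator for each edge. -/
def raagRels {V : Type} (G : SimpleGraph V) : Set (FreeGroup V) :=
  {r | ∃ u v : V, G.Adj u v ∧
    r = FreeGroup.of u * FreeGroup.of v * (FreeGroup.of u)⁻¹ * (FreeGroup.of v)⁻¹}

/-- The right-angled Artin group `A(G)` of a graph `G`. -/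
abbrev RAAG {V : Type} (G : SimpleGraph V) : Type := PresentedGroup (raagRels G)

/-- `G(Γ) = A(Γᶜ)`, the RAAG on the complement graph. -/
abbrev GG {V : Type} (G : SimpleGraph V) : Type := RAAG Gᶜ

/-- A linear forest: an acyclic graph all of whose vertices have degree at most 2. -/
def IsLinearForest {V : Type} (G : SimpleGraph V) : Prop :=
  G.IsAcyclic ∧ ∀ v : V, (G.neighborSet v).ncard ≤ 2

/-- The star of a vertex: the vertex together with its neighbours. -/
def starSet {V : Type} (G : SimpleGraph V) (v : V) : Set V :=
  insert v (G.neighborSet v)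

/-- The double `D_v(G)` of `G` along the star of `v`: original vertices together with
copies of the vertices outside the star. -/
def GraphDouble {V : Type} (G : SimpleGraph V) (v : V) :
    SimpleGraph (V ⊕ {w : V // w ∉ starSet G v}) :=
  SimpleGraph.fromRel (fun x y =>
    match x, y with
    | Sum.inl a, Sum.inl b => G.Adj a b
    | Sum.inr a, Sum.inr b => G.Adj a.1 b.1
    | Sum.inl a, Sum.inr b => a ∈ starSet G v ∧ G.Adj a b.1
    | Sum.inr _, Sum.inl _ => False)

/-- Subdivision of the edge `[v,w]` of `Λ`, with `none` as the new vertex. -/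
def SubdivEdge {V : Type} (Λ : SimpleGraph V) (v w : V) : SimpleGraph (Option V) :=
  SimpleGraph.fromRel (fun x y =>
    match x, y with
    | some a, some b => Λ.Adj a b ∧ ¬((a = v ∧ b = w) ∨ (a = w ∧ b = v))
    | some a, none => a = v ∨ a = w
    | none, some _ => False
    | none, none => False)

/-- The graph `Λ_u⁻(w₁,w₂)`, with `none` as the new vertex `v`. -/
def MinusGraph {V : Type} (Λ : SimpleGraph V) (u w₁ w₂ : V) : SimpleGraph (Option V) :=
  SimpleGraph.fromRel (fun x y =>
    match x, y with
    | some a, some b => Λ.Adj a b ∧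
        ¬((a = u ∧ b = w₁) ∨ (a = w₁ ∧ b = u) ∨ (a = u ∧ b = w₂) ∨ (a = w₂ ∧ b = u))
    | some a, none => a = w₁ ∨ a = u ∨ a = w₂
    | none, some _ => False
    | none, none => False)

/-- The graph `Λ_u⁺(w₁,w₂)`: `Λ_u⁻(w₁,w₂)` with the edge `[u,w₂]` added back. -/
def PlusGraph {V : Type} (Λ : SimpleGraph V) (u w₁ w₂ : V) : SimpleGraph (Option V) :=
  SimpleGraph.fromRel (fun x y =>
    (MinusGraph Λ u w₁ w₂).Adj x y ∨ (x = some u ∧ y = some w₂))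


/-! ### Part 1: facts about free groups -/

namespace RaagAux

open Classical in
theorem fg_center_subsingleton {X : Type*} (z : FreeGroup X) (hz : z ≠ 1)
    (hc : ∀ g : FreeGroup X, g * z = z * g) : ∀ x y : X, x = y := by
  by_contra! hne
  obtain ⟨x₁, x₂, hx⟩ := hne
  have hL : z.toWord ≠ [] := by simpa [FreeGroup.toWord_eq_nil_iff] using hz
  obtain ⟨x, hxa⟩ : ∃ x, x ≠ (z.toWord.head hL).1 := by
    by_cases h : x₁ = (z.toWord.head hL).1
    · exact ⟨x₂, fun h' => hx (h.trans h'.symm)⟩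
    · exact ⟨x₁, h⟩
  have hred : FreeGroup.IsReduced z.toWord := FreeGroup.isReduced_toWord
  set s : Bool := !(z.toWord.getLast hL).2 with hs
  have h1 : FreeGroup.IsReduced ((x, s) :: (z.toWord ++ [(x, !s)])) := by
    unfold FreeGroup.IsReduced at hred ⊢
    rw [List.isChain_cons, List.isChain_append]
    refine ⟨?_, hred, by simp, ?_⟩
    · intro y hy
      rw [List.head?_append_of_ne_nil _ hL, List.head?_eq_some_head hL] at hy
      simp only [Option.mem_def, Option.some.injEq] at hy
      subst hy
      intro h
      exact absurd h hxa
    · intro a ha b hb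
      rw [List.getLast?_eq_some_getLast hL] at ha
      simp only [Option.mem_def, Option.some.injEq, List.head?_cons] at ha hb
      subst ha; subst hb
      intro _
      simp [hs]
  have h2 : FreeGroup.mk ((x, s) :: (z.toWord ++ [(x, !s)])) = z := by
    have e1 : FreeGroup.mk ((x, s) :: (z.toWord ++ [(x, !s)])) =
        FreeGroup.mk [(x, s)] * z * (FreeGroup.mk [(x, s)])⁻¹ := by
      conv_rhs => rw [← FreeGroup.mk_toWord (x := z)]
      simp [FreeGroup.mul_mk, FreeGroup.inv_mk, FreeGroup.invRev]
    rw [e1, hc]; group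
  have h3 := congrArg FreeGroup.toWord h2
  rw [FreeGroup.toWord_mk, h1.reduce_eq] at h3
  have := congrArg List.length h3
  simp at this
  omega

theorem fg_comm_of_subsingleton {X : Type*} (h : ∀ x y : X, x = y) (a b : FreeGroup X) :
    a * b = b * a := by
  have hof : ∀ x : X, ∀ b : FreeGroup X, Commute (FreeGroup.of x) b := by
    intro x b
    induction b using FreeGroup.induction_on with
    | C1 => exact Commute.one_right _
    | of y => rw [h x y]
    | inv_of y hy => exact hy.inv_right
    | mul a b ha hb => exact ha.mul_right hb
  have : Commute a b := by
    induction a using FreeGroup.induction_on with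
    | C1 => exact Commute.one_left _
    | of y => exact hof y b
    | inv_of y hy => exact hy.inv_left
    | mul a c ha hb => exact ha.mul_left hb
  exact this

theorem fg_abel_of_center {F : Type*} [Group F] [IsFreeGroup F] (z : F) (hz : z ≠ 1)
    (hc : ∀ g : F, g * z = z * g) (a b : F) : a * b = b * a := by
  let e := IsFreeGroup.toFreeGroup F
  have hs := fg_center_subsingleton (e z) (by simpa using hz) (fun g => by
    have := congrArg e (hc (e.symm g))
    simpa using this)
  apply e.injective
  simpa using fg_comm_of_subsingleton hs (e a) (e b)

theorem fg_comm_trans {F : Type*} [Group F] [IsFreeGroup F] {z a b : F} (hz : z ≠ 1)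
    (ha : Commute a z) (hb : Commute b z) : Commute a b := by
  let C : Subgroup F := Subgroup.centralizer {z}
  have hzC : z ∈ C := by simp [C, Subgroup.mem_centralizer_singleton_iff]
  have haC : a ∈ C := by
    simpa [C, Subgroup.mem_centralizer_singleton_iff] using ha.eq
  have hbC : b ∈ C := by
    simpa [C, Subgroup.mem_centralizer_singleton_iff] using hb.eq
  have := fg_abel_of_center (F := C) ⟨z, hzC⟩ (by simpa using hz) (fun g => by
    have := g.2
    simp only [C, Subgroup.mem_centralizer_singleton_iff] at this
    ext; simpa using this) ⟨a, haC⟩ ⟨b, hbC⟩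
  simpa [Commute, SemiconjBy] using congrArg Subtype.val this

theorem fg_pow_ne_one {F : Type*} [Group F] [IsFreeGroup F] {a : F} (ha : a ≠ 1) {n : ℕ}
    (hn : n ≠ 0) : a ^ n ≠ 1 := by
  intro h
  let e := IsFreeGroup.toFreeGroup F
  have h1 : (e a) ^ n = 1 := by rw [← map_pow, h, map_one]
  have h2 : e a = 1 := by
    rwa [pow_eq_one_iff_left hn] at h1
  exact ha (by simpa using h2)

theorem fg_pow_comm {F : Type*} [Group F] [IsFreeGroup F] {a b : F} {n : ℕ} (hn : n ≠ 0)
    (h : Commute (a ^ n) (b ^ n)) : Commute a b := by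
  by_cases ha : a = 1
  · rw [ha]; exact Commute.one_left _
  by_cases hb : b = 1
  · rw [hb]; exact Commute.one_right _
  have h1 : Commute a (b ^ n) :=
    fg_comm_trans (fg_pow_ne_one ha hn) (Commute.self_pow a n) h.symm
  exact fg_comm_trans (fg_pow_ne_one hb hn) h1 (Commute.self_pow b n)

/-- a commutative free group embeds in the integers -/
theorem fg_comm_embed {F : Type*} [Group F] [IsFreeGroup F] (hc : ∀ a b : F, a * b = b * a) :
    ∃ c : F →* Multiplicative ℤ, Function.Injective c := by
  let e := IsFreeGroup.toFreeGroup F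
  have hs : ∀ x y : IsFreeGroup.Generators F, x = y := by
    intro x y
    refine fg_center_subsingleton (FreeGroup.of x) (FreeGroup.of_ne_one x) (fun g => ?_) x y
    have := congrArg e (hc (e.symm g) (e.symm (FreeGroup.of x)))
    simpa using this
  let c : FreeGroup (IsFreeGroup.Generators F) →* Multiplicative ℤ :=
    FreeGroup.lift (fun _ => Multiplicative.ofAdd 1)
  have hci : Function.Injective c := by
    rw [injective_iff_map_eq_one]
    intro g hg
    rcases isEmpty_or_nonempty (IsFreeGroup.Generators F) with h0 | ⟨⟨x⟩⟩
    · exact Subsingleton.elim _ _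
    have : ∃ k : ℤ, g = FreeGroup.of x ^ k := by
      clear hg
      induction g using FreeGroup.induction_on with
      | C1 => exact ⟨0, by simp⟩
      | of y => exact ⟨1, by simp [hs x y]⟩
      | inv_of y _ => exact ⟨-1, by simp [hs x y]⟩
      | mul a b ha hb =>
        obtain ⟨k, rfl⟩ := ha
        obtain ⟨l, rfl⟩ := hb
        exact ⟨k + l, by rw [zpow_add]⟩
    obtain ⟨k, rfl⟩ := this
    have hk : k = 0 := by
      have : c (FreeGroup.of x ^ k) = Multiplicative.ofAdd k := by
        simp [c, ← ofAdd_zsmul]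
      rw [this] at hg
      simpa using hg
    simp [hk]
  exact ⟨c.comp e.toMonoidHom, hci.comp e.injective⟩

/-- a nontrivial normal subgroup of a nonabelian free group is nonabelian -/
theorem fg_normal_nonabelian {F : Type*} [Group F] [IsFreeGroup F] (M : Subgroup F) [M.Normal]
    {f : F} (hf : f ∈ M) (hf1 : f ≠ 1) {a b : F} (hab : ¬ Commute a b) :
    ∃ x ∈ M, ∃ y ∈ M, ¬ Commute x y := by
  by_contra! hM
  obtain ⟨c, hc⟩ := fg_comm_embed (F := M) (fun x y => by
    ext; exact hM x x.2 y y.2)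
  have : IsCyclic M := isCyclic_of_injective c hc
  obtain ⟨⟨t, htM⟩, ht⟩ := IsCyclic.exists_generator (α := M)
  have ht' : ∀ m ∈ M, ∃ k : ℤ, t ^ k = m := by
    intro m hm
    obtain ⟨k, hk⟩ := ht ⟨m, hm⟩
    exact ⟨k, by simpa using congrArg Subtype.val hk⟩
  have ht1 : t ≠ 1 := by
    rintro rfl
    obtain ⟨k, hk⟩ := ht' f hf
    exact hf1 (by simpa using hk.symm)
  have key : ∀ g : F, Commute (g ^ 2) t := by
    intro g
    obtain ⟨k, hk⟩ := ht' (g * t * g⁻¹) (Subgroup.Normal.conj_mem ‹_› t htM g)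
    obtain ⟨l, hl⟩ := ht' (g⁻¹ * t * g) (by
      simpa using Subgroup.Normal.conj_mem ‹_› t htM g⁻¹)
    have e1 : t ^ (k * l) = t := by
      rw [zpow_mul, hk, conj_zpow, hl]; group
    have e2 : k * l = 1 := by
      let e := IsFreeGroup.toFreeGroup F
      have h1 : (e t) ^ (k * l) = (e t) ^ (1 : ℤ) := by rw [← map_zpow, e1]; simp
      have h2 : e t ≠ 1 := by simpa using ht1
      by_contra hne
      exact h2 ((zpow_left_inj (sub_ne_zero.mpr hne)).mp (by
        rw [zpow_sub, h1]; simp))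
    have e3 : g ^ 2 * t * (g ^ 2)⁻¹ = t := by
      have : g ^ 2 * t * (g ^ 2)⁻¹ = t ^ (k * k) := by
        rw [zpow_mul, hk, conj_zpow, hk]; simp [pow_two, mul_assoc]
      rw [this]
      rcases Int.eq_one_or_neg_one_of_mul_eq_one e2 with h | h <;> simp [h]
    exact mul_inv_eq_iff_eq_mul.mp e3
  exact hab (fg_pow_comm two_ne_zero (fg_comm_trans ht1 (key a) (key b)))

section letters
open Classical

/-- set of letters in a free group element -/
noncomputable def letters {X : Type*} (w : FreeGroup X) : Finset X :=
  (w.toWord.map Prod.fst).toFinset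

/-- minimal norm in its conjugacy class -/
def IsMinC {X : Type*} (w : FreeGroup X) : Prop :=
  ∀ g : FreeGroup X, w.norm ≤ (g * w * g⁻¹).norm

theorem mem_letters {X : Type*} {w : FreeGroup X} {x : X} :
    x ∈ letters w ↔ ∃ b, (x, b) ∈ w.toWord := by
  simp [letters]

/-- kill a generator -/
noncomputable def killX {X : Type*} (x : X) : FreeGroup X →* FreeGroup X :=
  FreeGroup.lift (fun y => if y = x then 1 else FreeGroup.of y)

theorem killX_mk {X : Type*} (x : X) (L : List (X × Bool)) :
    killX x (FreeGroup.mk L) = FreeGroup.mk (L.filter (fun p => decide (p.1 ≠ x))) := by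
  induction L with
  | nil => simp [killX, FreeGroup.one_eq_mk]
  | cons p L ih =>
    have h1 : FreeGroup.mk (p :: L) = FreeGroup.mk [p] * FreeGroup.mk L := by
      simp [FreeGroup.mul_mk]
    rw [h1, map_mul, ih]
    obtain ⟨y, b⟩ := p
    by_cases hy : y = x
    · have : killX x (FreeGroup.mk [(y, b)]) = 1 := by
        simp only [killX, FreeGroup.lift_mk]
        cases b <;> simp [hy]
      rw [this, List.filter_cons_of_neg (by simp [hy]), one_mul]
    · have : killX x (FreeGroup.mk [(y, b)]) = FreeGroup.mk [(y, b)] := by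
        simp only [killX, FreeGroup.lift_mk]
        cases b <;> simp [hy, FreeGroup.of, FreeGroup.inv_mk, FreeGroup.invRev]
      rw [this, List.filter_cons_of_pos (by simp [hy]), FreeGroup.mul_mk]
      simp

theorem killX_eq {X : Type*} {x : X} {w : FreeGroup X} (h : x ∉ letters w) : killX x w = w := by
  conv_lhs => rw [← FreeGroup.mk_toWord (x := w)]
  rw [killX_mk, List.filter_eq_self.mpr, FreeGroup.mk_toWord]
  rintro ⟨y, b⟩ hy
  simp only [ne_eq, decide_not, Bool.not_eq_eq_eq_not, Bool.not_true, decide_eq_false_iff_not]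
  rintro rfl
  exact h (mem_letters.mpr ⟨b, hy⟩)

theorem killX_norm_lt {X : Type*} {x : X} {w : FreeGroup X} (h : x ∈ letters w) :
    (killX x w).norm < w.norm := by
  obtain ⟨b, hb⟩ := mem_letters.mp h
  have : killX x w = FreeGroup.mk (w.toWord.filter (fun p => decide (p.1 ≠ x))) := by
    rw [← killX_mk, FreeGroup.mk_toWord]
  rw [this]
  refine lt_of_le_of_lt FreeGroup.norm_mk_le ?_
  refine lt_of_le_of_ne (List.length_filter_le _ _) ?_
  intro h
  have := List.length_filter_eq_length_iff.mp h _ hb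
  simp at this

theorem letters_subset_of_conj {X : Type*} {w g : FreeGroup X} (hw : IsMinC (g * w * g⁻¹)) :
    letters (g * w * g⁻¹) ⊆ letters w := by
  intro x hx
  by_contra hxw
  have h1 := killX_norm_lt hx
  have h2 := killX_eq hxw
  rw [map_mul, map_mul, h2, map_inv] at h1
  have h3 := hw (killX x g * g⁻¹)
  have : killX x g * g⁻¹ * (g * w * g⁻¹) * (killX x g * g⁻¹)⁻¹ =
    killX x g * w * (killX x g)⁻¹ := by group
  rw [this] at h3
  omega

theorem exists_min_conj {X : Type*} (w : FreeGroup X) :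
    ∃ g : FreeGroup X, IsMinC (g * w * g⁻¹) := by
  let P : ℕ → Prop := fun n => ∃ g : FreeGroup X, (g * w * g⁻¹).norm = n
  have hP : ∃ n, P n := ⟨_, 1, rfl⟩
  obtain ⟨g, hg⟩ := Nat.find_spec hP
  refine ⟨g, fun k => ?_⟩
  rw [hg]
  refine Nat.find_min' hP ⟨k * g, ?_⟩
  congr 1; group

theorem toWord_map_inj {X : Type*} {f : X → X} (hf : Function.Injective f) (w : FreeGroup X) :
    (FreeGroup.map f w).toWord = w.toWord.map (fun p => (f p.1, p.2)) := by
  have hred : FreeGroup.IsReduced w.toWord := FreeGroup.isReduced_toWord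
  conv_lhs => rw [← FreeGroup.mk_toWord (x := w)]
  rw [FreeGroup.map.mk, FreeGroup.toWord_mk, FreeGroup.IsReduced.reduce_eq]
  unfold FreeGroup.IsReduced at hred ⊢
  rw [List.isChain_map]
  exact hred.imp (fun a b h h' => h (hf h'))

theorem norm_map_inj {X : Type*} {f : X → X} (hf : Function.Injective f) (w : FreeGroup X) :
    (FreeGroup.map f w).norm = w.norm := by
  simp [FreeGroup.norm, toWord_map_inj hf]

theorem letters_map {X : Type*} {f : X → X} (hf : Function.Injective f) (w : FreeGroup X) :
    letters (FreeGroup.map f w) = (letters w).image f := by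
  ext x
  simp only [mem_letters, toWord_map_inj hf, Finset.mem_image, List.mem_map]
  constructor
  · rintro ⟨b, p, hp, hpe⟩
    refine ⟨p.1, ⟨p.2, hp⟩, by simpa using congrArg Prod.fst hpe⟩
  · rintro ⟨y, ⟨b, hb⟩, rfl⟩
    exact ⟨b, _, hb, rfl⟩

theorem letters_nonempty {X : Type*} {w : FreeGroup X} (hw : w ≠ 1) : (letters w).Nonempty := by
  have hL : w.toWord ≠ [] := by simpa [FreeGroup.toWord_eq_nil_iff] using hw
  exact ⟨(w.toWord.head hL).1, mem_letters.mpr ⟨(w.toWord.head hL).2, List.head_mem hL⟩⟩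

/-- letters of a minimal element are fixed by a bounded power of everything
preserving the conjugacy class -/
theorem fixed_letters {X H : Type*} [Group H] [MulAction H X] {w : FreeGroup X} (hw : IsMinC w) :
    ∃ n : ℕ, n ≠ 0 ∧ ∀ h : H, (∃ g, FreeGroup.map (fun x => h • x) w = g * w * g⁻¹) →
      ∀ x ∈ letters w, h ^ n • x = x := by
  refine ⟨Fintype.card (Equiv.Perm {x // x ∈ letters w}), Fintype.card_ne_zero, ?_⟩
  rintro h ⟨g, hg⟩ x hx
  have hinj : Function.Injective (fun x : X => h • x) := MulAction.injective h
  have hmin : IsMinC (g * w * g⁻¹) := by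
    intro k
    rw [← hg, norm_map_inj hinj, hg]
    have := hw (k * g)
    convert this using 2
    group
  have hsub : (letters w).image (fun x => h • x) ⊆ letters w := by
    rw [← letters_map hinj, hg]
    exact letters_subset_of_conj hmin
  have hmem : ∀ y, y ∈ letters w → h • y ∈ letters w := fun y hy =>
    hsub (Finset.mem_image_of_mem _ hy)
  let s : {x // x ∈ letters w} → {x // x ∈ letters w} := fun y => ⟨h • y.1, hmem _ y.2⟩
  have hs : Function.Injective s := by
    intro a b hab
    have : h • a.1 = h • b.1 := congrArg Subtype.val hab
    exact Subtype.ext (hinj this)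
  let σ : Equiv.Perm {x // x ∈ letters w} :=
    Equiv.ofBijective s (Finite.injective_iff_bijective.mp hs)
  have hpow : ∀ k : ℕ, ∀ y, ((σ ^ k) y).1 = h ^ k • y.1 := by
    intro k
    induction k with
    | zero => intro y; simp
    | succ k ih =>
      intro y
      rw [pow_succ, Equiv.Perm.mul_apply, ih, pow_succ, mul_smul]
      rfl
  have := hpow (Fintype.card (Equiv.Perm {x // x ∈ letters w})) ⟨x, hx⟩
  rw [pow_card_eq_one] at this
  exact this.symm

theorem two_letters {X : Type*} {a b g : FreeGroup X} {w : FreeGroup X}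
    (hw : w = g * (a * b * a⁻¹ * b⁻¹) * g⁻¹) (hw1 : w ≠ 1) :
    ∃ x ∈ letters w, ∃ y ∈ letters w, x ≠ y := by
  by_contra! hall
  obtain ⟨x, hx⟩ := letters_nonempty hw1
  have hk : ∀ L : List (X × Bool), (∀ p ∈ L, p.1 = x) →
      ∃ k : ℤ, FreeGroup.mk L = FreeGroup.of x ^ k := by
    intro L
    induction L with
    | nil => intro _; exact ⟨0, by simp [FreeGroup.one_eq_mk]⟩
    | cons p L ih =>
      intro h
      obtain ⟨k, hk⟩ := ih (fun q hq => h q (by simp [hq]))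
      obtain ⟨y, c⟩ := p
      have hy : y = x := h (y, c) (by simp)
      subst hy
      have h1 : FreeGroup.mk ((y, c) :: L) = FreeGroup.mk [(y, c)] * FreeGroup.mk L := by
        simp [FreeGroup.mul_mk]
      cases c
      · refine ⟨-1 + k, ?_⟩
        rw [h1, hk, zpow_add]
        simp [FreeGroup.of, FreeGroup.inv_mk, FreeGroup.invRev]
      · refine ⟨1 + k, ?_⟩
        rw [h1, hk, zpow_add]
        simp [FreeGroup.of]
  obtain ⟨k, hk⟩ := hk w.toWord (fun p hp => hall _ (mem_letters.mpr ⟨p.2, hp⟩) _ hx)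
  rw [FreeGroup.mk_toWord] at hk
  let c : FreeGroup X →* Multiplicative ℤ := FreeGroup.lift (fun _ => Multiplicative.ofAdd 1)
  have h1 : c w = 1 := by
    rw [hw]; simp only [map_mul, map_inv]
    rw [mul_comm (c a) (c b)]; group
  have h2 : c w = Multiplicative.ofAdd k := by
    rw [hk]; simp [c, ← ofAdd_zsmul]
  rw [h2] at h1
  have : k = 0 := by simpa using h1
  subst this
  exact hw1 (by simpa using hk)

end letters

end RaagAux

/-! ### Part 2: standard subgroups and retractions of right-angled Artin groups -/

namespace RaagAux

section raag

variable {V : Type} {Γ : SimpleGraph V}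

/-- generator -/
def gen (Γ : SimpleGraph V) (v : V) : RAAG Γ := PresentedGroup.of v

theorem gen_comm {u v : V} (h : Γ.Adj u v) : Commute (gen Γ u) (gen Γ v) := by
  have : PresentedGroup.mk (raagRels Γ) (FreeGroup.of u * FreeGroup.of v * (FreeGroup.of u)⁻¹ *
      (FreeGroup.of v)⁻¹) = 1 := PresentedGroup.one_of_mem ⟨u, v, h, rfl⟩
  simp only [map_mul, map_inv] at this
  rw [mul_inv_eq_one, mul_inv_eq_iff_eq_mul] at this
  exact this

/-- universal property -/
def rlift {G : Type*} [Group G] (f : V → G) (hf : ∀ u v, Γ.Adj u v → Commute (f u) (f v)) :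
    RAAG Γ →* G :=
  PresentedGroup.toGroup (rels := raagRels Γ) (f := f) (by
    rintro r ⟨u, v, h, rfl⟩
    simp only [map_mul, map_inv, FreeGroup.lift_apply_of]
    rw [mul_inv_eq_one, mul_inv_eq_iff_eq_mul]
    exact hf u v h)

@[simp] theorem rlift_gen {G : Type*} [Group G] (f : V → G)
    (hf : ∀ u v, Γ.Adj u v → Commute (f u) (f v)) (v : V) : rlift f hf (gen Γ v) = f v :=
  PresentedGroup.toGroup.of _

theorem rext {G : Type*} [Group G] {φ ψ : RAAG Γ →* G} (h : ∀ v, φ (gen Γ v) = ψ (gen Γ v)) :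
    φ = ψ := PresentedGroup.ext h

/-- standard subgroup -/
def std (Γ : SimpleGraph V) (S : Set V) : Subgroup (RAAG Γ) := Subgroup.closure (gen Γ '' S)

theorem gen_mem_std {S : Set V} {v : V} (h : v ∈ S) : gen Γ v ∈ std Γ S :=
  Subgroup.subset_closure ⟨v, h, rfl⟩

theorem std_mono {S T : Set V} (h : S ⊆ T) : std Γ S ≤ std Γ T :=
  Subgroup.closure_mono (Set.image_mono h)

theorem std_empty : std Γ ∅ = ⊥ := by simp [std]

open Classical in
/-- retraction onto a standard subgroup -/
noncomputable def rho (Γ : SimpleGraph V) (S : Set V) : RAAG Γ →* RAAG Γ :=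
  rlift (fun v => if v ∈ S then gen Γ v else 1) (by
    intro u v h
    split_ifs
    · exact gen_comm h
    · exact Commute.one_right _
    · exact Commute.one_left _
    · exact Commute.one_left _)

open Classical in
theorem rho_gen (S : Set V) (v : V) : rho Γ S (gen Γ v) = if v ∈ S then gen Γ v else 1 := by
  simp [rho]

theorem rho_rho (S T : Set V) (g : RAAG Γ) : rho Γ S (rho Γ T g) = rho Γ (S ∩ T) g := by
  have : (rho Γ S).comp (rho Γ T) = rho Γ (S ∩ T) := by
    apply rext
    intro v
    simp only [MonoidHom.comp_apply, rho_gen]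
    by_cases h1 : v ∈ T <;> by_cases h2 : v ∈ S <;> simp [h1, h2, rho_gen]
  exact DFunLike.congr_fun this g

theorem rho_mem (S : Set V) (g : RAAG Γ) : rho Γ S g ∈ std Γ S := by
  refine PresentedGroup.generated_by _ ((std Γ S).comap (rho Γ S)) (fun v => ?_) g
  change rho Γ S (gen Γ v) ∈ std Γ S
  rw [rho_gen]
  split_ifs with h
  · exact gen_mem_std h
  · exact one_mem _

theorem rho_eq {S : Set V} {g : RAAG Γ} (h : g ∈ std Γ S) : rho Γ S g = g := by
  induction h using Subgroup.closure_induction with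
  | mem x hx => obtain ⟨v, hv, rfl⟩ := hx; simp [rho_gen, hv]
  | one => simp
  | mul x y _ _ hx hy => simp [hx, hy]
  | inv x _ hx => simp [hx]

theorem rho_mem_inter {S T : Set V} {g : RAAG Γ} (h : g ∈ std Γ T) :
    rho Γ S g ∈ std Γ (S ∩ T) := by
  rw [← rho_eq h, rho_rho]; exact rho_mem _ _

/-- elements of `std` of the link commute with `v` -/
theorem comm_link {v : V} {T : Set V} (hT : T ⊆ Γ.neighborSet v) {g : RAAG Γ}
    (h : g ∈ std Γ T) : Commute g (gen Γ v) := by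
  induction h using Subgroup.closure_induction with
  | mem x hx => obtain ⟨u, hu, rfl⟩ := hx; exact (gen_comm (hT hu)).symm
  | one => exact Commute.one_left _
  | mul x y _ _ hx hy => exact hx.mul_left hy
  | inv x _ hx => exact hx.inv_left

/-- permutation action on free group -/
def actF (H X : Type*) [Group H] [MulAction H X] : H →* MulAut (FreeGroup X) where
  toFun h := FreeGroup.freeGroupCongr (MulAction.toPerm h)
  map_one' := by
    ext w
    change FreeGroup.map _ w = w
    convert FreeGroup.map.id w using 2
    ext x; simp
  map_mul' a b := by
    ext w
    change FreeGroup.map _ w = FreeGroup.map _ (FreeGroup.map _ w)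
    rw [FreeGroup.map.comp]
    congr 2
    ext x; simp [mul_smul]

theorem actF_apply {H X : Type*} [Group H] [MulAction H X] (h : H) (w : FreeGroup X) :
    actF H X h w = FreeGroup.map (fun x => h • x) w := rfl

/-- the subgroup `A(S ∩ Lk v)` of `A(S)` -/
def KK (Γ : SimpleGraph V) (v : V) (S : Set V) : Subgroup (std Γ S) :=
  (std Γ (S ∩ Γ.neighborSet v)).subgroupOf (std Γ S)

/-- coset space -/
abbrev XX (Γ : SimpleGraph V) (v : V) (S : Set V) : Type := (std Γ S) ⧸ (KK Γ v S)

/-- the semidirect product -/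
abbrev SD (Γ : SimpleGraph V) (v : V) (S : Set V) : Type :=
  FreeGroup (XX Γ v S) ⋊[actF (std Γ S) (XX Γ v S)] (std Γ S)

open Classical in
/-- images of the generators -/
noncomputable def psiGen (Γ : SimpleGraph V) (v : V) (S : Set V) (u : V) : SD Γ v S :=
  if u = v then SemidirectProduct.inl (FreeGroup.of ((1 : std Γ S) : XX Γ v S))
  else if h : u ∈ S then SemidirectProduct.inr ⟨gen Γ u, gen_mem_std h⟩ else 1

theorem psiGen_comm_aux (v : V) (S : Set V) (u : V) (h : Γ.Adj u v) :
    Commute (psiGen Γ v S u) (psiGen Γ v S v) := by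
  have huv : u ≠ v := h.ne
  unfold psiGen
  simp only [huv, if_true, if_false]
  split_ifs with hu
  · have e := SemidirectProduct.inl_aut (φ := actF (std Γ S) (XX Γ v S))
      ⟨gen Γ u, gen_mem_std hu⟩ (FreeGroup.of ((1 : std Γ S) : XX Γ v S))
    rw [actF_apply, FreeGroup.map.of] at e
    have e2 : ((⟨gen Γ u, gen_mem_std hu⟩ : std Γ S) • ((1 : std Γ S) : XX Γ v S)) =
        ((1 : std Γ S) : XX Γ v S) := by
      change (((⟨gen Γ u, gen_mem_std hu⟩ * 1 : std Γ S)) : XX Γ v S) = _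
      rw [QuotientGroup.eq]
      simp only [KK, Subgroup.mem_subgroupOf]
      simpa using inv_mem (gen_mem_std (Γ := Γ) (S := S ∩ Γ.neighborSet v) ⟨hu, h.symm⟩)
    rw [e2, map_inv] at e
    exact (mul_inv_eq_iff_eq_mul.mp e.symm)
  · exact Commute.one_left _

/-- the embedding into the semidirect product -/
noncomputable def psi (Γ : SimpleGraph V) (v : V) (S : Set V) : RAAG Γ →* SD Γ v S :=
  rlift (psiGen Γ v S) (by
    intro u w h
    by_cases hw : w = v
    · subst hw; exact psiGen_comm_aux w S u h
    by_cases hu : u = v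
    · subst hu; exact (psiGen_comm_aux u S w h.symm).symm
    unfold psiGen
    simp only [hu, hw, if_false]
    split_ifs
    · rw [Commute, SemiconjBy, ← map_mul, ← map_mul]
      congr 1
      ext
      exact (gen_comm h).eq
    · exact Commute.one_right _
    · exact Commute.one_left _
    · exact Commute.one_left _)

theorem psi_gen (v : V) (S : Set V) (u : V) : psi Γ v S (gen Γ u) = psiGen Γ v S u := by
  simp [psi]

/-- images of the cosets -/
noncomputable def thetaX (Γ : SimpleGraph V) (v : V) (S : Set V) (x : XX Γ v S) : RAAG Γ :=
  Quotient.liftOn' x (fun g => (g : RAAG Γ) * gen Γ v * (g : RAAG Γ)⁻¹) (by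
    intro a b hab
    rw [QuotientGroup.leftRel_apply] at hab
    simp only [KK, Subgroup.mem_subgroupOf] at hab
    have h := comm_link (v := v) Set.inter_subset_right hab
    have h' : ((a : RAAG Γ)⁻¹ * b) * gen Γ v * ((a : RAAG Γ)⁻¹ * b)⁻¹ = gen Γ v :=
      mul_inv_eq_iff_eq_mul.mpr h
    calc (a : RAAG Γ) * gen Γ v * (a : RAAG Γ)⁻¹ =
        a * (((a : RAAG Γ)⁻¹ * b) * gen Γ v * ((a : RAAG Γ)⁻¹ * b)⁻¹) * (a : RAAG Γ)⁻¹ := by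
          rw [h']
      _ = _ := by group)

theorem thetaX_mk (v : V) (S : Set V) (g : std Γ S) :
    thetaX Γ v S (g : XX Γ v S) = (g : RAAG Γ) * gen Γ v * (g : RAAG Γ)⁻¹ := rfl

/-- inverse map -/
noncomputable def theta (Γ : SimpleGraph V) (v : V) (S : Set V) : SD Γ v S →* RAAG Γ :=
  SemidirectProduct.lift (FreeGroup.lift (thetaX Γ v S)) (std Γ S).subtype (by
    intro g
    apply FreeGroup.ext_hom
    intro x
    induction x using QuotientGroup.induction_on with
    | H k =>
      simp only [MonoidHom.comp_apply, MulEquiv.coe_toMonoidHom, actF_apply, FreeGroup.map.of,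
        FreeGroup.lift_apply_of, MulAut.conj_apply, Subgroup.subtype_apply]
      change thetaX Γ v S ((g * k : std Γ S) : XX Γ v S) = _
      rw [thetaX_mk, thetaX_mk]
      push_cast
      group)

theorem theta_psi (v : V) (S : Set V) (g : RAAG Γ) :
    theta Γ v S (psi Γ v S g) = rho Γ (insert v S) g := by
  have : (theta Γ v S).comp (psi Γ v S) = rho Γ (insert v S) := by
    apply rext
    intro u
    rw [MonoidHom.comp_apply, psi_gen, rho_gen]
    unfold psiGen
    by_cases hu : u = v
    · subst hu
      simp [theta, thetaX_mk]
    · by_cases hS : u ∈ S <;> simp [theta, hu, hS]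
  exact DFunLike.congr_fun this g

theorem psi_right {v : V} {S : Set V} (hv : v ∉ S) (g : RAAG Γ) :
    (((psi Γ v S g).right : std Γ S) : RAAG Γ) = rho Γ S g := by
  have : ((std Γ S).subtype.comp SemidirectProduct.rightHom).comp (psi Γ v S) = rho Γ S := by
    apply rext
    intro u
    rw [MonoidHom.comp_apply, psi_gen, rho_gen]
    unfold psiGen
    by_cases hu : u = v
    · subst hu
      simp [hv]
    · by_cases hS : u ∈ S <;> simp [hu, hS]
  exact DFunLike.congr_fun this g

theorem psi_ker {v : V} {S : Set V} (hv : v ∉ S) {g : RAAG Γ} (h : rho Γ S g = 1) :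
    psi Γ v S g = SemidirectProduct.inl (psi Γ v S g).left := by
  have h1 := psi_right hv g
  rw [h] at h1
  have h2 : (psi Γ v S g).right = 1 := by ext; simpa using h1
  ext
  · simp
  · simp [h2]

theorem psi_left_ne {v : V} {S : Set V} (hv : v ∉ S) {g : RAAG Γ} (h : rho Γ S g = 1)
    (hg : g ∈ std Γ (insert v S)) (h1 : g ≠ 1) : (psi Γ v S g).left ≠ 1 := by
  intro h2
  have h3 := psi_ker hv h
  rw [h2, map_one] at h3
  have h4 := theta_psi v S g
  rw [h3, map_one, rho_eq hg] at h4
  exact h1 h4.symm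

theorem psi_comm {v : V} {S : Set V} (hv : v ∉ S) {g a : RAAG Γ} (h : rho Γ S g = 1)
    (hc : Commute a g) :
    FreeGroup.map (fun x => (psi Γ v S a).right • x) (psi Γ v S g).left =
      (psi Γ v S a).left⁻¹ * (psi Γ v S g).left * (psi Γ v S a).left := by
  have h1 : psi Γ v S a * psi Γ v S g = psi Γ v S g * psi Γ v S a := by
    rw [← map_mul, hc.eq, map_mul]
  have h2 := congrArg SemidirectProduct.left h1
  have h3 : (psi Γ v S g).right = 1 := by
    have := psi_right hv g
    rw [h] at this
    ext; simpa using this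
  rw [SemidirectProduct.mul_left, SemidirectProduct.mul_left, h3, actF_apply] at h2
  simp only [map_one, MulAut.one_apply] at h2
  rw [mul_assoc, ← h2]; group

theorem fix_iff (v : V) (S : Set V) (h p : std Γ S) :
    h • (p : XX Γ v S) = p ↔
      (p : RAAG Γ)⁻¹ * h * p ∈ std Γ (S ∩ Γ.neighborSet v) := by
  change ((h * p : std Γ S) : XX Γ v S) = p ↔ _
  rw [eq_comm, QuotientGroup.eq]
  simp only [KK, Subgroup.mem_subgroupOf]
  push_cast
  rw [mul_assoc]

/-- main structural lemma, combining everything -/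
theorem struct_letters {v : V} {S : Set V} (hv : v ∉ S) {g : RAAG Γ} (h : rho Γ S g = 1) :
    ∃ (q : FreeGroup (XX Γ v S)) (n : ℕ), n ≠ 0 ∧
      ∀ x ∈ letters (q * (psi Γ v S g).left * q⁻¹), ∀ p : std Γ S, (p : XX Γ v S) = x →
        ∀ a, Commute a g →
        (p : RAAG Γ)⁻¹ * (rho Γ S a) ^ n * p ∈ std Γ (S ∩ Γ.neighborSet v) := by
  obtain ⟨q, hq⟩ := exists_min_conj (psi Γ v S g).left
  obtain ⟨n, hn, hfix⟩ := fixed_letters (H := std Γ S) hq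
  refine ⟨q, n, hn, ?_⟩
  intro x hx p hp a ha
  have h1 := hfix (psi Γ v S a).right ⟨FreeGroup.map (fun x => (psi Γ v S a).right • x) q *
      (psi Γ v S a).left⁻¹ * q⁻¹, by
    rw [map_mul, map_mul, psi_comm hv h ha, map_inv]; group⟩ x hx
  rw [← hp, fix_iff] at h1
  push_cast at h1
  rwa [psi_right hv] at h1

theorem struct_one {v : V} {S : Set V} (hv : v ∉ S) {g : RAAG Γ} (h : rho Γ S g = 1)
    (hg : g ∈ std Γ (insert v S)) (h1 : g ≠ 1) :
    ∃ p ∈ std Γ S, ∃ n : ℕ, n ≠ 0 ∧ ∀ a, Commute a g →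
        p⁻¹ * (rho Γ S a) ^ n * p ∈ std Γ (S ∩ Γ.neighborSet v) := by
  obtain ⟨q, n, hn, H⟩ := struct_letters hv h
  have h2 : q * (psi Γ v S g).left * q⁻¹ ≠ 1 := by
    rw [Ne, conj_eq_one_iff]; exact psi_left_ne hv h hg h1
  obtain ⟨x, hx⟩ := letters_nonempty h2
  obtain ⟨p, rfl⟩ := QuotientGroup.mk_surjective x
  exact ⟨p, p.2, n, hn, H _ hx p rfl⟩

theorem struct_two {v : V} {S : Set V} (hv : v ∉ S) {a b : RAAG Γ} (ha : rho Γ S a = 1)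
    (hb : rho Γ S b = 1) (ha' : a ∈ std Γ (insert v S)) (hb' : b ∈ std Γ (insert v S))
    (h1 : ¬ Commute a b) :
    ∃ p ∈ std Γ S, ∃ q ∈ std Γ S, p⁻¹ * q ∉ std Γ (S ∩ Γ.neighborSet v) ∧
      ∃ n : ℕ, n ≠ 0 ∧ ∀ c, Commute c a → Commute c b →
        p⁻¹ * (rho Γ S c) ^ n * p ∈ std Γ (S ∩ Γ.neighborSet v) ∧
        q⁻¹ * (rho Γ S c) ^ n * q ∈ std Γ (S ∩ Γ.neighborSet v) := by
  have hg : rho Γ S (a * b * a⁻¹ * b⁻¹) = 1 := by simp [ha, hb]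
  have hg' : a * b * a⁻¹ * b⁻¹ ∈ std Γ (insert v S) :=
    mul_mem (mul_mem (mul_mem ha' hb') (inv_mem ha')) (inv_mem hb')
  have hg1 : a * b * a⁻¹ * b⁻¹ ≠ 1 := by
    intro h
    rw [mul_inv_eq_one, mul_inv_eq_iff_eq_mul] at h
    exact h1 h
  obtain ⟨r, n, hn, H⟩ := struct_letters hv hg
  have h2 : r * (psi Γ v S (a * b * a⁻¹ * b⁻¹)).left * r⁻¹ ≠ 1 := by
    rw [Ne, conj_eq_one_iff]; exact psi_left_ne hv hg hg' hg1
  have h3 : (psi Γ v S (a * b * a⁻¹ * b⁻¹)).left =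
      (psi Γ v S a).left * (psi Γ v S b).left * (psi Γ v S a).left⁻¹ * (psi Γ v S b).left⁻¹ := by
    simp only [map_mul, map_inv]
    rw [psi_ker hv ha, psi_ker hv hb, ← map_inv, ← map_inv, ← map_mul, ← map_mul, ← map_mul]
    simp
  obtain ⟨x, hx, y, hy, hxy⟩ := two_letters (g := r) (by rw [h3]) h2
  obtain ⟨p, rfl⟩ := QuotientGroup.mk_surjective x
  obtain ⟨q, rfl⟩ := QuotientGroup.mk_surjective y
  refine ⟨p, p.2, q, q.2, ?_, n, hn, fun c hca hcb => ?_⟩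
  · intro h
    apply hxy
    rw [QuotientGroup.eq]
    simpa [KK, Subgroup.mem_subgroupOf] using h
  · have hc : Commute c (a * b * a⁻¹ * b⁻¹) :=
      ((hca.mul_right hcb).mul_right hca.inv_right).mul_right hcb.inv_right
    exact ⟨H _ hx p rfl c hc, H _ hy q rfl c hc⟩

end raag

end RaagAux

/-! ### Part 3: ranks of free abelian groups mapping to right-angled Artin groups -/

namespace RaagAux

set_option linter.unusedSectionVars false

section rank

variable {V : Type} {Γ : SimpleGraph V}
variable {E : Type} [AddCommGroup E] [Module.Free ℤ E] [Module.Finite ℤ E]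

/-- the kernel as a submodule -/
def kerSub {G : Type*} [Group G] (φ : Multiplicative E →* G) : Submodule ℤ E :=
  AddSubgroup.toIntSubmodule
    { carrier := {e | φ (Multiplicative.ofAdd e) = 1}
      zero_mem' := by simp
      add_mem' := by
        intro a b ha hb
        simp only [Set.mem_ofPred_eq] at *
        rw [ofAdd_add, map_mul, ha, hb, one_mul]
      neg_mem' := by
        intro a ha
        simp only [Set.mem_ofPred_eq] at *
        rw [ofAdd_neg, map_inv, ha, inv_one] }

theorem mem_kerSub {G : Type*} [Group G] (φ : Multiplicative E →* G) (e : E) :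
    e ∈ kerSub φ ↔ φ (Multiplicative.ofAdd e) = 1 := Iff.rfl

theorem rank_step {K K' : Submodule ℤ E} (f : K' →ₗ[ℤ] ℤ) (hf : ∀ x, f x = 0 → (x : E) ∈ K) :
    Module.finrank ℤ K' ≤ Module.finrank ℤ K + 1 := by
  have h1 := Submodule.finrank_quotient_add_finrank (LinearMap.ker f)
  rw [f.quotKerEquivRange.finrank_eq] at h1
  have h2 : Module.finrank ℤ (LinearMap.range f) ≤ 1 := by
    have := Submodule.finrank_le (LinearMap.range f)
    simpa using this
  have h3 : Module.finrank ℤ (LinearMap.ker f) ≤ Module.finrank ℤ K := by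
    let g : LinearMap.ker f →ₗ[ℤ] K :=
      (K'.subtype.comp (LinearMap.ker f).subtype).codRestrict K (fun x => hf x.1 x.2)
    apply LinearMap.finrank_le_finrank_of_injective (f := g)
    intro x y hxy
    have := congrArg (fun t : K => (t : E)) hxy
    exact Subtype.ext (Subtype.ext this)
  omega

theorem rank_step_free {K K' : Submodule ℤ E} {F : Type} [Group F] [IsFreeGroup F]
    (η : Multiplicative K' →* F) (hη : ∀ x : K', η (Multiplicative.ofAdd x) = 1 → (x : E) ∈ K) :
    Module.finrank ℤ K' ≤ Module.finrank ℤ K + 1 := by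
  have hc : ∀ a b : η.range, a * b = b * a := by
    rintro ⟨_, a, rfl⟩ ⟨_, b, rfl⟩
    ext
    simp only [Subgroup.coe_mul, ← map_mul, mul_comm]
  obtain ⟨c, hc⟩ := fg_comm_embed hc
  let f : K' →+ ℤ := (MonoidHom.toAdditive (c.comp η.rangeRestrict) : Additive (Multiplicative K') →+ Additive (Multiplicative ℤ))
  apply rank_step f.toIntLinearMap
  intro x hx
  apply hη
  have h1 : c (η.rangeRestrict (Multiplicative.ofAdd x)) = 1 := hx
  rw [← map_one c] at h1
  exact congrArg Subtype.val (hc h1)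

theorem ker_step {v : V} {S : Set V} (hv : v ∉ S) (φ : Multiplicative E →* RAAG Γ)
    (hφ : ∀ e, φ e ∈ std Γ (insert v S)) :
    Module.finrank ℤ (kerSub ((rho Γ S).comp φ)) ≤ Module.finrank ℤ (kerSub φ) + 1 := by
  let η : Multiplicative (kerSub ((rho Γ S).comp φ)) →* FreeGroup (XX Γ v S) :=
    { toFun := fun x => (psi Γ v S (φ (Multiplicative.ofAdd (x.toAdd : E)))).left
      map_one' := by
        change (psi Γ v S (φ 1)).left = 1
        simp
      map_mul' := by
        intro x y
        change (psi Γ v S (φ (Multiplicative.ofAdd (x.toAdd : E) *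
          Multiplicative.ofAdd (y.toAdd : E)))).left = _
        have hx : rho Γ S (φ (Multiplicative.ofAdd (x.toAdd : E))) = 1 := x.toAdd.2
        have hy : rho Γ S (φ (Multiplicative.ofAdd (y.toAdd : E))) = 1 := y.toAdd.2
        rw [map_mul, map_mul, psi_ker hv hx, psi_ker hv hy, ← map_mul]
        simp }
  apply rank_step_free η
  intro x hx
  by_contra h1
  exact psi_left_ne hv x.2 (hφ _) h1 hx

/-- the homomorphism `e ↦ p⁻¹ φ(e)^n p` -/
def conjPow {G : Type*} [Group G] (φ : Multiplicative E →* G) (p : G) (n : ℕ) :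
    Multiplicative E →* G :=
  ((MulAut.conj p⁻¹).toMonoidHom.comp φ).comp (powMonoidHom n)

theorem conjPow_apply {G : Type*} [Group G] (φ : Multiplicative E →* G) (p : G) (n : ℕ)
    (e : Multiplicative E) : conjPow φ p n e = p⁻¹ * φ e ^ n * p := by
  simp [conjPow]

theorem conjPow_rank {G : Type*} [Group G] (φ : Multiplicative E →* G) (p : G) {n : ℕ}
    (hn : n ≠ 0) :
    Module.finrank ℤ (kerSub (conjPow φ p n)) ≤ Module.finrank ℤ (kerSub φ) := by
  let g : kerSub (conjPow φ p n) →ₗ[ℤ] kerSub φ :=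
    (((n : ℤ) • LinearMap.id).comp (kerSub (conjPow φ p n)).subtype).codRestrict _ (by
      intro x
      have hx : conjPow φ p n (Multiplicative.ofAdd (x : E)) = 1 := x.2
      rw [conjPow_apply] at hx
      rw [mem_kerSub]
      have : φ (Multiplicative.ofAdd (x : E)) ^ n = 1 := by
        have h2 := congrArg (fun t => p * t * p⁻¹) hx
        simpa [mul_assoc] using h2
      rw [← this, ← map_pow, ← ofAdd_nsmul]
      simp)
  apply LinearMap.finrank_le_finrank_of_injective (f := g)
  intro x y hxy
  have := congrArg (fun t : kerSub φ => (t : E)) hxy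
  have h2 : (n : ℤ) • (x : E) = (n : ℤ) • (y : E) := this
  have h3 : (n : ℤ) ≠ 0 := by exact_mod_cast hn
  exact Subtype.ext (smul_right_injective E h3 h2)

theorem rank_mono {K K' : Submodule ℤ E} (h : K ≤ K') :
    Module.finrank ℤ K ≤ Module.finrank ℤ K' := Submodule.finrank_mono h

open Classical in
theorem rank_thm (S : Finset V) : ∀ (φ : Multiplicative E →* RAAG Γ)
    (_ : ∀ e, φ e ∈ std Γ (S : Set V)),
    ∃ T ⊆ S, Γ.IsClique (T : Set V) ∧
      Module.finrank ℤ E ≤ Module.finrank ℤ (kerSub φ) + T.card := by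
  induction S using Finset.strongInduction with
  | H S IH =>
    intro φ hφ
    rcases S.eq_empty_or_nonempty with rfl | ⟨v, hv⟩
    · refine ⟨∅, subset_rfl, by simp, ?_⟩
      have : kerSub φ = ⊤ := by
        rw [eq_top_iff]
        intro e _
        have := hφ (Multiplicative.ofAdd e)
        rw [Finset.coe_empty, std_empty, Subgroup.mem_bot] at this
        exact this
      rw [this, finrank_top]
      omega
    · have hv' : v ∉ ((S.erase v : Finset V) : Set V) := by simp
      have hins : (S : Set V) = insert v ((S.erase v : Finset V) : Set V) := by
        rw [← Finset.coe_insert, Finset.insert_erase hv]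
      have hss : S.erase v ⊂ S := Finset.erase_ssubset hv
      by_cases hk : kerSub ((rho Γ ((S.erase v : Finset V) : Set V)).comp φ) ≤ kerSub φ
      · obtain ⟨T, hT, hT1, hT2⟩ := IH _ hss ((rho Γ ((S.erase v : Finset V) : Set V)).comp φ)
          (fun e => rho_mem _ _)
        exact ⟨T, hT.trans hss.subset, hT1, hT2.trans (by have := rank_mono hk; omega)⟩
      · rw [SetLike.not_le_iff_exists] at hk
        obtain ⟨e0, he0, he1⟩ := hk
        rw [hins] at hφ
        obtain ⟨p, hp, n, hn, H⟩ := struct_one hv' he0 (hφ _) he1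
        let L := (S.erase v).filter (fun u => Γ.Adj v u)
        have hL : (L : Set V) = ((S.erase v : Finset V) : Set V) ∩ Γ.neighborSet v := by
          ext u; simp [L, and_comm]
        have hLS : L ⊆ S.erase v := Finset.filter_subset _ _
        obtain ⟨T, hT, hT1, hT2⟩ := IH L (lt_of_le_of_lt hLS hss)
          (conjPow ((rho Γ ((S.erase v : Finset V) : Set V)).comp φ) p n) (by
            intro e
            rw [conjPow_apply, hL]
            apply H
            rw [Commute, SemiconjBy, ← map_mul, mul_comm, map_mul])
        have hvT : v ∉ T := fun h => hv' (hLS (hT h))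
        refine ⟨insert v T, ?_, ?_, ?_⟩
        · intro x hx
          rcases Finset.mem_insert.mp hx with rfl | hx
          · exact hv
          · exact hss.subset (hLS (hT hx))
        · rw [Finset.coe_insert, SimpleGraph.isClique_insert]
          refine ⟨hT1, fun b hb _ => ?_⟩
          exact (Finset.mem_filter.mp (hT hb)).2
        · rw [Finset.card_insert_of_notMem hvT]
          have h1 := ker_step hv' φ hφ
          have h2 := conjPow_rank ((rho Γ ((S.erase v : Finset V) : Set V)).comp φ) p hn
          omega

end rank

end RaagAux

/-! ### Part 4: images of products of a free group and a free abelian group -/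

namespace RaagAux

section prodthm

variable {V : Type} {Γ : SimpleGraph V}
variable {E : Type} [AddCommGroup E] [Module.Free ℤ E] [Module.Finite ℤ E]

theorem psi_left_mul {v : V} {S : Set V} (hv : v ∉ S) {a b : RAAG Γ} (ha : rho Γ S a = 1)
    (hb : rho Γ S b = 1) :
    (psi Γ v S (a * b)).left = (psi Γ v S a).left * (psi Γ v S b).left := by
  rw [map_mul, psi_ker hv ha, psi_ker hv hb, ← map_mul]
  simp

theorem ker_comm_trans {v : V} {S : Set V} (hv : v ∉ S) {a b z : RAAG Γ} (ha : rho Γ S a = 1)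
    (hb : rho Γ S b = 1) (hz : rho Γ S z = 1) (ha' : a ∈ std Γ (insert v S))
    (hb' : b ∈ std Γ (insert v S)) (hz' : z ∈ std Γ (insert v S)) (hz1 : z ≠ 1)
    (haz : Commute a z) (hbz : Commute b z) : Commute a b := by
  have key : ∀ {x y : RAAG Γ}, rho Γ S x = 1 → rho Γ S y = 1 → Commute x y →
      Commute (psi Γ v S x).left (psi Γ v S y).left := by
    intro x y hx hy h
    rw [Commute, SemiconjBy, ← psi_left_mul hv hx hy, ← psi_left_mul hv hy hx, h.eq]
  have h1 := fg_comm_trans (psi_left_ne hv hz hz' hz1) (key ha hz haz) (key hb hz hbz)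
  have h2 : psi Γ v S (a * b) = psi Γ v S (b * a) := by
    rw [psi_ker hv (g := a * b) (by simp [ha, hb]), psi_ker hv (g := b * a) (by simp [ha, hb]),
      psi_left_mul hv ha hb, psi_left_mul hv hb ha, h1.eq]
  have h3 := congrArg (theta Γ v S) h2
  rwa [theta_psi, theta_psi, rho_eq (mul_mem ha' hb'), rho_eq (mul_mem hb' ha')] at h3

open Classical in
theorem kill_vertices {L : Finset V} {d : RAAG Γ} (hL : rho Γ (L : Set V) d = 1) (S : Finset V) :
    L ⊆ S → rho Γ (S : Set V) d ≠ 1 → ∃ u ∈ S, u ∉ L ∧ ∃ S' ⊆ S, L ⊆ S' ∧ u ∉ S' ∧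
      rho Γ (S' : Set V) d = 1 ∧ rho Γ (insert u (S' : Set V)) d ≠ 1 := by
  induction S using Finset.strongInduction with
  | H S IH =>
    intro hLS hS
    have hne : L ≠ S := by rintro rfl; exact hS hL
    obtain ⟨u, huS, huL⟩ := Finset.exists_of_ssubset (lt_of_le_of_ne hLS hne)
    have hss : S.erase u ⊂ S := Finset.erase_ssubset huS
    have hLe : L ⊆ S.erase u := Finset.subset_erase.mpr ⟨hLS, huL⟩
    by_cases h : rho Γ ((S.erase u : Finset V) : Set V) d = 1
    · refine ⟨u, huS, huL, S.erase u, hss.subset, hLe, by simp, h, ?_⟩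
      rwa [← Finset.coe_insert, Finset.insert_erase huS]
    · obtain ⟨w, hw, hwL, S', hS', h1⟩ := IH _ hss hLe h
      exact ⟨w, hss.subset hw, hwL, S', hS'.trans hss.subset, h1⟩

open Classical in
/-- the noncentral case -/
theorem pr_caseB (S : Finset V) {v : V} (y : Multiplicative E →* RAAG Γ)
    {p q : RAAG Γ} (hp : p ∈ std Γ (S : Set V)) (hq : q ∈ std Γ (S : Set V))
    (hpq : p⁻¹ * q ∉ std Γ ((S : Set V) ∩ Γ.neighborSet v)) {n : ℕ} (hn : n ≠ 0)
    (H : ∀ e, p⁻¹ * (y e) ^ n * p ∈ std Γ ((S : Set V) ∩ Γ.neighborSet v) ∧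
      q⁻¹ * (y e) ^ n * q ∈ std Γ ((S : Set V) ∩ Γ.neighborSet v)) :
    ∃ u ∈ S, ¬ Γ.Adj u v ∧ ∃ T ⊆ S, Γ.IsClique (T : Set V) ∧
      (∀ t ∈ T, Γ.Adj t u ∧ Γ.Adj t v) ∧
      Module.finrank ℤ E ≤ Module.finrank ℤ (kerSub y) + T.card := by
  let L := S.filter (fun u => Γ.Adj v u)
  have hL : (S : Set V) ∩ Γ.neighborSet v = (L : Set V) := by
    ext u; simp [L]
  have hLS : L ⊆ S := Finset.filter_subset _ _
  rw [hL] at hpq H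
  obtain ⟨g, hg⟩ : ∃ g, g = p⁻¹ * q := ⟨_, rfl⟩
  rw [← hg] at hpq
  let d := g * (rho Γ (L : Set V) g)⁻¹
  have hgS : g ∈ std Γ (S : Set V) := hg ▸ mul_mem (inv_mem hp) hq
  have hLS' : (L : Set V) ⊆ (S : Set V) := by exact_mod_cast hLS
  have hd : d ∈ std Γ (S : Set V) :=
    mul_mem hgS (inv_mem (std_mono hLS' (rho_mem _ _)))
  have hd1 : d ≠ 1 := by
    intro h
    apply hpq
    rw [mul_inv_eq_one] at h
    rw [h]; exact rho_mem _ _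
  have hdL : rho Γ (L : Set V) d = 1 := by
    simp only [d, map_mul, map_inv, rho_rho, Set.inter_self, mul_inv_cancel]
  obtain ⟨u, huS, huL, S', hS', hLS'', huS', h1, h2⟩ :=
    kill_vertices hdL S hLS (by rwa [rho_eq hd])
  have hsub : (L : Set V) ⊆ (S' : Set V) := by exact_mod_cast hLS''
  have hcomm : ∀ e, Commute (conjPow y p n e) d := by
    intro e
    have hY : conjPow y p n e ∈ std Γ (L : Set V) := by rw [conjPow_apply]; exact (H e).1
    have hW := (H e).2
    have e1 : conjPow y p n e * g = g * (q⁻¹ * (y e) ^ n * q) := by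
      rw [conjPow_apply, hg]; group
    have e2 := congrArg (rho Γ (L : Set V)) e1
    rw [map_mul, map_mul, rho_eq hY, rho_eq hW] at e2
    have e3 : (q⁻¹ * (y e) ^ n * q) * (rho Γ (L : Set V) g)⁻¹ =
        (rho Γ (L : Set V) g)⁻¹ * conjPow y p n e := by
      rw [mul_inv_eq_iff_eq_mul, mul_assoc _ (conjPow y p n e), e2]; group
    change conjPow y p n e * (g * (rho Γ (L : Set V) g)⁻¹) = (g * (rho Γ (L : Set V) g)⁻¹) * _
    rw [← mul_assoc, e1, mul_assoc, e3, mul_assoc]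
  obtain ⟨r, hr, n', hn', H'⟩ := struct_one (v := u) (S := (S' : Set V)) (by exact_mod_cast huS')
    (g := rho Γ (insert u (S' : Set V)) d)
    (by rw [rho_rho, Set.inter_eq_left.mpr (Set.subset_insert _ _), h1]) (rho_mem _ _) h2
  obtain ⟨T, hT, hT1, hT2⟩ := rank_thm (E := E) (L.filter (fun w => Γ.Adj u w))
    (conjPow (conjPow y p n) (rho Γ (L : Set V) r) n') (by
      intro e
      have hY : conjPow y p n e ∈ std Γ (L : Set V) := by rw [conjPow_apply]; exact (H e).1
      have h3 := H' (conjPow y p n e) (by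
        have := (hcomm e).map (rho Γ (insert u (S' : Set V)))
        rwa [rho_eq (std_mono (hsub.trans (Set.subset_insert _ _)) hY)] at this)
      rw [rho_eq (std_mono hsub hY)] at h3
      have h4 := rho_mem_inter (S := (L : Set V)) h3
      simp only [map_mul, map_inv, map_pow, rho_eq hY] at h4
      rw [conjPow_apply]
      refine std_mono ?_ h4
      rintro w ⟨hw1, _, hw2⟩
      simp only [Finset.coe_filter]
      exact ⟨hw1, hw2⟩)
  refine ⟨u, huS, ?_, T, ?_, hT1, ?_, ?_⟩
  · intro h
    exact huL (Finset.mem_filter.mpr ⟨huS, h.symm⟩)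
  · exact hT.trans ((Finset.filter_subset _ _).trans hLS)
  · intro t ht
    have h3 := Finset.mem_filter.mp (hT ht)
    have h4 := Finset.mem_filter.mp h3.1
    exact ⟨h3.2.symm, h4.2.symm⟩
  · have h3 := conjPow_rank (conjPow y p n) (rho Γ (L : Set V) r) hn'
    have h4 := conjPow_rank y p hn
    omega

open Classical in
theorem pr_thm (S : Finset V) : ∀ (F : Type) [Group F] [IsFreeGroup F] (a b : F)
    (_ : ¬ Commute a b) (φ : F × Multiplicative E →* RAAG Γ)
    (_ : ∀ x, φ x ∈ std Γ (S : Set V)) (_ : ∀ f z, φ (f, z) = 1 → f = 1),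
    ∃ u ∈ S, ∃ v ∈ S, u ≠ v ∧ ¬ Γ.Adj u v ∧ ∃ T ⊆ S, Γ.IsClique (T : Set V) ∧
      (∀ t ∈ T, Γ.Adj t u ∧ Γ.Adj t v) ∧
      Module.finrank ℤ E ≤
        Module.finrank ℤ (kerSub (φ.comp (MonoidHom.inr F (Multiplicative E)))) + T.card := by
  induction S using Finset.strongInduction with
  | H S IH =>
    intro F _ _ a b hab φ hφ hk
    have hcentral : ∀ (x : F × Multiplicative E) (z : Multiplicative E),
        Commute x ((1 : F), z) := by
      rintro ⟨f, e⟩ z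
      refine Prod.ext ?_ (mul_comm e z)
      simp
    rcases S.eq_empty_or_nonempty with rfl | ⟨v, hv⟩
    · exfalso
      have := hφ (a, 1)
      rw [Finset.coe_empty, std_empty, Subgroup.mem_bot] at this
      have := hk _ _ this
      exact hab (this ▸ Commute.one_left _)
    obtain ⟨S0, hS0⟩ : ∃ S0, S0 = S.erase v := ⟨_, rfl⟩
    have hvf : v ∉ S0 := by simp [hS0]
    have hv' : v ∉ (S0 : Set V) := by exact_mod_cast hvf
    have hins : (S : Set V) = insert v (S0 : Set V) := by
      rw [← Finset.coe_insert, hS0, Finset.insert_erase hv]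
    have hss : S0 ⊂ S := hS0 ▸ Finset.erase_ssubset hv
    rw [hins] at hφ
    let φ' : F × Multiplicative E →* RAAG Γ := (rho Γ (S0 : Set V)).comp φ
    let M : Subgroup F := (φ'.comp (MonoidHom.inl F (Multiplicative E))).ker
    by_cases hM : ∃ f ∈ M, f ≠ 1
    · obtain ⟨f, hf, hf1⟩ := hM
      obtain ⟨x, hx, y, hy, hxy⟩ := fg_normal_nonabelian M hf hf1 hab
      have hx' : rho Γ (S0 : Set V) (φ (x, 1)) = 1 := hx
      have hy' : rho Γ (S0 : Set V) (φ (y, 1)) = 1 := hy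
      have hncomm : ¬ Commute (φ (x, 1)) (φ (y, 1)) := by
        intro h
        apply hxy
        have h1 : φ (x * y * x⁻¹ * y⁻¹, 1) = 1 := by
          have : ((x * y * x⁻¹ * y⁻¹, 1) : F × Multiplicative E) =
            (x, 1) * (y, 1) * (x, 1)⁻¹ * (y, 1)⁻¹ := by ext <;> simp
          rw [this, map_mul, map_mul, map_mul, map_inv, map_inv, h.eq]
          group
        have h2 := hk _ _ h1
        rw [mul_inv_eq_one, mul_inv_eq_iff_eq_mul] at h2
        exact h2
      obtain ⟨p, hp, q, hq, hpq, n, hn, H⟩ :=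
        struct_two hv' hx' hy' (hφ _) (hφ _) hncomm
      obtain ⟨u, hu, huv, T, hT, hT1, hT2, hT3⟩ := pr_caseB (E := E) S0
        (φ'.comp (MonoidHom.inr F (Multiplicative E))) hp hq hpq hn (fun e =>
          H (φ (1, e)) ((hcentral _ _).symm.map φ) ((hcentral _ _).symm.map φ))
      refine ⟨u, hss.subset hu, v, hv, ?_, huv, T, hT.trans hss.subset, hT1, hT2, ?_⟩
      · rintro rfl; exact hvf hu
      · have : kerSub (φ'.comp (MonoidHom.inr F (Multiplicative E))) ≤
            kerSub (φ.comp (MonoidHom.inr F (Multiplicative E))) := by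
          intro z hz
          by_contra hz1
          exact hncomm (ker_comm_trans hv' hx' hy' hz (hφ _) (hφ _) (hφ _) hz1
            ((hcentral _ _).map φ) ((hcentral _ _).map φ))
        have := rank_mono this
        omega
    · push Not at hM
      have hk' : ∀ f z, φ' (f, z) = 1 → f = 1 := by
        intro f z hfz
        by_contra hf1
        apply hab
        refine fg_abel_of_center f hf1 (fun g => ?_) a b
        have h1 : g * f * g⁻¹ * f⁻¹ ∈ M := by
          change φ' (g * f * g⁻¹ * f⁻¹, 1) = 1
          have : ((g * f * g⁻¹ * f⁻¹, 1) : F × Multiplicative E) =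
            (g, 1) * (f, z) * (g, 1)⁻¹ * (f, z)⁻¹ := by ext <;> simp
          rw [this, map_mul, map_mul, map_mul, map_inv, map_inv, hfz]
          simp
        have h2 := hM _ h1
        rw [mul_inv_eq_one, mul_inv_eq_iff_eq_mul] at h2
        exact h2
      by_cases hker : kerSub (φ'.comp (MonoidHom.inr F (Multiplicative E))) ≤
            kerSub (φ.comp (MonoidHom.inr F (Multiplicative E)))
      · obtain ⟨u, hu, w, hw, huw, huw', T, hT, hT1, hT2, hT3⟩ := IH S0 hss F a b hab φ'
          (fun x => rho_mem _ _) hk'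
        have := rank_mono hker
        exact ⟨u, hss.subset hu, w, hss.subset hw, huw, huw', T, hT.trans hss.subset, hT1, hT2,
          by omega⟩
      · rw [SetLike.not_le_iff_exists] at hker
        obtain ⟨z0, hz0, hz1⟩ := hker
        obtain ⟨p, hp, n, hn, H⟩ := struct_one hv' (g := φ (1, Multiplicative.ofAdd z0)) hz0
          (hφ _) hz1
        have H2 : ∀ x, p⁻¹ * (φ' x) ^ n * p ∈ std Γ ((S0 : Set V) ∩ Γ.neighborSet v) :=
          fun x => H (φ x) ((hcentral _ _).map φ)
        let L := S0.filter (fun u => Γ.Adj v u)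
        have hL : (S0 : Set V) ∩ Γ.neighborSet v = (L : Set V) := by
          ext u; simp [L]
        have hLS : L ⊆ S0 := Finset.filter_subset _ _
        rw [hL] at H2
        let F1 : Subgroup F := Subgroup.closure (Set.range (fun f : F => f ^ n))
        have hF1 : ∀ f ∈ F1, p⁻¹ * φ' (f, 1) * p ∈ std Γ (L : Set V) := by
          intro f hf
          induction hf using Subgroup.closure_induction with
          | mem x hx =>
            obtain ⟨f, rfl⟩ := hx
            have := H2 (f, 1)
            rw [← map_pow] at this
            simpa using this
          | one =>
            have : φ' (1, 1) = 1 := map_one φ'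
            rw [this]; simp
          | mul x y _ _ hx hy =>
            have h1 : φ' (x * y, 1) = φ' (x, 1) * φ' (y, 1) := by
              rw [← map_mul]; simp
            have h2 := mul_mem hx hy
            rw [h1]
            convert h2 using 1
            group
          | inv x _ hx =>
            have h1 : φ' (x⁻¹, 1) = (φ' (x, 1))⁻¹ := by
              rw [← map_inv]; simp
            have h2 := inv_mem hx
            rw [h1]
            convert h2 using 1
            group
        let j : F1 × Multiplicative E →* F × Multiplicative E :=
          MonoidHom.prodMap F1.subtype (powMonoidHom n)
        let φ2 : F1 × Multiplicative E →* RAAG Γ :=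
          ((MulAut.conj p⁻¹).toMonoidHom.comp φ').comp j
        have hφ2 : ∀ f z, φ2 (f, z) = p⁻¹ * φ' ((f : F), z ^ n) * p := by
          intro f z
          simp [φ2, j]
        obtain ⟨u, hu, w, hw, huw, huw', T, hT, hT1, hT2, hT3⟩ := IH L (lt_of_le_of_lt hLS hss) F1
          ⟨a ^ n, Subgroup.subset_closure ⟨a, rfl⟩⟩ ⟨b ^ n, Subgroup.subset_closure ⟨b, rfl⟩⟩
          (fun h => hab (fg_pow_comm hn (h.map F1.subtype))) φ2 (by
            rintro ⟨f, z⟩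
            have h1 := hF1 f f.2
            have h2 := H2 (1, z)
            have h3 := mul_mem h1 h2
            rw [hφ2]
            have h4 : ((f : F), z ^ n) = (((f : F), 1) : F × Multiplicative E) * (1, z) ^ n := by
              ext <;> simp
            rw [h4, map_mul, map_pow]
            convert h3 using 1
            group) (by
            intro f z h
            rw [hφ2] at h
            have h2 : φ' ((f : F), z ^ n) = 1 := by
              have h2 := congrArg (fun t => p * t * p⁻¹) h
              simpa [mul_assoc] using h2
            exact Subtype.ext (hk' _ _ h2))
        have e1 : φ2.comp (MonoidHom.inr F1 (Multiplicative E)) =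
            conjPow (φ'.comp (MonoidHom.inr F (Multiplicative E))) p n := by
          apply MonoidHom.ext
          intro z
          rw [conjPow_apply, ← map_pow]
          exact hφ2 1 z
        rw [e1] at hT3
        have h1 := conjPow_rank (φ'.comp (MonoidHom.inr F (Multiplicative E))) p hn
        have h2 := ker_step hv' (φ.comp (MonoidHom.inr F (Multiplicative E))) (fun e => hφ _)
        have h3 : (rho Γ (S0 : Set V)).comp (φ.comp (MonoidHom.inr F (Multiplicative E))) =
          φ'.comp (MonoidHom.inr F (Multiplicative E)) := rfl
        rw [h3] at h2
        have hvT : v ∉ T := fun h => hvf (hLS (hT h))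
        have hLv : ∀ t ∈ L, Γ.Adj v t := fun t ht => (Finset.mem_filter.mp ht).2
        refine ⟨u, hss.subset (hLS hu), w, hss.subset (hLS hw), huw, huw', insert v T, ?_, ?_, ?_,
          ?_⟩
        · intro x hx
          rcases Finset.mem_insert.mp hx with rfl | hx
          · exact hv
          · exact hss.subset (hLS (hT hx))
        · rw [Finset.coe_insert, SimpleGraph.isClique_insert]
          exact ⟨hT1, fun b hb _ => hLv b (hT hb)⟩
        · intro t ht
          rcases Finset.mem_insert.mp ht with rfl | ht
          · exact ⟨hLv _ hu, hLv _ hw⟩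
          · exact hT2 t ht
        · rw [Finset.card_insert_of_notMem hvT]
          omega

end prodthm

end RaagAux

/-! ### Part 5: paths and cycles -/

namespace RaagAux

section final

theorem cycle_adj {n : ℕ} (hn : 3 ≤ n) (u v : Fin n) : (cycleGraph n).Adj u v ↔
    (u : ℕ) + 1 = v ∨ (v : ℕ) + 1 = u ∨ ((u : ℕ) = 0 ∧ (v : ℕ) + 1 = n) ∨
      ((v : ℕ) = 0 ∧ (u : ℕ) + 1 = n) := by
  have key : ∀ a b : Fin n, (a - b).val = 1 ↔
      ((b : ℕ) + 1 = a ∨ ((a : ℕ) = 0 ∧ (b : ℕ) + 1 = n)) := by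
    intro a b
    have ha := a.2
    have hb := b.2
    rw [Fin.val_sub]
    rcases Nat.lt_or_ge (n - (b : ℕ) + a) n with h | h
    · rw [Nat.mod_eq_of_lt h]; omega
    · rw [Nat.mod_eq_sub_mod h, Nat.mod_eq_of_lt (by omega)]; omega
  rw [cycleGraph_adj', key, key]
  tauto

/-- successor in the cycle -/
def succC {n : ℕ} (u : Fin n) : Fin n := ⟨((u : ℕ) + 1) % n, Nat.mod_lt _ (by have := u.2; omega)⟩

theorem succC_val {n : ℕ} (u : Fin n) : ((succC u : Fin n) : ℕ) = (u : ℕ) + 1 ∨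
    ((u : ℕ) + 1 = n ∧ ((succC u : Fin n) : ℕ) = 0) := by
  have hu := u.2
  rcases Nat.lt_or_ge ((u : ℕ) + 1) n with h | h
  · left; exact Nat.mod_eq_of_lt h
  · right
    have h1 : (u : ℕ) + 1 = n := by omega
    refine ⟨h1, ?_⟩
    simp [succC, h1]

theorem succC_inj {n : ℕ} : Function.Injective (succC (n := n)) := by
  intro u v h
  have h1 := succC_val u
  have h2 := succC_val v
  rw [h] at h1
  ext
  omega

theorem adj_succC {n : ℕ} (hn : 3 ≤ n) (u : Fin n) : (cycleGraph n).Adj u (succC u) := by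
  rw [cycle_adj hn]
  have := succC_val u
  omega

theorem adj_iff_succC {n : ℕ} (hn : 3 ≤ n) {u v : Fin n} (h : (cycleGraph n).Adj u v) :
    v = succC u ∨ u = succC v := by
  rw [cycle_adj hn] at h
  have h1 := succC_val u
  have h2 := succC_val v
  have hu := u.2
  have hv := v.2
  rw [Fin.ext_iff, Fin.ext_iff]
  omega

theorem count_odd {n : ℕ} (hn : 3 ≤ n) (T : Finset (Fin n))
    (hT : (cycleGraph n)ᶜ.IsClique (T : Set (Fin n))) : 2 * T.card ≤ n := by
  have hd : Disjoint T (T.image succC) := by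
    rw [Finset.disjoint_left]
    intro t ht ht'
    obtain ⟨s, hs, rfl⟩ := Finset.mem_image.mp ht'
    have h1 := adj_succC hn s
    exact ((compl_adj _ _ _).mp (hT hs ht h1.ne)).2 h1
  have h1 := Finset.card_union_of_disjoint hd
  rw [Finset.card_image_of_injective _ succC_inj] at h1
  have h2 := Finset.card_le_univ (T ∪ T.image succC)
  rw [Fintype.card_fin] at h2
  omega

theorem count_even {n : ℕ} (hn : 3 ≤ n) (u : Fin n) (T : Finset (Fin n))
    (hT : (cycleGraph n)ᶜ.IsClique (T : Set (Fin n)))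
    (hu : ∀ t ∈ T, (cycleGraph n)ᶜ.Adj t u ∧ (cycleGraph n)ᶜ.Adj t (succC u)) :
    2 * T.card + 3 ≤ n := by
  have hd : Disjoint T (T.image succC) := by
    rw [Finset.disjoint_left]
    intro t ht ht'
    obtain ⟨s, hs, rfl⟩ := Finset.mem_image.mp ht'
    have h1 := adj_succC hn s
    exact ((compl_adj _ _ _).mp (hT hs ht h1.ne)).2 h1
  have h1 := Finset.card_union_of_disjoint hd
  rw [Finset.card_image_of_injective _ succC_inj] at h1
  have h3 : ({u, succC u, succC (succC u)} : Finset (Fin n)).card = 3 := by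
    have a1 := succC_val u
    have a2 := succC_val (succC u)
    have hu := u.2
    rw [Finset.card_eq_three]
    refine ⟨_, _, _, ?_, ?_, ?_, rfl⟩ <;> rw [Ne, Fin.ext_iff] <;> omega
  have hd2 : Disjoint (T ∪ T.image succC) {u, succC u, succC (succC u)} := by
    rw [Finset.disjoint_left]
    intro t ht ht'
    simp only [Finset.mem_insert, Finset.mem_singleton] at ht'
    have ha := adj_succC hn u
    have hb := adj_succC hn (succC u)
    rcases Finset.mem_union.mp ht with ht | ht
    · have h4 := hu t ht
      rw [compl_adj, compl_adj] at h4
      rcases ht' with rfl | rfl | rfl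
      · exact h4.1.1 rfl
      · exact h4.2.1 rfl
      · exact h4.2.2 hb.symm
    · obtain ⟨s, hs, rfl⟩ := Finset.mem_image.mp ht
      have h4 := hu s hs
      rw [compl_adj, compl_adj] at h4
      rcases ht' with h | h | h
      · exact h4.1.2 (h ▸ adj_succC hn s)
      · exact h4.1.1 (succC_inj h)
      · exact h4.2.1 (succC_inj h)
  have h5 := Finset.card_union_of_disjoint hd2
  have h2 := Finset.card_le_univ ((T ∪ T.image succC) ∪ {u, succC u, succC (succC u)})
  rw [Fintype.card_fin] at h2
  omega

/-- commuting elements give homs from free abelian groups -/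
theorem ab_hom {G : Type} [Group G] {r : ℕ} (x : Fin r → G)
    (hx : ∀ i j, i ≠ j → Commute (x i) (x j)) :
    ∃ ι : Multiplicative (Fin r → ℤ) →* G,
      (∀ i, ι (Multiplicative.ofAdd (Pi.single i 1)) = x i) ∧
      ∀ g, (∀ i, Commute (x i) g) → ∀ e, Commute (ι e) g := by
  have hc : Pairwise fun i j => ∀ a b : Multiplicative ℤ,
      Commute (zpowersHom G (x i) a) (zpowersHom G (x j) b) := by
    intro i j hij a b
    rw [zpowersHom_apply, zpowersHom_apply]
    exact (hx i j hij).zpow_zpow _ _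
  let ι0 : (Fin r → Multiplicative ℤ) →* G :=
    MonoidHom.noncommPiCoprod (fun i => zpowersHom G (x i)) hc
  let κ : Multiplicative (Fin r → ℤ) →* (Fin r → Multiplicative ℤ) :=
    { toFun := fun e i => Multiplicative.ofAdd (e.toAdd i)
      map_one' := rfl
      map_mul' := fun _ _ => rfl }
  refine ⟨ι0.comp κ, ?_, ?_⟩
  · intro i
    have h1 : κ (Multiplicative.ofAdd (Pi.single i 1)) =
        Pi.mulSingle i (Multiplicative.ofAdd (1 : ℤ)) := by
      funext j
      by_cases h : j = i
      · subst h; simp [κ]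
      · simp [κ, h]
    rw [MonoidHom.comp_apply, h1]
    simp only [ι0]
    rw [MonoidHom.noncommPiCoprod_mulSingle]
    simp
  · intro g hg e
    rw [MonoidHom.comp_apply]
    simp only [ι0]
    rw [MonoidHom.noncommPiCoprod_apply]
    apply Commute.symm
    apply Finset.noncommProd_commute
    intro i _
    simp only [zpowersHom_apply]
    exact ((hg i).zpow_left _).symm

theorem ab_ext {G : Type} [Group G] {r : ℕ} {f g : Multiplicative (Fin r → ℤ) →* G}
    (h : ∀ i, f (Multiplicative.ofAdd (Pi.single i 1)) = g (Multiplicative.ofAdd (Pi.single i 1))) :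
    f = g := by
  have h1 : ∀ i (k : ℤ), f (Multiplicative.ofAdd (Pi.single i k)) =
      g (Multiplicative.ofAdd (Pi.single i k)) := by
    intro i k
    have : (Pi.single i k : Fin r → ℤ) = k • Pi.single i 1 := by
      rw [← Pi.single_smul]; simp
    rw [this, ofAdd_zsmul, map_zpow, map_zpow, h]
  apply MonoidHom.ext
  intro e
  have h2 : e = ∏ i, Multiplicative.ofAdd (Pi.single i (e.toAdd i)) := by
    rw [← ofAdd_sum, Finset.univ_sum_single, ofAdd_toAdd]
  have h3 : e ∈ MonoidHom.eqLocus f g := by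
    rw [h2]
    exact Subgroup.prod_mem _ (fun i _ => h1 i _)
  exact h3

theorem kerSub_inj {E : Type} [AddCommGroup E] {G : Type} [Group G] (φ : Multiplicative E →* G)
    (h : Function.Injective φ) : Module.finrank ℤ (kerSub φ) = 0 := by
  have : kerSub φ = ⊥ := by
    rw [eq_bot_iff]
    intro e he
    have he' : φ (Multiplicative.ofAdd e) = 1 := he
    rw [← map_one φ] at he'
    exact h he'
  rw [this, finrank_bot]

theorem path_comm {m : ℕ} {i j : Fin m} (h1 : (i : ℕ) ≠ j) (h2 : (i : ℕ) + 1 ≠ j)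
    (h3 : (j : ℕ) + 1 ≠ i) : (pathGraph m)ᶜ.Adj i j := by
  rw [compl_adj, pathGraph_adj]
  refine ⟨fun h => h1 (congrArg _ h), ?_⟩
  omega

theorem forward_odd {m n k : ℕ} (hn : 3 ≤ n) (hk : n = 2 * k + 1) (hmn : n ≤ m)
    (φ : GG (pathGraph m) →* GG (cycleGraph n)) (hφ : Function.Injective φ) : False := by
  have hlt : ∀ i : Fin (k + 1), 2 * (i : ℕ) < m := by intro i; have := i.2; omega
  obtain ⟨ι, hι, -⟩ := ab_hom (fun i : Fin (k + 1) => gen (pathGraph m)ᶜ ⟨2 * i, hlt i⟩) (by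
    intro i j hij
    have : (i : ℕ) ≠ j := fun h => hij (Fin.ext h)
    apply gen_comm
    apply path_comm <;> simp only <;> omega)
  let ρ : RAAG (pathGraph m)ᶜ →* Multiplicative (Fin (k + 1) → ℤ) :=
    rlift (fun v => Multiplicative.ofAdd (fun i => if (v : ℕ) = 2 * i then 1 else 0))
      (fun u v _ => Commute.all _ _)
  have hρ : ρ.comp ι = MonoidHom.id _ := by
    apply ab_ext
    intro i
    rw [MonoidHom.comp_apply, hι]
    simp only [ρ, rlift_gen, MonoidHom.id_apply]
    congr 1
    funext j
    by_cases h : j = i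
    · subst h; simp
    · have : (i : ℕ) ≠ j := fun h' => h (Fin.ext h'.symm)
      rw [Pi.single_eq_of_ne h, if_neg (by omega)]
  have hinj : Function.Injective ι := by
    intro a b hab
    have := congrArg ρ hab
    rwa [← MonoidHom.comp_apply, ← MonoidHom.comp_apply, hρ] at this
  obtain ⟨T, -, hT, hT2⟩ := rank_thm (Γ := (cycleGraph n)ᶜ) Finset.univ (φ.comp ι) (by
    intro e
    have := rho_mem (Γ := (cycleGraph n)ᶜ) Set.univ (φ.comp ι e)
    rw [Finset.coe_univ]
    have h1 : rho (cycleGraph n)ᶜ Set.univ = MonoidHom.id _ := by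
      apply rext; intro v; simp [rho_gen]
    rwa [h1] at this)
  rw [kerSub_inj (φ.comp ι) (hφ.comp hinj)] at hT2
  have := count_odd hn T hT
  simp at hT2
  omega

theorem forward_even {m n k : ℕ} (hn : 3 ≤ n) (hk : n = 2 * k) (hmn : n ≤ m)
    (φ : GG (pathGraph m) →* GG (cycleGraph n)) (hφ : Function.Injective φ) : False := by
  have hlt : ∀ i : Fin (k - 1), 2 * (i : ℕ) + 3 < m := by intro i; have := i.2; omega
  obtain ⟨ι, hι, hι2⟩ := ab_hom (fun i : Fin (k - 1) => gen (pathGraph m)ᶜ ⟨2 * i + 3, hlt i⟩) (by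
    intro i j hij
    have : (i : ℕ) ≠ j := fun h => hij (Fin.ext h)
    apply gen_comm
    apply path_comm <;> simp only <;> omega)
  have hlt2 : ∀ i : Fin 2, (i : ℕ) < m := by intro i; have := i.2; omega
  let lam : FreeGroup (Fin 2) →* RAAG (pathGraph m)ᶜ :=
    FreeGroup.lift (fun i => gen (pathGraph m)ᶜ ⟨i, hlt2 i⟩)
  have hcomm : ∀ f e, Commute (lam f) (ι e) := by
    intro f e
    apply Commute.symm
    apply hι2
    intro i
    induction f using FreeGroup.induction_on with
    | C1 => simp
    | of x =>
      simp only [lam, FreeGroup.lift_apply_of]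
      apply gen_comm
      have := x.2
      apply path_comm <;> simp only <;> omega
    | inv_of x hx => rw [map_inv]; exact hx.inv_right
    | mul x y hx hy => rw [map_mul]; exact hx.mul_right hy
  let j : FreeGroup (Fin 2) × Multiplicative (Fin (k - 1) → ℤ) →* RAAG (pathGraph m)ᶜ :=
    MonoidHom.noncommCoprod lam ι hcomm
  let ρ1 : RAAG (pathGraph m)ᶜ →* FreeGroup (Fin 2) :=
    rlift (fun v => if h : (v : ℕ) < 2 then FreeGroup.of ⟨v, h⟩ else 1) (by
      intro u v h
      rw [compl_adj, pathGraph_adj] at h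
      have h1 : (u : ℕ) ≠ v := fun h' => h.1 (Fin.ext h')
      by_cases hu : (u : ℕ) < 2
      · by_cases hv : (v : ℕ) < 2
        · exfalso; omega
        · rw [dif_neg hv]; exact Commute.one_right _
      · rw [dif_neg hu]; exact Commute.one_left _)
  let ρ2 : RAAG (pathGraph m)ᶜ →* Multiplicative (Fin (k - 1) → ℤ) :=
    rlift (fun v => Multiplicative.ofAdd (fun i => if (v : ℕ) = 2 * i + 3 then 1 else 0))
      (fun u v _ => Commute.all _ _)
  have h11 : ρ1.comp lam = MonoidHom.id _ := by
    apply FreeGroup.ext_hom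
    intro x
    have := x.2
    simp [ρ1, lam]
    omega
  have h12 : ρ1.comp ι = 1 := by
    apply ab_ext
    intro i
    rw [MonoidHom.comp_apply, hι]
    simp [ρ1]
  have h21 : ρ2.comp lam = 1 := by
    apply FreeGroup.ext_hom
    intro x
    simp only [ρ2, lam, MonoidHom.comp_apply, FreeGroup.lift_apply_of, rlift_gen,
      MonoidHom.one_apply]
    rw [ofAdd_eq_one]
    funext i
    have := x.2
    exact if_neg (by omega)
  have h22 : ρ2.comp ι = MonoidHom.id _ := by
    apply ab_ext
    intro i
    rw [MonoidHom.comp_apply, hι]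
    simp only [ρ2, rlift_gen, MonoidHom.id_apply]
    congr 1
    funext j
    by_cases h : j = i
    · subst h; simp
    · have : (i : ℕ) ≠ j := fun h' => h (Fin.ext h'.symm)
      rw [Pi.single_eq_of_ne h, if_neg (by omega)]
  have hinj : Function.Injective j := by
    rintro ⟨a, b⟩ ⟨a', b'⟩ hab
    have hj : ∀ x y, j (x, y) = lam x * ι y := fun x y => rfl
    rw [hj, hj] at hab
    have e1 := congrArg ρ1 hab
    have e2 := congrArg ρ2 hab
    rw [map_mul, map_mul] at e1 e2
    have a1 : ∀ x, ρ1 (lam x) = x := DFunLike.congr_fun h11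
    have a2 : ∀ x, ρ1 (ι x) = 1 := DFunLike.congr_fun h12
    have a3 : ∀ x, ρ2 (lam x) = 1 := DFunLike.congr_fun h21
    have a4 : ∀ x, ρ2 (ι x) = x := DFunLike.congr_fun h22
    rw [a1, a1, a2, a2, mul_one, mul_one] at e1
    rw [a3, a3, a4, a4, one_mul, one_mul] at e2
    rw [e1, e2]
  have hinj2 : Function.Injective (φ.comp j) := hφ.comp hinj
  obtain ⟨u, -, v, -, huv, huv', T, -, hT1, hT2, hT3⟩ := pr_thm (Γ := (cycleGraph n)ᶜ)
    (E := Fin (k - 1) → ℤ) Finset.univ (FreeGroup (Fin 2)) (FreeGroup.of 0) (FreeGroup.of 1) (by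
      intro h
      have := congrArg FreeGroup.toWord h.eq
      revert this
      decide) (φ.comp j) (by
    intro e
    have := rho_mem (Γ := (cycleGraph n)ᶜ) Set.univ (φ.comp j e)
    rw [Finset.coe_univ]
    have h1 : rho (cycleGraph n)ᶜ Set.univ = MonoidHom.id _ := by
      apply rext; intro v; simp [rho_gen]
    rwa [h1] at this) (by
      intro f z h
      rw [← map_one (φ.comp j)] at h
      exact congrArg Prod.fst (hinj2 h))
  rw [kerSub_inj _ (hinj2.comp (fun a b h => congrArg Prod.snd h))] at hT3
  simp only [Module.finrank_fintype_fun_eq_card, Fintype.card_fin] at hT3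
  have hadj : (cycleGraph n).Adj u v := by
    by_contra h
    exact huv' ((compl_adj _ _ _).mpr ⟨huv, h⟩)
  rcases adj_iff_succC hn hadj with rfl | rfl
  · have := count_even hn u T hT1 hT2
    omega
  · have := count_even hn v T hT1 (fun t ht => (hT2 t ht).symm)
    omega

theorem backward {m n : ℕ} (hn : 3 ≤ n) (hmn : m + 1 ≤ n) :
    ∃ φ : GG (pathGraph m) →* GG (cycleGraph n), Function.Injective φ := by
  have hle : m ≤ n := by omega
  have hadj : ∀ u v : Fin m, (cycleGraph n).Adj (Fin.castLE hle u) (Fin.castLE hle v) ↔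
      (pathGraph m).Adj u v := by
    intro u v
    rw [cycle_adj hn, pathGraph_adj]
    simp only [Fin.val_castLE]
    have := u.2
    have := v.2
    omega
  let φ : GG (pathGraph m) →* GG (cycleGraph n) :=
    rlift (fun i => gen (cycleGraph n)ᶜ (Fin.castLE hle i)) (by
      intro u v h
      apply gen_comm
      rw [compl_adj] at h ⊢
      rw [hadj]
      exact ⟨fun h' => h.1 (Fin.castLE_injective hle h'), h.2⟩)
  let ψ : GG (cycleGraph n) →* GG (pathGraph m) :=
    rlift (fun i => if h : (i : ℕ) < m then gen (pathGraph m)ᶜ ⟨i, h⟩ else 1) (by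
      intro u v h
      by_cases hu : (u : ℕ) < m
      · by_cases hv : (v : ℕ) < m
        · rw [dif_pos hu, dif_pos hv]
          apply gen_comm
          rw [compl_adj] at h ⊢
          rw [← hadj]
          exact ⟨fun h' => h.1 (Fin.ext (Fin.mk.inj h')), h.2⟩
        · rw [dif_neg hv]; exact Commute.one_right _
      · rw [dif_neg hu]; exact Commute.one_left _)
  have h : ψ.comp φ = MonoidHom.id _ := by
    apply rext
    intro v
    simp [φ, ψ]
  refine ⟨φ, fun a b hab => ?_⟩
  have := congrArg ψ hab
  rwa [← MonoidHom.comp_apply, ← MonoidHom.comp_apply, h] at this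

end final

end RaagAux

/-- `G(P_m) ↪ G(C_n)` iff `m + 1 ≤ n`, for `m ≥ 1`, `n ≥ 3`. -/
theorem statement5 (m n : ℕ) (hm : 0 < m) (hn : 3 ≤ n) :
    (∃ φ : GG (pathGraph m) →* GG (cycleGraph n), Function.Injective φ) ↔ m + 1 ≤ n := by
  constructor
  · rintro ⟨φ, hφ⟩
    by_contra h
    rcases Nat.even_or_odd' n with ⟨k, hk | hk⟩
    · exact RaagAux.forward_even hn hk (by omega) φ hφ
    · exact RaagAux.forward_odd hn hk (by omega) φ hφ
  · exact RaagAux.backward hn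
end

section
/- For every positive integer n, there is an injective group homomorphism from G(C_4) into G(P_n) if and only if 3 ≤ n. -/
open SimpleGraph

namespace Emb

lemma comm_of_adj {V : Type} {G : SimpleGraph V} {u v : V} (h : G.Adj u v) :
    (PresentedGroup.of u : RAAG G) * PresentedGroup.of v
      = PresentedGroup.of v * PresentedGroup.of u := by
  have h1 : (PresentedGroup.mk (raagRels G)) (FreeGroup.of u * FreeGroup.of v *
      (FreeGroup.of u)⁻¹ * (FreeGroup.of v)⁻¹) = 1 :=
    PresentedGroup.one_of_mem ⟨u, v, h, rfl⟩
  simp only [map_mul, map_inv] at h1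
  rw [mul_inv_eq_one, mul_inv_eq_iff_eq_mul] at h1
  exact h1

/-- Universal property of a right-angled Artin group. -/
def lift {V : Type} (G : SimpleGraph V) {K : Type*} [Group K] (f : V → K)
    (hf : ∀ u v, G.Adj u v → f u * f v = f v * f u) : RAAG G →* K :=
  PresentedGroup.toGroup (f := f) (by
    rintro r ⟨u, v, h, rfl⟩
    simp only [map_mul, map_inv, FreeGroup.lift_apply_of]
    rw [hf u v h]
    group)

@[simp] lemma lift_of {V : Type} (G : SimpleGraph V) {K : Type*} [Group K] (f : V → K)
    (hf : ∀ u v, G.Adj u v → f u * f v = f v * f u) (v : V) :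
    lift G f hf (PresentedGroup.of v) = f v :=
  PresentedGroup.toGroup.of _

abbrev H := GG (cycleGraph 4)

def a (i : Fin 4) : H := PresentedGroup.of i

lemma adjC : ∀ u v : Fin 4, (cycleGraph 4)ᶜ.Adj u v → v = u + 2 := by
  intro u v h
  rw [SimpleGraph.compl_adj, SimpleGraph.cycleGraph_adj] at h
  revert u v
  decide

lemma adjC' : ∀ u : Fin 4, (cycleGraph 4)ᶜ.Adj u (u + 2) := by
  intro u
  rw [SimpleGraph.compl_adj, SimpleGraph.cycleGraph_adj]
  revert u
  decide

lemma a_comm (u : Fin 4) : a u * a (u + 2) = a (u + 2) * a u := comm_of_adj (adjC' u)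

/-- The swap of the two factors. -/
def tau : Fin 4 → Fin 4 := ![1, 0, 3, 2]

lemma tau_add : ∀ u, tau (u + 2) = tau u + 2 := by decide

lemma tau_tau : ∀ u, tau (tau u) = u := by decide

def sigmaHom : H →* H := lift _ (fun i => a (tau i)) (by
  intro u v h
  obtain rfl := adjC u v h
  simp only [tau_add]
  exact a_comm _)

lemma sigmaHom_a (i : Fin 4) : sigmaHom (a i) = a (tau i) := lift_of _ _ _ _

lemma sigma_comp : sigmaHom.comp sigmaHom = MonoidHom.id H := by
  refine PresentedGroup.ext fun i => ?_
  change sigmaHom (sigmaHom (a i)) = a i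
  rw [sigmaHom_a, sigmaHom_a, tau_tau]

def sigma : MulAut H := MonoidHom.toMulEquiv sigmaHom sigmaHom sigma_comp sigma_comp

lemma sigma_a (i : Fin 4) : sigma (a i) = a (tau i) := sigmaHom_a i

abbrev act : Multiplicative ℤ →* MulAut H := zpowersHom _ sigma

abbrev K := H ⋊[act] Multiplicative ℤ

def t : K := SemidirectProduct.inr (Multiplicative.ofAdd 1)

lemma t_conj (x : H) : t * SemidirectProduct.inl x * t⁻¹ = (SemidirectProduct.inl (sigma x) : K) := by
  have := SemidirectProduct.inl_aut (φ := act) (Multiplicative.ofAdd 1) x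
  simp only [t]
  rw [← map_inv, ← this]
  simp [act]

/-- Images in `K` of the generators of `G(P_n)`. -/
def g : ℕ → K
  | 0 => SemidirectProduct.inl (a 0)
  | 1 => t
  | 2 => SemidirectProduct.inl (a 2)
  | _ => 1

lemma g_comm (i j : ℕ) (h1 : i ≠ j) (h2 : ¬ (i + 1 = j ∨ j + 1 = i)) : g i * g j = g j * g i := by
  have key : g 0 * g 2 = g 2 * g 0 := by
    simp only [g, ← map_mul]
    rw [show a 0 * a 2 = a 2 * a 0 from a_comm 0]
  match i, j with
  | 0, 0 | 1, 1 | 2, 2 => rfl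
  | 0, 1 | 1, 0 | 1, 2 | 2, 1 => omega
  | 0, 2 => exact key
  | 2, 0 => exact key.symm
  | i + 3, j => simp [g]
  | i, j + 3 => simp [g]

def psi (n : ℕ) : GG (pathGraph n) →* K := lift _ (fun i => g i.1) (by
  intro u v h
  rw [SimpleGraph.compl_adj, SimpleGraph.pathGraph_adj] at h
  exact g_comm _ _ (fun e => h.1 (Fin.ext e)) h.2)

section
variable (n : ℕ) (hn : 3 ≤ n)

def x (i : Fin 3) : GG (pathGraph n) := PresentedGroup.of ⟨i.1, by omega⟩

lemma x_comm : x n hn 0 * x n hn 2 = x n hn 2 * x n hn 0 := by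
  apply comm_of_adj
  rw [SimpleGraph.compl_adj, SimpleGraph.pathGraph_adj]
  simp

def y : Fin 4 → GG (pathGraph n) :=
  ![x n hn 0, x n hn 1 * x n hn 0 * (x n hn 1)⁻¹, x n hn 2, x n hn 1 * x n hn 2 * (x n hn 1)⁻¹]

lemma y_comm (u : Fin 4) : y n hn u * y n hn (u + 2) = y n hn (u + 2) * y n hn u := by
  have h := x_comm n hn
  have h' : (x n hn 1 * x n hn 0 * (x n hn 1)⁻¹) * (x n hn 1 * x n hn 2 * (x n hn 1)⁻¹) =
      (x n hn 1 * x n hn 2 * (x n hn 1)⁻¹) * (x n hn 1 * x n hn 0 * (x n hn 1)⁻¹) := by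
    rw [conj_mul, conj_mul, h]
  fin_cases u
  · exact h
  · exact h'
  · exact h.symm
  · exact h'.symm

def phi : H →* GG (pathGraph n) := lift _ (y n hn) (by
  intro u v h
  obtain rfl := adjC u v h
  exact y_comm n hn u)

lemma psi_x (i : Fin 3) : psi n (x n hn i) = g i.1 := lift_of _ _ _ _

lemma psi_phi : (psi n).comp (phi n hn) = SemidirectProduct.inl := by
  refine PresentedGroup.ext fun i => ?_
  have h : phi n hn (PresentedGroup.of i) = y n hn i := lift_of _ _ _ _
  rw [MonoidHom.comp_apply, h]
  change _ = SemidirectProduct.inl (a i)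
  fin_cases i
  · exact psi_x n hn 0
  · change psi n (x n hn 1 * x n hn 0 * (x n hn 1)⁻¹) = _
    rw [map_mul, map_mul, map_inv, psi_x, psi_x]
    exact (t_conj (a 0)).trans (by rw [sigma_a]; rfl)
  · exact psi_x n hn 2
  · change psi n (x n hn 1 * x n hn 2 * (x n hn 1)⁻¹) = _
    rw [map_mul, map_mul, map_inv, psi_x, psi_x]
    exact (t_conj (a 2)).trans (by rw [sigma_a]; rfl)

lemma phi_inj : Function.Injective (phi n hn) := by
  have h : Function.Injective ((psi n).comp (phi n hn)) := by
    rw [psi_phi]; exact SemidirectProduct.inl_injective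
  exact Function.Injective.of_comp (f := psi n) h

end

/-- Commuting elements of a free group are powers of a common element. -/
lemma free_comm {F : Type} [Group F] [IsFreeGroup F] (p q : F) (h : p * q = q * p) :
    ∃ (c : F) (i j : ℤ), p = c ^ i ∧ q = c ^ j := by
  let S := Subgroup.closure ({p, q} : Set F)
  have hc : ∀ x y : S, x * y = y * x := by
    have : IsMulCommutative S := by
      apply Subgroup.isMulCommutative_closure
      rintro x (rfl | rfl) y (rfl | rfl) <;> simp [h]
    intro x y
    exact mul_comm' x y
  have hp : p ∈ S := Subgroup.subset_closure (by simp)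
  have hq : q ∈ S := Subgroup.subset_closure (by simp)
  let e : FreeGroup (IsFreeGroup.Generators S) ≃* S := IsFreeGroup.mulEquiv S
  have hs : Subsingleton (IsFreeGroup.Generators S) := by
    constructor
    intro u v
    by_contra huv
    have h1 : FreeGroup.of u * FreeGroup.of v = FreeGroup.of v * FreeGroup.of u := by
      apply e.injective
      rw [map_mul, map_mul, hc]
    classical
    have h3 := congrArg (FreeGroup.lift (fun w : IsFreeGroup.Generators S =>
      if w = u then (Equiv.swap (0 : Fin 3) 1) else Equiv.swap 1 2)) h1
    simp only [map_mul, FreeGroup.lift_apply_of, if_true, if_neg (Ne.symm huv)] at h3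
    revert h3
    decide
  rcases isEmpty_or_nonempty (IsFreeGroup.Generators S) with hE | ⟨⟨w⟩⟩
  · have : Subsingleton S := e.symm.injective.subsingleton
    refine ⟨1, 0, 0, ?_, ?_⟩
    · simpa using congrArg Subtype.val (Subsingleton.elim (⟨p, hp⟩ : S) 1)
    · simpa using congrArg Subtype.val (Subsingleton.elim (⟨q, hq⟩ : S) 1)
  · have key : ∀ z : FreeGroup (IsFreeGroup.Generators S), ∃ i : ℤ, z = FreeGroup.of w ^ i := by
      intro z
      induction z using FreeGroup.induction_on with
      | C1 => exact ⟨0, by simp⟩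
      | of u => exact ⟨1, by rw [Subsingleton.elim u w]; simp⟩
      | inv_of u _ => exact ⟨-1, by rw [Subsingleton.elim u w]; simp⟩
      | mul x y hx hy =>
        obtain ⟨i, rfl⟩ := hx
        obtain ⟨j, rfl⟩ := hy
        exact ⟨i + j, by rw [zpow_add]⟩
    have key2 : ∀ z (hz : z ∈ S), ∃ i : ℤ, z = (e (FreeGroup.of w) : F) ^ i := by
      intro z hz
      obtain ⟨i, hi⟩ := key (e.symm ⟨z, hz⟩)
      refine ⟨i, ?_⟩
      have := congrArg e hi
      rw [MulEquiv.apply_symm_apply, map_zpow] at this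
      simpa using congrArg Subtype.val this
    obtain ⟨i, hi⟩ := key2 p hp
    obtain ⟨j, hj⟩ := key2 q hq
    exact ⟨_, i, j, hi, hj⟩

lemma rels_empty (n : ℕ) (hn : n < 3) : raagRels (pathGraph n)ᶜ = ∅ := by
  ext r
  simp only [Set.mem_empty_iff_false, iff_false]
  rintro ⟨u, v, h, -⟩
  rw [SimpleGraph.compl_adj, SimpleGraph.pathGraph_adj] at h
  have := fun e => h.1 (Fin.ext e)
  omega

lemma free_target (n : ℕ) (hn : n < 3) : IsFreeGroup (GG (pathGraph n)) := by
  change IsFreeGroup (PresentedGroup (raagRels (pathGraph n)ᶜ))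
  rw [rels_empty n hn]
  have e : FreeGroup (Fin n) ≃* PresentedGroup (∅ : Set (FreeGroup (Fin n))) := by
    refine MulEquiv.ofBijective (PresentedGroup.mk ∅) ⟨?_, PresentedGroup.mk_surjective _⟩
    rw [← MonoidHom.ker_eq_bot_iff]
    have : (PresentedGroup.mk (∅ : Set (FreeGroup (Fin n)))).ker = Subgroup.normalClosure ∅ :=
      QuotientGroup.ker_mk' _
    rw [this, Subgroup.normalClosure_empty]
  exact IsFreeGroup.ofMulEquiv e

/-- Exponent of the generator `k`. -/
def expo (k : Fin 4) : H →* Multiplicative ℤ :=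
  lift _ (fun i => if i = k then Multiplicative.ofAdd 1 else 1) (fun _ _ _ => mul_comm _ _)

lemma expo_a (k i : Fin 4) : expo k (a i) = if i = k then Multiplicative.ofAdd 1 else 1 :=
  lift_of _ _ _ _

lemma pow_eq (i j : ℤ) (h : a 0 ^ j = a 2 ^ i) : j = 0 ∧ i = 0 := by
  have h0 := congrArg (expo 0) h
  have h2 := congrArg (expo 2) h
  simp only [map_zpow, expo_a] at h0 h2
  constructor
  · simpa [← ofAdd_zsmul] using h0
  · simpa [← ofAdd_zsmul] using h2.symm

end Emb

open Emb in
/-- `G(C_4) ↪ G(P_n)` iff `3 ≤ n`. -/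
theorem statement7 (n : ℕ) (hn : 0 < n) :
    (∃ φ : GG (cycleGraph 4) →* GG (pathGraph n), Function.Injective φ) ↔ 3 ≤ n := by
  constructor
  · rintro ⟨φ, hφ⟩
    by_contra hlt
    have := free_target n (by omega)
    obtain ⟨c, i, j, hi, hj⟩ := free_comm (φ (a 0)) (φ (a 2)) (by
      rw [← map_mul, ← map_mul]; exact congrArg φ (a_comm 0))
    have h : a 0 ^ j = a 2 ^ i := by
      apply hφ
      rw [map_zpow, map_zpow, hi, hj, ← zpow_mul, ← zpow_mul, mul_comm]
    obtain ⟨rfl, rfl⟩ := pow_eq i j h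
    have h0 : a 0 = 1 := hφ (by rw [hi, map_one, zpow_zero])
    have := pow_eq 0 1 (by simp [h0])
    omega
  · intro h
    exact ⟨phi n h, phi_inj n h⟩
end

section
/- Let m ≥ 5 and n be positive integers. If there is an injective group homomorphism from G(C_m) into G(P_n), then m − 1 ≤ n. -/
open SimpleGraph

namespace PF
open Module

/-! ### Free groups -/

theorem isCyclic_freeGroup {Y : Type} (hY : ∀ a b : Y, a = b) : IsCyclic (FreeGroup Y) := by
  by_cases h : Nonempty Y
  · obtain ⟨y⟩ := h
    refine ⟨⟨FreeGroup.of y, fun x => ?_⟩⟩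
    have h1 : x ∈ Subgroup.closure (Set.range (FreeGroup.of : Y → FreeGroup Y)) := by
      rw [FreeGroup.closure_range_of]; trivial
    have h2 : Set.range (FreeGroup.of : Y → FreeGroup Y) ⊆
        (Subgroup.zpowers (FreeGroup.of y) : Set (FreeGroup Y)) := by
      rintro _ ⟨z, rfl⟩
      rw [hY z y]
      exact Subgroup.mem_zpowers _
    exact (Subgroup.closure_le _).2 h2 h1
  · have : IsEmpty Y := not_nonempty_iff.1 h
    infer_instance

theorem of_comm {Y : Type} {a b : Y}
    (h : FreeGroup.of a * FreeGroup.of b = FreeGroup.of b * FreeGroup.of a) : a = b := by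
  classical
  by_contra hab
  have h2 := congrArg (fun x => FreeGroup.lift
    (fun y => if y = a then (Equiv.swap (0 : Fin 3) 1) else (Equiv.swap (1 : Fin 3) 2)) x) h
  have hba : ¬ b = a := fun h => hab h.symm
  simp [hba] at h2
  revert h2
  decide

theorem cyclic_of_comm {X : Type} (S : Subgroup (FreeGroup X))
    (hS : ∀ a ∈ S, ∀ b ∈ S, a * b = b * a) : IsCyclic S := by
  have e : FreeGroup (IsFreeGroup.Generators S) ≃* S := IsFreeGroup.mulEquiv S
  have h1 : ∀ a b : IsFreeGroup.Generators S, a = b := by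
    intro a b
    apply of_comm
    apply e.injective
    rw [map_mul, map_mul]
    exact Subtype.ext (hS _ (e _).2 _ (e _).2)
  have := isCyclic_freeGroup h1
  exact isCyclic_of_surjective e e.surjective

theorem comm_pow {X : Type} {f g : FreeGroup X} (hf : f ≠ 1) (h : Commute f g) :
    ∃ (p q : ℤ), p ≠ 0 ∧ g ^ p = f ^ q := by
  have hc : ∀ a ∈ Subgroup.closure {f, g}, ∀ b ∈ Subgroup.closure {f, g}, a * b = b * a := by
    have hS : Subgroup.closure {f, g} ≤ Subgroup.centralizer {f, g} := by
      rw [Subgroup.closure_le]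
      rintro x (rfl | rfl) <;> rw [SetLike.mem_coe, Subgroup.mem_centralizer_iff] <;>
        rintro y (rfl | rfl)
      · rfl
      · exact h.eq.symm
      · exact h.eq
      · rfl
    intro a ha b hb
    have h2 : Subgroup.closure {f, g} ≤ Subgroup.centralizer {a} := by
      rw [Subgroup.closure_le]
      intro x hx
      rw [SetLike.mem_coe, Subgroup.mem_centralizer_iff]
      rintro y rfl
      exact (Subgroup.mem_centralizer_iff.1 (hS ha) x hx).symm
    exact Subgroup.mem_centralizer_iff.1 (h2 hb) a rfl
  have := cyclic_of_comm _ hc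
  obtain ⟨z, hz⟩ := this.exists_generator
  obtain ⟨i, hi⟩ := Subgroup.mem_zpowers_iff.1 (hz ⟨f, Subgroup.subset_closure (by simp)⟩)
  obtain ⟨j, hj⟩ := Subgroup.mem_zpowers_iff.1 (hz ⟨g, Subgroup.subset_closure (by simp)⟩)
  have hi' : (z : FreeGroup X) ^ i = f := by simpa using congrArg Subtype.val hi
  have hj' : (z : FreeGroup X) ^ j = g := by simpa using congrArg Subtype.val hj
  refine ⟨i, j, ?_, ?_⟩
  · rintro rfl
    exact hf (by rw [← hi', zpow_zero])
  · have e : ((z : FreeGroup X) ^ j) ^ i = ((z : FreeGroup X) ^ i) ^ j := by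
      rw [← zpow_mul, ← zpow_mul, mul_comm]
    rwa [hi', hj'] at e

theorem zpow_inj {X : Type} {a b : FreeGroup X} {p : ℤ} (hp : p ≠ 0) (h : a ^ p = b ^ p) :
    a = b := zpow_left_injective hp h

theorem comm_of_comm_zpow {X : Type} {a b : FreeGroup X} {p : ℤ} (hp : p ≠ 0)
    (h : Commute (a ^ p) b) : Commute a b := by
  have h1 : (b * a * b⁻¹) ^ p = a ^ p := by
    rw [conj_zpow, ← h.eq]; group
  have h2 := zpow_inj hp h1
  rw [Commute, SemiconjBy]
  nth_rewrite 1 [← h2]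
  group

/-! ### Supports -/
open Classical in
/-- retraction killing generators outside `T` -/
noncomputable def rho {X : Type} (T : Finset X) : FreeGroup X →* FreeGroup X :=
  FreeGroup.lift (fun x => if x ∈ T then FreeGroup.of x else 1)

theorem rho_rho {X : Type} [DecidableEq X] (T T' : Finset X) (f : FreeGroup X) :
    rho T (rho T' f) = rho (T ∩ T') f := by
  have : (rho T).comp (rho T') = rho (T ∩ T') := by
    ext x
    by_cases h : x ∈ T' <;> by_cases h' : x ∈ T <;> simp [rho, h, h']
  exact DFunLike.congr_fun this f

/-- `f` is conjugate into the free subgroup on `T`. -/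
def ConjIn {X : Type} (f : FreeGroup X) (T : Finset X) : Prop :=
  ∃ c, rho T (c * f * c⁻¹) = c * f * c⁻¹

theorem ConjIn.inter {X : Type} [DecidableEq X] {f : FreeGroup X} {T T' : Finset X}
    (h : ConjIn f T) (h' : ConjIn f T') : ConjIn f (T ∩ T') := by
  obtain ⟨c, hc⟩ := h
  obtain ⟨d, hd⟩ := h'
  have key : (rho T (c * d⁻¹))⁻¹ * (c * f * c⁻¹) * rho T (c * d⁻¹)
      = rho (T ∩ T') (d * f * d⁻¹) := by
    rw [← rho_rho, hd]
    nth_rewrite 1 [← hc]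
    rw [← map_inv, ← map_mul, ← map_mul]
    congr 1
    group
  refine ⟨(rho T (c * d⁻¹))⁻¹ * c, ?_⟩
  have e : (rho T (c * d⁻¹))⁻¹ * c * f * ((rho T (c * d⁻¹))⁻¹ * c)⁻¹
    = (rho T (c * d⁻¹))⁻¹ * (c * f * c⁻¹) * rho T (c * d⁻¹) := by group
  rw [e, key, rho_rho, Finset.inter_self]

theorem exists_supp {X : Type} (f : FreeGroup X) : ∃ T : Finset X, rho T f = f := by
  classical
  have aux : ∀ (T T' : Finset X) (f : FreeGroup X), T ⊆ T' → rho T f = f → rho T' f = f := by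
    intro T T' f h h1
    rw [← h1, rho_rho, Finset.inter_eq_right.2 h]
  induction f using FreeGroup.induction_on with
  | C1 => exact ⟨∅, by simp⟩
  | of x => exact ⟨{x}, by simp [rho]⟩
  | inv_of x h => obtain ⟨T, hT⟩ := h; exact ⟨T, by simp only [map_inv]; rw [hT]⟩
  | mul x y hx hy =>
    obtain ⟨T, hT⟩ := hx
    obtain ⟨T', hT'⟩ := hy
    refine ⟨T ∪ T', ?_⟩
    rw [map_mul, aux T _ x Finset.subset_union_left hT, aux T' _ y Finset.subset_union_right hT']

theorem exists_min_supp {X : Type} (f : FreeGroup X) :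
    ∃ T : Finset X, ConjIn f T ∧ ∀ T', ConjIn f T' → T ⊆ T' := by
  classical
  have hne : ∃ k, ∃ T : Finset X, ConjIn f T ∧ T.card = k := by
    obtain ⟨T, hT⟩ := exists_supp f
    exact ⟨_, T, ⟨1, by simpa using hT⟩, rfl⟩
  obtain ⟨T, hT, hk⟩ := Nat.find_spec hne
  refine ⟨T, hT, fun T' h' => ?_⟩
  have h1 := Nat.find_min' hne ⟨T ∩ T', hT.inter h', rfl⟩
  have h2 : T ∩ T' = T := Finset.eq_of_subset_of_card_le Finset.inter_subset_left (by omega)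
  exact Finset.inter_eq_left.1 h2

/-! ### The semidirect product -/

/-- the permutation action on the free group -/
def act (H X : Type) [Group H] [MulAction H X] : H →* MulAut (FreeGroup X) where
  toFun h := FreeGroup.freeGroupCongr (MulAction.toPerm h)
  map_one' := by
    apply MulEquiv.ext
    intro x
    have : (FreeGroup.freeGroupCongr (MulAction.toPerm (1 : H)) : FreeGroup X ≃* _).toMonoidHom
      = MonoidHom.id _ := by
      ext x; simp
    exact DFunLike.congr_fun this x
  map_mul' a b := by
    apply MulEquiv.ext
    intro x
    have : (FreeGroup.freeGroupCongr (MulAction.toPerm (a * b)) : FreeGroup X ≃* _).toMonoidHom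
      = ((FreeGroup.freeGroupCongr (MulAction.toPerm a)).toMonoidHom).comp
        (FreeGroup.freeGroupCongr (MulAction.toPerm b) : FreeGroup X ≃* _).toMonoidHom := by
      ext x; simp [mul_smul]
    exact DFunLike.congr_fun this x

@[simp] theorem act_of {H X : Type} [Group H] [MulAction H X] (h : H) (x : X) :
    act H X h (FreeGroup.of x) = FreeGroup.of (h • x) := by
  simp [act]

theorem act_rho {H X : Type} [Group H] [MulAction H X] [DecidableEq X] (h : H) (T : Finset X)
    (f : FreeGroup X) :
    act H X h (rho T f) = rho (T.map (MulAction.toPerm h).toEmbedding) (act H X h f) := by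
  have : (act H X h).toMonoidHom.comp (rho T)
    = (rho (T.map (MulAction.toPerm h).toEmbedding)).comp (act H X h).toMonoidHom := by
    ext x
    by_cases hx : x ∈ T <;> simp [rho, hx]
  exact DFunLike.congr_fun this f

theorem act_fix {H X : Type} [Group H] [MulAction H X] (h : H) (T : Finset X)
    (hT : ∀ x ∈ T, h • x = x) (f : FreeGroup X) (hf : rho T f = f) : act H X h f = f := by
  have : (act H X h).toMonoidHom.comp (rho T) = rho T := by
    ext x
    by_cases hx : x ∈ T
    · simp [rho, hx, hT x hx]
    · simp [rho, hx]
  have := DFunLike.congr_fun this f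
  rw [MonoidHom.comp_apply, hf] at this
  exact this

/-- the semidirect product -/
abbrev SP (H X : Type) [Group H] [MulAction H X] : Type :=
  SemidirectProduct (FreeGroup X) H (act H X)

theorem key {H X : Type} [Group H] [MulAction H X] (f : FreeGroup X) (hf : f ≠ 1) :
    ∃ (E : ℕ) (c : FreeGroup X) (T : Finset X), 0 < E ∧ T.Nonempty ∧
      rho T (c * f * c⁻¹) = c * f * c⁻¹ ∧
      ∀ g : SP H X, Commute g (SemidirectProduct.inl f) → ∀ x ∈ T, g.right ^ E • x = x := by
  classical
  obtain ⟨T, ⟨c, hc⟩, hmin⟩ := exists_min_supp f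
  refine ⟨Fintype.card (Equiv.Perm T), c, T, Fintype.card_pos, ?_, hc, ?_⟩
  · rw [Finset.nonempty_iff_ne_empty]
    rintro rfl
    have h0 : rho (∅ : Finset X) = 1 := by ext x; simp [rho]
    rw [h0, MonoidHom.one_apply] at hc
    apply hf
    have := hc.symm
    rwa [conj_eq_one_iff] at this
  · intro g hg x hx
    have h1 := congrArg SemidirectProduct.left hg.eq
    simp only [SemidirectProduct.mul_left, SemidirectProduct.left_inl, SemidirectProduct.right_inl,
      map_one, MulAut.one_apply] at h1
    set h := g.right
    have h2 : ConjIn f (T.map (MulAction.toPerm h).toEmbedding) := by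
      refine ⟨act H X h c * g.left⁻¹, ?_⟩
      have e : act H X h c * g.left⁻¹ * f * (act H X h c * g.left⁻¹)⁻¹
          = act H X h (c * f * c⁻¹) := by
        have : act H X h f = g.left⁻¹ * f * g.left := by
          rw [mul_assoc, ← h1]; group
        rw [map_mul, map_mul, this, map_inv]; group
      rw [e, ← act_rho, hc]
    have h3 := Finset.eq_of_subset_of_card_le (hmin _ h2) (by simp)
    have h4 : ∀ y, (MulAction.toPerm h : Equiv.Perm X) y ∈ T ↔ y ∈ T := by
      intro y
      conv_lhs => rw [h3]
      simp
    have h5 := pow_card_eq_one (x := (MulAction.toPerm h : Equiv.Perm X).subtypePerm h4)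
    rw [Equiv.Perm.subtypePerm_pow] at h5
    have h6 := congrArg Subtype.val (Equiv.congr_fun h5 ⟨x, hx⟩)
    simp only [Equiv.Perm.subtypePerm_apply, Equiv.Perm.coe_one, id] at h6
    rw [← MulAction.toPermHom_apply, ← map_pow] at h6
    exact h6

theorem comm_pows {H X : Type} [Group H] [MulAction H X] (f : FreeGroup X) (hf : f ≠ 1)
    (a b : SP H X) (ha : Commute a (SemidirectProduct.inl f))
    (hb : Commute b (SemidirectProduct.inl f)) (hab : Commute a.right b.right) :
    ∃ E : ℕ, 0 < E ∧ Commute (a ^ E) (b ^ E) := by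
  obtain ⟨E, c, T, hE, -, hc, hT⟩ := key (H := H) f hf
  refine ⟨E, hE, ?_⟩
  set f' := c * f * c⁻¹ with hf'
  have hf1 : f' ≠ 1 := by rwa [hf', Ne, conj_eq_one_iff]
  set C : SP H X := SemidirectProduct.inl c
  have main : ∀ a : SP H X, Commute a (SemidirectProduct.inl f) →
      act H X (C * a ^ E * C⁻¹).right f' = f' ∧ Commute f' (C * a ^ E * C⁻¹).left ∧
      (C * a ^ E * C⁻¹).right = a.right ^ E := by
    intro a ha
    have hr : (C * a ^ E * C⁻¹).right = a.right ^ E := by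
      have : ∀ y : SP H X, y.right = SemidirectProduct.rightHom y := fun _ => rfl
      rw [this, this]
      rw [map_mul, map_mul, map_pow, map_inv,
        show SemidirectProduct.rightHom C = 1 from rfl]
      simp only [one_mul, inv_one, mul_one]
    have h1 : act H X (C * a ^ E * C⁻¹).right f' = f' := by
      rw [hr]
      exact act_fix _ T (hT a ha) _ hc
    refine ⟨h1, ?_, hr⟩
    have h2 : Commute (C * a ^ E * C⁻¹) (SemidirectProduct.inl f') := by
      have : (SemidirectProduct.inl f' : SP H X) = C * SemidirectProduct.inl f * C⁻¹ := by
        simp [hf', C]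
      rw [this, Commute.conj_iff]
      exact ha.pow_left E
    have h3 := congrArg SemidirectProduct.left h2.eq
    simp only [SemidirectProduct.mul_left _ (SemidirectProduct.inl f'),
      SemidirectProduct.mul_left (SemidirectProduct.inl f'), SemidirectProduct.left_inl,
      SemidirectProduct.right_inl, map_one, MulAut.one_apply, h1] at h3
    exact h3.symm
  have fixes : ∀ (h : H) (g : FreeGroup X), act H X h f' = f' → Commute f' g →
      act H X h g = g := by
    intro h g h1 h2
    obtain ⟨p, q, hp, hpq⟩ := comm_pow hf1 h2
    apply zpow_inj hp
    rw [← map_zpow, hpq, map_zpow, h1]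
  obtain ⟨a1, a2, a3⟩ := main a ha
  obtain ⟨b1, b2, b3⟩ := main b hb
  rw [← Commute.conj_iff C]
  generalize C * a ^ E * C⁻¹ = a' at *
  generalize C * b ^ E * C⁻¹ = b' at *
  have hl : Commute a'.left b'.left := by
    obtain ⟨p, q, hp, hpq⟩ := comm_pow hf1 a2
    apply comm_of_comm_zpow hp
    rw [hpq]
    exact b2.zpow_left q
  apply SemidirectProduct.ext
  · rw [SemidirectProduct.mul_left, SemidirectProduct.mul_left, fixes _ _ a1 b2, fixes _ _ b1 a2]
    exact hl.eq
  · rw [SemidirectProduct.mul_right, SemidirectProduct.mul_right, a3, b3]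
    exact (hab.pow_pow E E).eq


/-! ### Ranks of abelian subgroups -/

/-- kernel of a homomorphism from an abelian group, as a submodule -/
def Kr {M Q : Type} [AddCommGroup M] [Group Q] (f : Multiplicative M →* Q) : Submodule ℤ M :=
  AddSubgroup.toIntSubmodule
    { carrier := {m | f (Multiplicative.ofAdd m) = 1}
      zero_mem' := map_one f
      add_mem' := by
        intro a b ha hb
        simp only [Set.mem_ofPred_eq] at *
        rw [ofAdd_add, map_mul, ha, hb, mul_one]
      neg_mem' := by
        intro a ha
        simp only [Set.mem_ofPred_eq] at *
        rw [ofAdd_neg, map_inv, ha, inv_one] }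

theorem mem_Kr {M Q : Type} [AddCommGroup M] [Group Q] (f : Multiplicative M →* Q) (m : M) :
    m ∈ Kr f ↔ f (Multiplicative.ofAdd m) = 1 := Iff.rfl

theorem finrank_le_of_torsion {M : Type} [AddCommGroup M] [Module.Finite ℤ M]
    (K N : Submodule ℤ M) (E : ℕ) (hE : 0 < E) (h : ∀ x ∈ N, E • x ∈ K) :
    finrank ℤ N ≤ finrank ℤ K := by
  let g : N →ₗ[ℤ] K :=
    { toFun := fun x => ⟨E • (x : M), h x x.2⟩
      map_add' := by intro x y; ext; simp
      map_smul' := by intro c x; ext; exact smul_comm _ _ _ }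
  have h1 := (LinearMap.ker g).finrank_quotient_add_finrank
  rw [g.quotKerEquivRange.finrank_eq] at h1
  have h2 : finrank ℤ (LinearMap.ker g) = 0 := by
    rw [Module.finrank_eq_zero_iff]
    rintro ⟨x, hx⟩
    refine ⟨E, by exact_mod_cast hE.ne', ?_⟩
    have := congrArg Subtype.val (LinearMap.mem_ker.1 hx)
    ext
    simpa [g] using this
  have h3 : finrank ℤ (LinearMap.range g) ≤ finrank ℤ K := Submodule.finrank_le _
  omega

theorem finrank_restrict {M Q : Type} [AddCommGroup M] [Group Q]
    (K N : Submodule ℤ M) (hKN : K ≤ N) (g : Multiplicative N →* Q)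
    (hg : ∀ x : N, g (Multiplicative.ofAdd x) = 1 ↔ (x : M) ∈ K) :
    finrank ℤ (Kr g) = finrank ℤ K := by
  have : Kr g = K.comap N.subtype := by
    ext x
    exact hg x
  rw [this]
  exact (Submodule.comapSubtypeEquivOfLe hKN).finrank_eq

theorem finrank_cyclic {M Q : Type} [AddCommGroup M] [Module.Finite ℤ M] [Group Q]
    (f : Multiplicative M →* Q) (hc : IsCyclic f.range) :
    finrank ℤ M ≤ 1 + finrank ℤ (Kr f) := by
  obtain ⟨⟨z, m0, hm0⟩, hz⟩ := hc.exists_generator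
  have h1 := (Kr f).finrank_quotient_add_finrank
  have h2 : finrank ℤ (M ⧸ Kr f) ≤ 1 := by
    apply finrank_le_one ((Kr f).mkQ (Multiplicative.toAdd m0))
    intro w
    obtain ⟨m, rfl⟩ := (Kr f).mkQ_surjective w
    obtain ⟨c, hc⟩ := Subgroup.mem_zpowers_iff.1 (hz ⟨f (Multiplicative.ofAdd m), _, rfl⟩)
    have hc' : z ^ c = f (Multiplicative.ofAdd m) := by simpa using congrArg Subtype.val hc
    refine ⟨c, ?_⟩
    rw [← map_smul, ← sub_eq_zero, ← map_sub, Submodule.mkQ_apply,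
      Submodule.Quotient.mk_eq_zero, mem_Kr, ofAdd_sub, map_div, ofAdd_zsmul, map_zpow,
      ofAdd_toAdd, hm0, hc', div_self']
  omega

/-- abelian subgroups have rank at most `r` -/
def RB (Q : Type) [Group Q] (r : ℕ) : Prop :=
  ∀ (M : Type) [AddCommGroup M] [Module.Finite ℤ M] (f : Multiplicative M →* Q),
    finrank ℤ M ≤ r + finrank ℤ (Kr f)

/-- centralizers of abelian subgroups of rank at least `k` are virtually commutative -/
def CB (Q : Type) [Group Q] (k : ℕ) : Prop :=
  ∀ (M : Type) [AddCommGroup M] [Module.Finite ℤ M] (f : Multiplicative M →* Q) (a b : Q),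
    (∀ m, Commute a (f m)) → (∀ m, Commute b (f m)) → k + finrank ℤ (Kr f) ≤ finrank ℤ M →
    ∃ E : ℕ, 0 < E ∧ Commute (a ^ E) (b ^ E)

theorem RB.of_injective {Q Q' : Type} [Group Q] [Group Q'] {r : ℕ} (h : RB Q' r) (j : Q →* Q')
    (hj : Function.Injective j) : RB Q r := by
  intro M _ _ f
  have : Kr (j.comp f) = Kr f := by
    ext m
    rw [mem_Kr, mem_Kr, MonoidHom.comp_apply, map_eq_one_iff j hj]
  rw [← this]
  exact h M _

theorem CB.of_injective {Q Q' : Type} [Group Q] [Group Q'] {r : ℕ} (h : CB Q' r) (j : Q →* Q')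
    (hj : Function.Injective j) : CB Q r := by
  intro M _ _ f a b ha hb hr
  have : Kr (j.comp f) = Kr f := by
    ext m
    rw [mem_Kr, mem_Kr, MonoidHom.comp_apply, map_eq_one_iff j hj]
  rw [← this] at hr
  obtain ⟨E, hE, hc⟩ := h M (j.comp f) (j a) (j b) (fun m => (ha m).map j) (fun m => (hb m).map j) hr
  refine ⟨E, hE, ?_⟩
  apply hj
  rw [map_mul, map_mul, map_pow, map_pow]
  exact hc.eq

theorem RB.mono {Q : Type} [Group Q] {r s : ℕ} (h : RB Q r) (hrs : r ≤ s) : RB Q s := by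
  intro M _ _ f
  have := h M f
  omega

theorem finrank_prod_aux {Q M : Type} [Group Q] [AddCommGroup M] [Module.Finite ℤ M]
    (f : Multiplicative M →* Multiplicative ℤ × Q) :
    finrank ℤ (Kr ((MonoidHom.snd _ _).comp f)) ≤ 1 + finrank ℤ (Kr f) := by
  set N := Kr ((MonoidHom.snd _ _).comp f)
  let g : Multiplicative N →* Multiplicative ℤ :=
    ((MonoidHom.fst _ _).comp f).comp (AddMonoidHom.toMultiplicative N.subtype.toAddMonoidHom)
  have hKN : Kr f ≤ N := by
    intro m hm
    rw [mem_Kr] at *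
    rw [MonoidHom.comp_apply, hm, map_one]
  rw [← finrank_restrict (Kr f) N hKN g]
  · exact finrank_cyclic g inferInstance
  · rintro ⟨x, hx⟩
    rw [mem_Kr] at hx ⊢
    have e : g (Multiplicative.ofAdd ⟨x, hx⟩) = (f (Multiplicative.ofAdd x)).1 := rfl
    rw [e]
    constructor
    · intro h
      exact Prod.ext h hx
    · intro h
      rw [h]; rfl

theorem RB.prod {Q : Type} [Group Q] {r : ℕ} (h : RB Q r) :
    RB (Multiplicative ℤ × Q) (r + 1) := by
  intro M _ _ f
  have h1 := h M ((MonoidHom.snd _ _).comp f)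
  have h2 := finrank_prod_aux f
  omega

/-- projection to the right factor -/
abbrev pr {H X : Type} [Group H] [MulAction H X] : SP H X →* H := SemidirectProduct.rightHom

theorem eq_inl {H X : Type} [Group H] [MulAction H X] {g : SP H X} (h : pr g = 1) :
    g = SemidirectProduct.inl g.left :=
  SemidirectProduct.ext rfl h

theorem finrank_free_aux {H X M : Type} [Group H] [MulAction H X] [AddCommGroup M]
    [Module.Finite ℤ M] (f : Multiplicative M →* SP H X) :
    finrank ℤ (Kr (pr.comp f)) ≤ 1 + finrank ℤ (Kr f) := by
  set N := Kr (pr.comp f) with hN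
  have hr : ∀ x : N, (f (Multiplicative.ofAdd (x : M))).right = 1 := fun x => x.2
  let g : Multiplicative N →* FreeGroup X :=
    MonoidHom.mk' (fun x => (f (Multiplicative.ofAdd ((Multiplicative.toAdd x : N) : M))).left) (by
      intro x y
      rw [toAdd_mul, Submodule.coe_add, ofAdd_add, map_mul, SemidirectProduct.mul_left, hr,
        map_one, MulAut.one_apply])
  have hKN : Kr f ≤ N := by
    intro m hm
    rw [mem_Kr] at *
    rw [MonoidHom.comp_apply, hm, map_one]
  rw [← finrank_restrict (Kr f) N hKN g]
  · apply finrank_cyclic g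
    apply cyclic_of_comm
    rintro _ ⟨x, rfl⟩ _ ⟨y, rfl⟩
    rw [← map_mul, ← map_mul, mul_comm]
  · rintro ⟨x, hx⟩
    have e : g (Multiplicative.ofAdd ⟨x, hx⟩) = (f (Multiplicative.ofAdd x)).left := rfl
    rw [e, mem_Kr]
    constructor
    · intro h
      exact SemidirectProduct.ext h hx
    · intro h
      rw [h]; rfl

theorem virt {H M : Type} [Group H] [AddCommGroup M] (L : Subgroup H)
    (f : Multiplicative M →* SP H (H ⧸ L)) (f0 : FreeGroup (H ⧸ L)) (hf0 : f0 ≠ 1)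
    (hc : ∀ m, Commute (f m) (SemidirectProduct.inl f0)) :
    ∃ (E : ℕ) (g : H), 0 < E ∧ ∀ m, g⁻¹ * pr (f m) ^ E * g ∈ L := by
  obtain ⟨E, c, T, hE, ⟨x, hx⟩, -, hT⟩ := key (H := H) f0 hf0
  obtain ⟨g, rfl⟩ := QuotientGroup.mk_surjective x
  refine ⟨E, g, hE, fun m => ?_⟩
  have h1 : ((pr (f m) ^ E * g : H) : H ⧸ L) = (g : H ⧸ L) := hT _ (hc m) _ hx
  have h2 := QuotientGroup.eq.1 h1.symm
  rwa [← mul_assoc] at h2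

theorem virt_rank {H M : Type} [Group H] [AddCommGroup M] [Module.Finite ℤ M] (L : Subgroup H)
    {r : ℕ} (hL : RB L r)
    (f : Multiplicative M →* SP H (H ⧸ L)) (E : ℕ) (g : H) (hE : 0 < E)
    (h : ∀ m, g⁻¹ * pr (f m) ^ E * g ∈ L) :
    finrank ℤ M ≤ r + finrank ℤ (Kr (pr.comp f)) := by
  let q : Multiplicative M →* L := MonoidHom.mk' (fun m => ⟨g⁻¹ * pr (f m) ^ E * g, h m⟩) (by
    intro x y
    apply Subtype.ext
    have : pr (f (x * y)) ^ E = pr (f x) ^ E * pr (f y) ^ E := by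
      simp only [← map_pow, ← map_mul, mul_pow]
    simp only [this, Subgroup.coe_mul]
    group)
  have h1 := hL M q
  have h2 : finrank ℤ (Kr q) ≤ finrank ℤ (Kr (pr.comp f)) := by
    apply finrank_le_of_torsion _ _ E hE
    intro x hx
    rw [mem_Kr] at hx ⊢
    have h3 : g⁻¹ * pr (f (Multiplicative.ofAdd x)) ^ E * g = 1 := congrArg Subtype.val hx
    have h4 : g⁻¹ * pr (f (Multiplicative.ofAdd x)) ^ E * g⁻¹⁻¹ = 1 := by rwa [inv_inv]
    rw [conj_eq_one_iff] at h4
    rw [ofAdd_nsmul, map_pow]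
    exact h4
  omega

theorem RB.step {H : Type} [Group H] (L : Subgroup H) {r : ℕ} (hH : RB H (r + 1))
    (hL : RB L r) : RB (SP H (H ⧸ L)) (r + 1) := by
  intro M _ _ f
  by_cases hN : Kr (pr.comp f) ≤ Kr f
  · have h1 := hH M (pr.comp f)
    have h2 := Submodule.finrank_mono hN
    omega
  · obtain ⟨m0, hm0, hm0'⟩ := SetLike.not_le_iff_exists.1 hN
    rw [mem_Kr] at hm0 hm0'
    have e := eq_inl (g := f (Multiplicative.ofAdd m0)) hm0
    obtain ⟨E, g, hE, h⟩ := virt L f (f (Multiplicative.ofAdd m0)).left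
      (fun h => hm0' (by rw [e, h, map_one])) (fun m => by
        rw [← e, Commute, SemiconjBy, ← map_mul, ← map_mul, mul_comm])
    have h1 := virt_rank L hL f E g hE h
    have h2 := finrank_free_aux f
    omega

theorem CB.step {Q : Type} [Group Q] (L : Subgroup (Multiplicative ℤ × Q)) {k : ℕ} (hQ : CB Q k)
    (hL : RB L k) (hL1 : ∀ x ∈ L, x.1 = 1) :
    CB (SP (Multiplicative ℤ × Q) ((Multiplicative ℤ × Q) ⧸ L)) (k + 1) := by
  intro M _ _ f a b ha hb hr
  have hfr := finrank_free_aux f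
  have hsub : Kr (pr.comp f) ≤ Kr ((MonoidHom.snd _ _).comp (pr.comp f)) := by
    intro m hm
    rw [mem_Kr] at *
    rw [MonoidHom.comp_apply, hm, map_one]
  have hab : k + finrank ℤ (Kr ((MonoidHom.snd _ _).comp (pr.comp f))) ≤ finrank ℤ M →
      ∃ E : ℕ, 0 < E ∧ Commute (pr (a ^ E)) (pr (b ^ E)) := by
    intro h
    obtain ⟨E, hE, hc⟩ := hQ M ((MonoidHom.snd _ _).comp (pr.comp f)) (pr a).2 (pr b).2
      (fun m => congrArg Prod.snd ((ha m).map pr).eq)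
      (fun m => congrArg Prod.snd ((hb m).map pr).eq) h
    refine ⟨E, hE, ?_⟩
    rw [map_pow, map_pow]
    exact Prod.ext (mul_comm _ _) hc.eq
  by_cases hF : ∃ f0 : FreeGroup ((Multiplicative ℤ × Q) ⧸ L), f0 ≠ 1 ∧
      ∀ m, Commute (f m) (SemidirectProduct.inl f0)
  · obtain ⟨f0, hf0, hc0⟩ := hF
    obtain ⟨E, g, hE, h⟩ := virt L f f0 hf0 hc0
    have h1 := virt_rank L hL f E g hE h
    have h2 : ¬ Kr (pr.comp f) ≤ Kr f := by
      intro h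
      have := Submodule.finrank_mono h
      omega
    obtain ⟨m0, hm0, hm0'⟩ := SetLike.not_le_iff_exists.1 h2
    rw [mem_Kr] at hm0 hm0'
    have e := eq_inl (g := f (Multiplicative.ofAdd m0)) hm0
    have h3 : Kr ((MonoidHom.snd _ _).comp (pr.comp f)) ≤ Kr (pr.comp f) := by
      intro m hm
      rw [mem_Kr] at *
      have h4 := hL1 _ (h (Multiplicative.ofAdd m))
      have h5 : (pr (f (Multiplicative.ofAdd m))).1 ^ E = 1 := by
        have h6 : (g.1)⁻¹ * (pr (f (Multiplicative.ofAdd m))).1 ^ E * g.1 = 1 := h4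
        rw [mul_comm, mul_inv_cancel_left] at h6
        exact h6
      exact Prod.ext ((pow_eq_one_iff_left hE.ne').1 h5) hm
    have h4 := Submodule.finrank_mono h3
    obtain ⟨E', hE', hc⟩ := hab (by omega)
    obtain ⟨E2, hE2, hc2⟩ := comm_pows (f (Multiplicative.ofAdd m0)).left
      (fun h => hm0' (by rw [e, h, map_one])) (a ^ E') (b ^ E')
      (by rw [← e]; exact (ha _).pow_left _) (by rw [← e]; exact (hb _).pow_left _) hc
    refine ⟨E' * E2, Nat.mul_pos hE' hE2, ?_⟩
    rwa [pow_mul, pow_mul]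
  · have hF' : ∀ g, pr g = 1 → (∀ m, Commute (f m) g) → g = 1 := by
      intro g hg hm
      by_contra hne
      have e := eq_inl hg
      exact hF ⟨g.left, fun h => hne (by rw [e, h, map_one]), fun m => by rw [← e]; exact hm m⟩
    have h1 : Kr (pr.comp f) ≤ Kr f := by
      intro m hm
      rw [mem_Kr] at *
      apply hF' _ hm
      intro m'
      rw [Commute, SemiconjBy, ← map_mul, ← map_mul, mul_comm]
    have h2 := Submodule.finrank_mono h1
    have h3 := finrank_prod_aux (pr.comp f)
    obtain ⟨E, hE, hc⟩ := hab (by omega)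
    refine ⟨E, hE, ?_⟩
    rw [← commutatorElement_eq_one_iff_commute]
    apply hF'
    · rw [map_commutatorElement, commutatorElement_eq_one_iff_commute]
      exact hc
    · intro m
      have ha' := ((ha m).symm.pow_right E)
      have hb' := ((hb m).symm.pow_right E)
      rw [commutatorElement_def]
      exact ((ha'.mul_right hb').mul_right ha'.inv_right).mul_right hb'.inv_right

/-! ### The groups `G(Γ)` -/

/-- the generator -/
abbrev vt {V : Type} (G : SimpleGraph V) (v : V) : GG G := PresentedGroup.of v

theorem gg_comm {V : Type} (G : SimpleGraph V) {u v : V} (huv : ¬ G.Adj u v) :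
    Commute (vt G u) (vt G v) := by
  by_cases h : u = v
  · rw [h]
  · have h1 : PresentedGroup.mk (raagRels Gᶜ) (FreeGroup.of u * FreeGroup.of v *
      (FreeGroup.of u)⁻¹ * (FreeGroup.of v)⁻¹) = 1 := by
      apply (QuotientGroup.eq_one_iff _).2
      exact Subgroup.subset_normalClosure ⟨u, v, (SimpleGraph.compl_adj _ _ _).2 ⟨h, huv⟩, rfl⟩
    rw [← commutatorElement_eq_one_iff_commute, commutatorElement_def]
    rw [map_mul, map_mul, map_mul, map_inv, map_inv] at h1
    exact h1

theorem exists_lift {V Q : Type} [Group Q] (G : SimpleGraph V) (u : V → Q)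
    (h : ∀ i j, i ≠ j → ¬ G.Adj i j → Commute (u i) (u j)) :
    ∃ f : GG G →* Q, ∀ v, f (vt G v) = u v := by
  refine ⟨PresentedGroup.toGroup (f := u) ?_, fun v => PresentedGroup.toGroup.of _⟩
  rintro _ ⟨a, b, hab, rfl⟩
  have := h a b hab.ne ((SimpleGraph.compl_adj _ _ _).1 hab).2
  simp only [map_mul, map_inv, FreeGroup.lift_apply_of]
  rw [← commutatorElement_def, commutatorElement_eq_one_iff_commute]
  exact this

/-- path groups -/
abbrev PG (n : ℕ) : Type := GG (pathGraph n)

/-- the generators of path groups -/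
abbrev pv {n : ℕ} (i : Fin n) : PG n := vt (pathGraph n) i

theorem pv_comm {n : ℕ} {i j : Fin n} (h1 : i.val + 1 ≠ j.val) (h2 : j.val + 1 ≠ i.val) :
    Commute (pv i) (pv j) := by
  apply gg_comm
  rw [pathGraph_adj]
  tauto

theorem pg_lift {n : ℕ} {Q : Type} [Group Q] (u : Fin n → Q)
    (h : ∀ i j : Fin n, i.val + 1 < j.val → Commute (u i) (u j)) :
    ∃ f : PG n →* Q, ∀ v, f (pv v) = u v := by
  apply exists_lift
  intro i j hij hadj
  rw [pathGraph_adj] at hadj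
  have : i.val ≠ j.val := fun h => hij (Fin.ext h)
  rcases lt_or_gt_of_ne this with h1 | h1
  · exact h i j (by omega)
  · exact (h j i (by omega)).symm

/-- the link subgroup -/
def LL (n : ℕ) : Subgroup (Multiplicative ℤ × PG n) :=
  Subgroup.closure {x | ∃ i : Fin n, 1 ≤ i.val ∧ x = (1, pv i)}

theorem LL_fst {n : ℕ} : ∀ x ∈ LL n, x.1 = 1 := by
  have : LL n ≤ (MonoidHom.fst (Multiplicative ℤ) (PG n)).ker := by
    rw [LL, Subgroup.closure_le]
    rintro _ ⟨i, -, rfl⟩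
    rfl
  exact fun x hx => this hx

theorem LL_zero : RB (LL 0) 0 := by
  intro M _ _ f
  have h : LL 0 = ⊥ := by
    rw [eq_bot_iff, LL, Subgroup.closure_le]
    rintro _ ⟨i, -, rfl⟩
    exact i.elim0
  have : Kr f = ⊤ := by
    rw [eq_top_iff]
    intro m _
    rw [mem_Kr]
    apply Subtype.ext
    have h1 := (f (Multiplicative.ofAdd m)).2
    have h2 : ((f (Multiplicative.ofAdd m) : LL 0) : Multiplicative ℤ × PG 0) ∈
        (⊥ : Subgroup (Multiplicative ℤ × PG 0)) := h.le h1
    exact Subgroup.mem_bot.1 h2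
  rw [this, finrank_top]
  omega

theorem LL_succ {n r : ℕ} (h : RB (PG n) r) : RB (LL (n + 1)) r := by
  obtain ⟨dr, hdr⟩ := pg_lift (n := n + 1) (Q := PG n) (Fin.cases 1 (fun i => pv i)) (by
    intro i j hij
    induction i using Fin.cases with
    | zero => exact Commute.one_left _
    | succ i =>
      induction j using Fin.cases with
      | zero => simp at hij
      | succ j =>
        simp only [Fin.val_succ] at hij
        exact pv_comm (i := i) (j := j) (by omega) (by omega))
  obtain ⟨sh, hsh⟩ := pg_lift (n := n) (Q := PG (n + 1)) (fun i => pv i.succ) (by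
    intro i j hij
    apply pv_comm <;> simp only [Fin.val_succ] <;> omega)
  have key : LL (n + 1) ≤ ((MonoidHom.inr (Multiplicative ℤ) (PG (n + 1))).comp
      (sh.comp (dr.comp (MonoidHom.snd _ _)))).eqLocus (MonoidHom.id _) := by
    rw [LL, Subgroup.closure_le]
    rintro _ ⟨i, hi, rfl⟩
    induction i using Fin.cases with
    | zero => simp at hi
    | succ i =>
      change ((1 : Multiplicative ℤ), sh (dr (pv i.succ))) = (1, pv i.succ)
      rw [hdr, Fin.cases_succ, hsh]
  refine h.of_injective ((dr.comp (MonoidHom.snd _ _)).comp (LL (n + 1)).subtype) ?_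
  rintro ⟨x, hx⟩ ⟨y, hy⟩ hxy
  apply Subtype.ext
  have hx' : ((1 : Multiplicative ℤ), sh (dr x.2)) = x := key hx
  have hy' : ((1 : Multiplicative ℤ), sh (dr y.2)) = y := key hy
  have hxy' : dr x.2 = dr y.2 := hxy
  change x = y
  rw [← hx', ← hy', hxy']

theorem exists_embed (n : ℕ) : ∃ φ : PG (n + 2) →*
    SP (Multiplicative ℤ × PG n) ((Multiplicative ℤ × PG n) ⧸ LL n), Function.Injective φ := by
  let u : Fin (n + 2) → SP (Multiplicative ℤ × PG n) ((Multiplicative ℤ × PG n) ⧸ LL n) :=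
    Fin.cases (SemidirectProduct.inr (Multiplicative.ofAdd 1, 1))
      (Fin.cases (SemidirectProduct.inl (FreeGroup.of (QuotientGroup.mk 1)))
        (fun i => SemidirectProduct.inr (1, pv i)))
  obtain ⟨φ, hφ⟩ := pg_lift u (by
    intro i j hij
    induction j using Fin.cases with
    | zero => simp at hij
    | succ j =>
    induction j using Fin.cases with
    | zero => simp at hij
    | succ j =>
    induction i using Fin.cases with
    | zero =>
      apply Commute.map
      exact Prod.ext (mul_comm _ _) ((Commute.one_left _).eq)
    | succ i =>
    induction i using Fin.cases with
    | zero =>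
      have hj : 1 ≤ j.val := by
        simp only [Fin.val_succ, Fin.val_zero] at hij
        omega
      have hfix : act _ ((Multiplicative ℤ × PG n) ⧸ LL n) ((1 : Multiplicative ℤ), pv j)
          (FreeGroup.of (QuotientGroup.mk 1)) = FreeGroup.of (QuotientGroup.mk 1) := by
        rw [act_of]
        congr 1
        apply QuotientGroup.eq.2
        change (((1 : Multiplicative ℤ), pv j) * 1)⁻¹ * 1 ∈ LL n
        rw [mul_one, mul_one, inv_mem_iff]
        exact Subgroup.subset_closure ⟨j, hj, rfl⟩
      symm
      change SemidirectProduct.inr ((1 : Multiplicative ℤ), pv j) *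
        SemidirectProduct.inl (FreeGroup.of (QuotientGroup.mk 1)) =
        SemidirectProduct.inl (FreeGroup.of (QuotientGroup.mk 1)) *
        SemidirectProduct.inr ((1 : Multiplicative ℤ), pv j)
      apply SemidirectProduct.ext
      · simp only [SemidirectProduct.mul_left, SemidirectProduct.left_inr,
          SemidirectProduct.right_inr, SemidirectProduct.left_inl, SemidirectProduct.right_inl,
          hfix, map_one, one_mul, mul_one]
      · simp
    | succ i =>
      apply Commute.map
      refine Prod.ext (mul_comm _ _) ?_
      simp only [Fin.val_succ] at hij
      exact (pv_comm (i := i) (j := j) (by omega) (by omega)).eq)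
  obtain ⟨sh, hsh⟩ := pg_lift (n := n) (Q := PG (n + 2)) (fun i => pv i.succ.succ) (by
    intro i j hij
    apply pv_comm <;> simp only [Fin.val_succ] <;> omega)
  have hcent : ∀ g, Commute (pv (0 : Fin (n + 2))) (sh g) := by
    intro g
    have : sh g ∈ Subgroup.centralizer {pv (0 : Fin (n + 2))} := by
      apply PresentedGroup.generated_by _
        ((Subgroup.centralizer {pv (0 : Fin (n + 2))}).comap sh)
      intro j
      rw [Subgroup.mem_comap, Subgroup.mem_centralizer_singleton_iff]
      rw [show sh (PresentedGroup.of j) = _ from hsh j]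
      exact pv_comm (by simp) (by simp)
    exact (Subgroup.mem_centralizer_singleton_iff.1 this).symm
  let fg : Multiplicative ℤ × PG n →* PG (n + 2) :=
    MonoidHom.noncommCoprod (zpowersHom _ (pv 0)) sh (by
      intro z g
      rw [zpowersHom_apply]
      exact (hcent g).zpow_left _)
  have hL : ∀ x ∈ LL n, Commute (fg x) (pv 1) := by
    have : LL n ≤ (Subgroup.centralizer {pv (1 : Fin (n + 2))}).comap fg := by
      rw [LL, Subgroup.closure_le]
      rintro _ ⟨i, hi, rfl⟩
      rw [SetLike.mem_coe, Subgroup.mem_comap, Subgroup.mem_centralizer_singleton_iff]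
      have : fg (1, pv i) = pv i.succ.succ := by
        simp only [fg, MonoidHom.noncommCoprod_apply, map_one, one_mul, hsh]
      rw [this]
      apply (pv_comm _ _).eq <;> simp <;> omega
    intro x hx
    exact Subgroup.mem_centralizer_singleton_iff.1 (this hx)
  let w : (Multiplicative ℤ × PG n) ⧸ LL n → PG (n + 2) :=
    Quotient.lift (fun h => fg h * pv 1 * (fg h)⁻¹) (by
      intro a b hab
      have hab' : a⁻¹ * b ∈ LL n := QuotientGroup.leftRel_apply.1 hab
      have h1 := (hL _ hab').eq
      have h2 : fg b = fg a * fg (a⁻¹ * b) := by rw [← map_mul, mul_inv_cancel_left]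
      change fg a * pv 1 * (fg a)⁻¹ = fg b * pv 1 * (fg b)⁻¹
      rw [h2, mul_inv_rev, mul_assoc (fg a) (fg (a⁻¹ * b)), h1]
      group)
  have hw : ∀ h, w (QuotientGroup.mk h) = fg h * pv 1 * (fg h)⁻¹ := fun h => rfl
  let ψ : SP (Multiplicative ℤ × PG n) ((Multiplicative ℤ × PG n) ⧸ LL n) →* PG (n + 2) :=
    SemidirectProduct.lift (FreeGroup.lift w) fg (by
      intro h
      ext x
      obtain ⟨x, rfl⟩ := QuotientGroup.mk_surjective x
      simp only [MonoidHom.comp_apply, MulEquiv.coe_toMonoidHom, act_of, FreeGroup.lift_apply_of,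
        MulAut.conj_apply]
      rw [show h • (QuotientGroup.mk x : (Multiplicative ℤ × PG n) ⧸ LL n)
        = QuotientGroup.mk (h * x) from rfl, hw, hw, map_mul]
      group)
  refine ⟨φ, Function.LeftInverse.injective (g := ψ) ?_⟩
  have : ψ.comp φ = MonoidHom.id _ := by
    apply PresentedGroup.ext
    intro i
    rw [MonoidHom.comp_apply, MonoidHom.id_apply, show φ (PresentedGroup.of i) = _ from hφ i]
    induction i using Fin.cases with
    | zero =>
      change ψ (SemidirectProduct.inr (Multiplicative.ofAdd 1, 1)) = _
      simp only [ψ, SemidirectProduct.lift_inr]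
      simp [fg]
    | succ i =>
    induction i using Fin.cases with
    | zero =>
      change ψ (SemidirectProduct.inl (FreeGroup.of (QuotientGroup.mk 1))) = _
      simp only [ψ, SemidirectProduct.lift_inl, FreeGroup.lift_apply_of, hw]
      simp
    | succ i =>
      change ψ (SemidirectProduct.inr (1, pv i)) = _
      simp only [ψ, SemidirectProduct.lift_inr]
      simp only [fg, MonoidHom.noncommCoprod_apply, map_one, one_mul, hsh]
  exact fun x => DFunLike.congr_fun this x

theorem PG_cyclic {n : ℕ} (hn : n ≤ 1) : IsCyclic (PG n) := by
  have : IsCyclic (FreeGroup (Fin n)) := isCyclic_freeGroup (fun a b => Fin.ext (by omega))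
  exact isCyclic_of_surjective (PresentedGroup.mk _) (PresentedGroup.mk_surjective _)

theorem PG_zero : RB (PG 0) 0 := by
  intro M _ _ f
  have : Kr f = ⊤ := by
    rw [eq_top_iff]
    intro m _
    rw [mem_Kr]
    obtain ⟨x, hx⟩ := PresentedGroup.mk_surjective _ (f (Multiplicative.ofAdd m))
    rw [← hx, Subsingleton.elim x 1, map_one]
  rw [this, finrank_top]
  omega

theorem PG_one : RB (PG 1) 1 := by
  intro M _ _ f
  have := PG_cyclic (n := 1) le_rfl
  exact finrank_cyclic f inferInstance

theorem PG_rank (n : ℕ) : RB (PG n) ((n + 1) / 2) := by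
  induction n using Nat.strong_induction_on with
  | _ n ih =>
  match n, ih with
  | 0, _ => exact PG_zero
  | 1, _ => exact PG_one
  | n + 2, ih =>
    obtain ⟨φ, hφ⟩ := exists_embed n
    have h1 := ih n (by omega)
    have h2 : RB (LL n) ((n + 1) / 2) := by
      cases n with
      | zero => exact LL_zero
      | succ j => exact (LL_succ (ih j (by omega))).mono (by omega)
    have h3 := (RB.step (LL n) h1.prod h2).of_injective φ hφ
    exact h3.mono (by omega)

theorem PG_cent (n k : ℕ) (h : n ≤ 2 * k + 1) : CB (PG n) k := by
  induction n using Nat.strong_induction_on generalizing k with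
  | _ n ih =>
  by_cases hn : n ≤ 1
  · have := PG_cyclic hn
    intro M _ _ f a b _ _ _
    refine ⟨1, one_pos, ?_⟩
    obtain ⟨g, hg⟩ := this.exists_generator
    obtain ⟨i, rfl⟩ := Subgroup.mem_zpowers_iff.1 (hg a)
    obtain ⟨j, rfl⟩ := Subgroup.mem_zpowers_iff.1 (hg b)
    exact (((Commute.refl g).zpow_left i).zpow_right j).pow_pow 1 1
  · obtain ⟨n, rfl⟩ : ∃ n', n = n' + 2 := ⟨n - 2, by omega⟩
    obtain ⟨k, rfl⟩ : ∃ k', k = k' + 1 := ⟨k - 1, by omega⟩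
    obtain ⟨φ, hφ⟩ := exists_embed n
    have h1 := ih n (by omega) k (by omega)
    have h2 : RB (LL n) k := by
      cases n with
      | zero => exact LL_zero.mono (by omega)
      | succ j => exact (LL_succ (PG_rank j)).mono (by omega)
    exact (CB.step (LL n) h1 h2 LL_fst).of_injective φ hφ

/-! ### Abelian subgroups from independent sets -/

theorem exists_free_abelian {V : Type} (G : SimpleGraph V) {k : ℕ} (c : Fin k → V)
    (hinj : Function.Injective c) (hc : ∀ i j, ¬ G.Adj (c i) (c j)) :
    ∃ f : Multiplicative (Fin k → ℤ) →* GG G, Function.Injective f ∧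
      ∀ a : GG G, (∀ i, Commute a (vt G (c i))) → ∀ m, Commute a (f m) := by
  classical
  let f0 : (Fin k → Multiplicative ℤ) →* GG G :=
    MonoidHom.noncommPiCoprod (fun i => zpowersHom _ (vt G (c i))) (by
      intro i j _ x y
      simp only [zpowersHom_apply]
      exact ((gg_comm G (hc i j)).zpow_left _).zpow_right _)
  have hf0 : ∀ i x, f0 (Pi.mulSingle i x) = vt G (c i) ^ (Multiplicative.toAdd x) := by
    intro i x
    exact MonoidHom.noncommPiCoprod_mulSingle (N := fun _ : Fin k => Multiplicative ℤ) _ i x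
  refine ⟨f0.comp (MulEquiv.piMultiplicative (fun _ : Fin k => ℤ)).toMonoidHom, ?_, ?_⟩
  · have hinj0 : Function.Injective f0 := by
      rw [injective_iff_map_eq_one]
      intro x hx
      funext j
      obtain ⟨χ, hχ⟩ := exists_lift (Q := Multiplicative ℤ) G
        (fun v => if v = c j then Multiplicative.ofAdd 1 else 1) (fun _ _ _ _ => mul_comm _ _)
      have e : χ.comp f0 = Pi.evalMonoidHom _ j := by
        apply MonoidHom.pi_ext
        intro i y
        rw [MonoidHom.comp_apply, hf0, map_zpow, hχ]
        by_cases hij : i = j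
        · subst hij
          simp [← ofAdd_zsmul]
        · have : c i ≠ c j := fun h => hij (hinj h)
          simp [this, Pi.mulSingle_eq_of_ne (Ne.symm hij)]
      have e2 := DFunLike.congr_fun e x
      rw [MonoidHom.comp_apply, hx, map_one] at e2
      exact e2.symm
    exact hinj0.comp (MulEquiv.piMultiplicative (fun _ : Fin k => ℤ)).injective
  · intro a ha m
    have e : (MulAut.conj a).toMonoidHom.comp f0 = f0 := by
      apply MonoidHom.pi_ext
      intro i y
      rw [MonoidHom.comp_apply, hf0]
      change a * _ * a⁻¹ = _
      rw [((ha i).zpow_right _).eq, mul_inv_cancel_right]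
    have e2 : a * f0 _ * a⁻¹ = f0 _ := DFunLike.congr_fun e (MulEquiv.piMultiplicative _ m)
    rw [mul_inv_eq_iff_eq_mul] at e2
    exact e2

theorem Kr_eq_bot {M Q : Type} [AddCommGroup M] [Group Q] (f : Multiplicative M →* Q)
    (hf : Function.Injective f) : Kr f = ⊥ := by
  rw [eq_bot_iff]
  intro m hm
  rw [mem_Kr, map_eq_one_iff f hf] at hm
  exact hm

theorem cycle_adj {m : ℕ} {i j : Fin m} (hij : i.val < j.val) (h : (cycleGraph m).Adj i j) :
    j.val = i.val + 1 ∨ (i.val = 0 ∧ j.val + 1 = m) := by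
  rw [cycleGraph_adj'] at h
  rw [Fin.coe_sub_iff_lt.2 (show i < j from hij), Fin.coe_sub_iff_le.2 (show i ≤ j from hij.le)] at h
  have := i.2
  have := j.2
  omega

end PF

theorem statement8 (m n : ℕ) (hm : 5 ≤ m) (hn : 0 < n)
    (h : ∃ φ : GG (cycleGraph m) →* GG (pathGraph n), Function.Injective φ) :
    m - 1 ≤ n := by
  obtain ⟨φ, hφ⟩ := h
  by_contra hlt
  push Not at hlt
  have nadj : ∀ i j : Fin m, i.val + 1 < j.val → ¬ (i.val = 0 ∧ j.val + 1 = m) →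
      ¬ (cycleGraph m).Adj i j := by
    intro i j h1 h2 h3
    have := PF.cycle_adj (by omega) h3
    omega
  rcases Nat.even_or_odd' m with ⟨d, hd | hd⟩
  · obtain ⟨f, hf, -⟩ := PF.exists_free_abelian (cycleGraph m) (k := d)
      (fun i => ⟨2 * i.val, by omega⟩)
      (by intro i j hij; simp only [Fin.mk.injEq] at hij; exact Fin.ext (by omega))
      (by
        intro i j
        rcases lt_trichotomy i.val j.val with hij | hij | hij
        · exact nadj _ _ (by simp only; omega) (by simp only; omega)
        · rw [Fin.ext hij]; exact (cycleGraph m).loopless.irrefl _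
        · intro hadj
          exact nadj _ _ (by simp only; omega) (by simp only; omega) hadj.symm)
    have h1 := PF.PG_rank n _ (φ.comp f)
    rw [PF.Kr_eq_bot _ (hφ.comp hf), finrank_bot, Module.finrank_fin_fun] at h1
    omega
  · obtain ⟨f, hf, hcf⟩ := PF.exists_free_abelian (cycleGraph m) (k := d - 1)
      (fun i => ⟨2 * i.val + 3, by omega⟩)
      (by intro i j hij; simp only [Fin.mk.injEq] at hij; exact Fin.ext (by omega))
      (by
        intro i j
        rcases lt_trichotomy i.val j.val with hij | hij | hij
        · exact nadj _ _ (by simp only; omega) (by simp only; omega)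
        · rw [Fin.ext hij]; exact (cycleGraph m).loopless.irrefl _
        · intro hadj
          exact nadj _ _ (by simp only; omega) (by simp only; omega) hadj.symm)
    set v0 : Fin m := ⟨0, by omega⟩ with hv0
    set v1 : Fin m := ⟨1, by omega⟩ with hv1
    have hadj01 : (cycleGraph m).Adj v0 v1 := by
      rw [cycleGraph_adj', Fin.coe_sub_iff_le.2 (show v0 ≤ v1 from Nat.zero_le _)]
      right; rfl
    have ha := hcf (PF.vt _ v0) (fun i => PF.gg_comm _
      (nadj _ _ (by simp only [hv0]; omega) (by simp only [hv0]; omega)))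
    have hb := hcf (PF.vt _ v1) (fun i => PF.gg_comm _
      (nadj _ _ (by simp only [hv1]; omega) (by simp only [hv1]; omega)))
    obtain ⟨E, hE, hc⟩ := PF.PG_cent n (d - 1) (by omega) _ (φ.comp f) _ _
      (fun m => (ha m).map φ) (fun m => (hb m).map φ) (by
        rw [PF.Kr_eq_bot _ (hφ.comp hf), finrank_bot, Module.finrank_fin_fun]
        omega)
    have hc' : Commute (PF.vt (cycleGraph m) v0 ^ E) (PF.vt (cycleGraph m) v1 ^ E) := by
      apply hφ
      rw [map_mul, map_mul, map_pow, map_pow]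
      exact hc.eq
    have hne : v1 ≠ v0 := hadj01.ne'
    obtain ⟨χ, hχ⟩ := PF.exists_lift (Q := FreeGroup Bool) (cycleGraph m)
      (fun v => if v = v0 then FreeGroup.of true else if v = v1 then FreeGroup.of false else 1) (by
        intro i j hij hadj
        by_cases hi0 : i = v0
        · by_cases hj1 : j = v1
          · subst hi0 hj1
            exact absurd hadj01 hadj
          · simp [hi0 ▸ hij.symm, hj1]
        · by_cases hi1 : i = v1
          · by_cases hj0 : j = v0
            · rw [hi1, hj0] at hadj
              exact absurd hadj01.symm hadj
            · simp [hi1 ▸ hij.symm, hj0]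
          · simp [hi0, hi1])
    have h2 := hc'.map χ
    rw [map_pow, map_pow, hχ, hχ, if_pos rfl, if_neg hne, if_pos rfl] at h2
    have hE' : (E : ℤ) ≠ 0 := by exact_mod_cast hE.ne'
    rw [← zpow_natCast, ← zpow_natCast] at h2
    have h3 := PF.comm_of_comm_zpow hE' h2
    have h4 := PF.comm_of_comm_zpow hE' h3.symm
    have := PF.of_comm h4.eq
    simp at this
end

section
/- For every finite simple graph Λ, there exists a finite simple graph T such that T is a tree, every vertex of T has degree at most 3, and there is an injective group homomorphism from G(Λ) into G(T). -/
open SimpleGraph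

namespace AntiTree

/-- The standard generator of `G(Γ)`. -/
def gen {V : Type} (Γ : SimpleGraph V) (v : V) : GG Γ := PresentedGroup.of v

theorem gen_commute {V : Type} {Γ : SimpleGraph V} {u v : V} (h : ¬ Γ.Adj u v) :
    Commute (gen Γ u) (gen Γ v) := by
  by_cases huv : u = v
  · subst huv; exact Commute.refl _
  · have hmem : (FreeGroup.of u * FreeGroup.of v * (FreeGroup.of u)⁻¹ * (FreeGroup.of v)⁻¹ :
        FreeGroup V) ∈ raagRels Γᶜ := ⟨u, v, by simp [huv, h], rfl⟩
    have := PresentedGroup.one_of_mem hmem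
    simp only [map_mul, map_inv] at this
    have h2 := mul_inv_eq_one.mp this
    exact mul_inv_eq_iff_eq_mul.mp h2

/-- Universal property of `G(Γ)`. -/
def glift {V : Type} (Γ : SimpleGraph V) {H : Type} [Group H] (f : V → H)
    (h : ∀ u v, ¬ Γ.Adj u v → Commute (f u) (f v)) : GG Γ →* H :=
  PresentedGroup.toGroup (f := f) (by
    rintro r ⟨u, v, huv, rfl⟩
    have := h u v ((SimpleGraph.compl_adj _ _ _).mp huv).2
    simp only [map_mul, map_inv, FreeGroup.lift_apply_of]
    rw [this.eq]; group)

@[simp] theorem glift_gen {V : Type} (Γ : SimpleGraph V) {H : Type} [Group H] (f : V → H)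
    (h : ∀ u v, ¬ Γ.Adj u v → Commute (f u) (f v)) (v : V) : glift Γ f h (gen Γ v) = f v :=
  PresentedGroup.toGroup.of _

theorem ghom_ext {V : Type} {Γ : SimpleGraph V} {H : Type} [Group H] {f g : GG Γ →* H}
    (h : ∀ v, f (gen Γ v) = g (gen Γ v)) : f = g :=
  PresentedGroup.ext h

/-- The standard parabolic subgroup generated by a set of vertices. -/
def par {V : Type} (Γ : SimpleGraph V) (A : Set V) : Subgroup (GG Γ) :=
  Subgroup.closure (gen Γ '' A)

theorem gen_mem_par {V : Type} {Γ : SimpleGraph V} {A : Set V} {v : V} (h : v ∈ A) :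
    gen Γ v ∈ par Γ A := Subgroup.subset_closure ⟨v, h, rfl⟩

theorem par_univ {V : Type} (Γ : SimpleGraph V) (g : GG Γ) : g ∈ par Γ Set.univ := by
  have := PresentedGroup.closure_range_of (raagRels Γᶜ)
  unfold par
  rw [Set.image_univ]
  change g ∈ Subgroup.closure (Set.range (PresentedGroup.of (rels := raagRels Γᶜ)))
  rw [this]; trivial

theorem par_mono {V : Type} {Γ : SimpleGraph V} {A B : Set V} (h : A ⊆ B) :
    par Γ A ≤ par Γ B := Subgroup.closure_mono (Set.image_mono h)

theorem map_mem_of_par {V : Type} {Γ : SimpleGraph V} {A : Set V} {H : Type} [Group H]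
    (f : GG Γ →* H) (K : Subgroup H) (h : ∀ v ∈ A, f (gen Γ v) ∈ K) {g : GG Γ}
    (hg : g ∈ par Γ A) : f g ∈ K := by
  have : par Γ A ≤ K.comap f := by
    unfold par
    rw [Subgroup.closure_le]
    rintro _ ⟨v, hv, rfl⟩
    exact h v hv
  exact this hg

theorem map_mem_all {V : Type} {Γ : SimpleGraph V} {H : Type} [Group H]
    (f : GG Γ →* H) (K : Subgroup H) (h : ∀ v, f (gen Γ v) ∈ K) (g : GG Γ) : f g ∈ K :=
  map_mem_of_par f K (fun v _ => h v) (par_univ Γ g)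

theorem map_commute_of_par {V : Type} {Γ : SimpleGraph V} {A : Set V} {H : Type} [Group H]
    (f : GG Γ →* H) (x : H) (h : ∀ v ∈ A, Commute x (f (gen Γ v))) {g : GG Γ}
    (hg : g ∈ par Γ A) : Commute x (f g) := by
  have := map_mem_of_par f (Subgroup.centralizer {x}) (fun v hv => by
    rw [Subgroup.mem_centralizer_singleton_iff]; exact (h v hv).symm.eq) hg
  rw [Subgroup.mem_centralizer_singleton_iff] at this
  exact this.symm

open Classical in
/-- The retraction onto a parabolic subgroup. -/
noncomputable def ret {V : Type} (Γ : SimpleGraph V) (A : Set V) : GG Γ →* GG Γ :=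
  glift Γ (fun v => if v ∈ A then gen Γ v else 1) (by
    intro u v h
    split_ifs
    · exact gen_commute h
    · exact Commute.one_right _
    · exact Commute.one_left _
    · exact Commute.one_left _)

theorem par_inter {V : Type} {Γ : SimpleGraph V} {A B : Set V} {g : GG Γ}
    (hA : g ∈ par Γ A) (hB : g ∈ par Γ B) : g ∈ par Γ (A ∩ B) := by
  have h1 : (ret Γ A) g ∈ par Γ (A ∩ B) := by
    refine map_mem_of_par _ _ ?_ hB
    intro v hv
    simp only [ret, glift_gen]
    split_ifs with h
    · exact gen_mem_par ⟨h, hv⟩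
    · exact one_mem _
  have h2 : (ret Γ A) g = g := by
    have : (ret Γ A) g * g⁻¹ = 1 := by
      have hle : par Γ A ≤ (ret Γ A).eqLocus (MonoidHom.id _) := by
        unfold par
        rw [Subgroup.closure_le]
        rintro _ ⟨v, hv, rfl⟩
        change ret Γ A (gen Γ v) = gen Γ v
        simp [ret, hv]
      have := hle hA
      change ret Γ A g = g at this
      rw [this]; group
    exact mul_inv_eq_one.mp this
  rwa [h2] at h1

/-! ### One-vertex extensions and HNN extensions -/

/-- `Γ` on `V ⊕ Unit` extends `Γ'` by a vertex with neighbour set `S`. -/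
structure Ext {V : Type} (Γ : SimpleGraph (V ⊕ Unit)) (Γ' : SimpleGraph V) (S : Set V) : Prop where
  ll : ∀ u v, Γ.Adj (Sum.inl u) (Sum.inl v) ↔ Γ'.Adj u v
  rl : ∀ v, Γ.Adj (Sum.inr ()) (Sum.inl v) ↔ v ∈ S

abbrev HN {V : Type} (Γ' : SimpleGraph V) (S : Set V) : Type :=
  HNNExtension (GG Γ') (par Γ' Sᶜ) (par Γ' Sᶜ) (MulEquiv.refl _)

section ext
variable {V : Type} {Γ : SimpleGraph (V ⊕ Unit)} {Γ' : SimpleGraph V} {S : Set V}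

theorem hn_commute {g : GG Γ'} (hg : g ∈ par Γ' Sᶜ) :
    Commute (HNNExtension.t : HN Γ' S) (HNNExtension.of g) := by
  have := HNNExtension.t_mul_of (φ := MulEquiv.refl (par Γ' Sᶜ)) ⟨g, hg⟩
  exact this

/-- Inclusion of the base. -/
def inc (E : Ext Γ Γ' S) : GG Γ' →* GG Γ :=
  glift Γ' (fun v => gen Γ (Sum.inl v)) (fun u v h => gen_commute (by rwa [E.ll]))

@[simp] theorem inc_gen (E : Ext Γ Γ' S) (v : V) : inc E (gen Γ' v) = gen Γ (Sum.inl v) := by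
  simp [inc]

/-- Retraction to the base. -/
def kil (E : Ext Γ Γ' S) : GG Γ →* GG Γ' :=
  glift Γ (Sum.elim (gen Γ') (fun _ => 1)) (by
    rintro (u | u) (v | v) h
    · exact gen_commute (by rwa [← E.ll])
    · exact Commute.one_right _
    · exact Commute.one_left _
    · exact Commute.one_left _)

@[simp] theorem kil_inl (E : Ext Γ Γ' S) (v : V) : kil E (gen Γ (Sum.inl v)) = gen Γ' v := by
  simp [kil]

@[simp] theorem kil_inr (E : Ext Γ Γ' S) : kil E (gen Γ (Sum.inr ())) = 1 := by
  simp [kil]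

@[simp] theorem kil_inc (E : Ext Γ Γ' S) (g : GG Γ') : kil E (inc E g) = g := by
  have : (kil E).comp (inc E) = MonoidHom.id _ := ghom_ext (by simp)
  exact DFunLike.congr_fun this g

theorem inc_injective (E : Ext Γ Γ' S) : Function.Injective (inc E) :=
  Function.LeftInverse.injective (kil_inc E)

noncomputable def toHN (E : Ext Γ Γ' S) : GG Γ →* HN Γ' S :=
  glift Γ (Sum.elim (fun v => HNNExtension.of (gen Γ' v)) (fun _ => HNNExtension.t)) (by
    rintro (u | u) (v | v) h
    · exact (gen_commute (by rwa [← E.ll])).map _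
    · refine (hn_commute (gen_mem_par ?_)).symm
      intro hu
      exact h ((E.rl u).mpr hu).symm
    · refine (hn_commute (gen_mem_par ?_))
      intro hu
      exact h ((E.rl v).mpr hu)
    · exact Commute.refl _)

@[simp] theorem toHN_inl (E : Ext Γ Γ' S) (v : V) :
    toHN E (gen Γ (Sum.inl v)) = HNNExtension.of (gen Γ' v) := by
  simp [toHN]

@[simp] theorem toHN_inr (E : Ext Γ Γ' S) :
    toHN E (gen Γ (Sum.inr ())) = HNNExtension.t := by
  simp [toHN]

@[simp] theorem toHN_inc (E : Ext Γ Γ' S) (g : GG Γ') :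
    toHN E (inc E g) = HNNExtension.of g := by
  have : (toHN E).comp (inc E) = HNNExtension.of := ghom_ext (by simp)
  exact DFunLike.congr_fun this g

theorem inc_commute (E : Ext Γ Γ' S) {g : GG Γ'} (hg : g ∈ par Γ' Sᶜ) :
    Commute (gen Γ (Sum.inr ())) (inc E g) := by
  refine map_commute_of_par (inc E) _ ?_ hg
  intro v hv
  rw [inc_gen]
  exact gen_commute (by rw [E.rl]; exact hv)

noncomputable def ofHN (E : Ext Γ Γ' S) : HN Γ' S →* GG Γ :=
  HNNExtension.lift (inc E) (gen Γ (Sum.inr ())) (by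
    rintro ⟨a, ha⟩
    exact inc_commute E ha)

theorem ofHN_toHN (E : Ext Γ Γ' S) (g : GG Γ) : ofHN E (toHN E g) = g := by
  have : (ofHN E).comp (toHN E) = MonoidHom.id _ := by
    apply ghom_ext
    rintro (v | v)
    · simp [ofHN]
    · obtain rfl : v = () := rfl
      simp [ofHN]
  exact DFunLike.congr_fun this g

theorem par_compl_new (E : Ext Γ Γ' S) {g : GG Γ} :
    g ∈ par Γ {Sum.inr ()}ᶜ ↔ ∃ h, inc E h = g := by
  constructor
  · intro hg
    have := map_mem_of_par (MonoidHom.id (GG Γ)) (inc E).range (by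
      rintro (v | v) hv
      · exact ⟨gen Γ' v, by simp⟩
      · exact absurd rfl hv) hg
    exact this
  · rintro ⟨h, rfl⟩
    refine map_mem_all (inc E) _ ?_ h
    intro v
    rw [inc_gen]
    exact gen_mem_par (by simp)

/-- Every element of the HNN extension is the product of a reduced word. -/
theorem exists_reduced {G : Type} [Group G] {A B : Subgroup G} (φ : A ≃* B)
    (x : HNNExtension G A B φ) :
    ∃ w : HNNExtension.NormalWord.ReducedWord G A B, w.prod φ = x := by
  obtain ⟨d⟩ := HNNExtension.NormalWord.TransversalPair.nonempty G A B
  refine ⟨(x • (HNNExtension.NormalWord.empty : HNNExtension.NormalWord d)).toReducedWord, ?_⟩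
  rw [HNNExtension.NormalWord.prod_smul, HNNExtension.NormalWord.prod_empty, mul_one]

theorem mem_par_of_commute (E : Ext Γ Γ' S) {h : GG Γ'}
    (hc : Commute (gen Γ (Sum.inr ())) (inc E h)) : h ∈ par Γ' Sᶜ := by
  by_contra hn
  have hc' := hc.map (toHN E)
  rw [toHN_inr, toHN_inc] at hc'
  let w : HNNExtension.NormalWord.ReducedWord (GG Γ') (par Γ' Sᶜ) (par Γ' Sᶜ) :=
    { head := 1
      toList := [(1, h), (-1, 1)]
      chain := by
        simp only [List.isChain_cons_cons]
        refine ⟨?_, by simp⟩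
        intro hh
        exact absurd hh hn }
  have := HNNExtension.ReducedWord.toList_eq_nil_of_mem_of_range (MulEquiv.refl (par Γ' Sᶜ)) w (by
    refine ⟨h, ?_⟩
    simp only [HNNExtension.NormalWord.ReducedWord.prod, w]
    simp
    rw [eq_mul_inv_iff_mul_eq]
    exact hc'.symm.eq)
  simp [w] at this

end ext

theorem ext_step {V W : Type} {Γ : SimpleGraph (V ⊕ Unit)} {Γ' : SimpleGraph V} {S : Set V}
    {J : SimpleGraph (W ⊕ Unit)} {T : SimpleGraph W} {R : Set W}
    (E : Ext Γ Γ' S) (F : Ext J T R) (φ : GG Γ' →* GG T) (hφ : Function.Injective φ)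
    (hm : ∀ g, φ g ∈ par T Rᶜ ↔ g ∈ par Γ' Sᶜ) :
    ∃ ψ : GG Γ →* GG J, Function.Injective ψ ∧
      ∀ g, ψ g ∈ par J {Sum.inr ()}ᶜ ↔ g ∈ par Γ {Sum.inr ()}ᶜ := by
  have hcomm : ∀ v, v ∉ S → Commute (gen J (Sum.inr ())) (inc F (φ (gen Γ' v))) := by
    intro v hv
    exact inc_commute F ((hm _).mpr (gen_mem_par hv))
  let ψ : GG Γ →* GG J := glift Γ (Sum.elim (fun v => inc F (φ (gen Γ' v)))
      (fun _ => gen J (Sum.inr ()))) (by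
    rintro (u | u) (v | v) h
    · exact ((gen_commute (by rwa [← E.ll])).map φ).map _
    · exact (hcomm u (fun hu => h ((E.rl u).mpr hu).symm)).symm
    · exact (hcomm v (fun hu => h ((E.rl v).mpr hu)))
    · exact Commute.refl _)
  have hψi : ∀ g, ψ (inc E g) = inc F (φ g) := by
    intro g
    have : ψ.comp (inc E) = (inc F).comp φ := ghom_ext (by intro v; simp [ψ])
    exact DFunLike.congr_fun this g
  let μ : HN Γ' S →* HN T R := HNNExtension.lift (HNNExtension.of.comp φ) HNNExtension.t (by
    rintro ⟨a, ha⟩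
    exact hn_commute ((hm _).mpr ha))
  have hμ : ∀ g, toHN F (ψ g) = μ (toHN E g) := by
    intro g
    have : (toHN F).comp ψ = μ.comp (toHN E) := by
      apply ghom_ext
      rintro (v | v)
      · simp [ψ, μ]
      · obtain rfl : v = () := rfl
        simp [ψ, μ]
    exact DFunLike.congr_fun this g
  have key : ∀ g, ψ g ∈ par J {Sum.inr ()}ᶜ → ∃ h, inc E h = g := by
    intro g hg
    obtain ⟨k, hk⟩ := (par_compl_new F).mp hg
    obtain ⟨w, hw⟩ := exists_reduced _ (toHN E g)
    let w' : HNNExtension.NormalWord.ReducedWord (GG T) (par T Rᶜ) (par T Rᶜ) :=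
      { head := φ w.head
        toList := w.toList.map (fun p => (p.1, φ p.2))
        chain := by
          rw [List.isChain_map]
          refine w.chain.imp ?_
          rintro ⟨a1, a2⟩ ⟨b1, b2⟩ hab h
          apply hab
          rcases Int.units_eq_one_or a1 with rfl | rfl
          · exact (hm _).mp h
          · exact (hm _).mp h }
    have hw' : w'.prod (MulEquiv.refl _) = μ (toHN E g) := by
      rw [← hw]
      simp only [HNNExtension.NormalWord.ReducedWord.prod, w', map_mul, map_list_prod,
        List.map_map]
      congr 1
      congr 1
      apply List.map_congr_left
      intro p _
      simp [μ]
    have hnil := HNNExtension.ReducedWord.toList_eq_nil_of_mem_of_range (MulEquiv.refl _) w' (by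
      rw [hw', ← hμ, ← hk, toHN_inc]
      exact ⟨k, rfl⟩)
    have hnil' : w.toList = [] := by simpa [w'] using hnil
    refine ⟨w.head, ?_⟩
    rw [← ofHN_toHN E g, ← hw]
    simp [HNNExtension.NormalWord.ReducedWord.prod, hnil', ofHN]
  refine ⟨ψ, ?_, ?_⟩
  · rw [injective_iff_map_eq_one]
    intro g hg
    obtain ⟨h, rfl⟩ := key g (by rw [hg]; exact one_mem _)
    rw [hψi] at hg
    have h1 : φ h = 1 := inc_injective F (by rw [hg, map_one])
    have h2 : h = 1 := hφ (by rw [h1, map_one])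
    rw [h2, map_one]
  · intro g
    refine ⟨fun h => (par_compl_new E).mpr (key g h), fun h => ?_⟩
    obtain ⟨k, rfl⟩ := (par_compl_new E).mp h
    rw [hψi]
    exact (par_compl_new F).mpr ⟨_, rfl⟩

/-! ### Joining trees by an edge -/

/-- Disjoint union with one extra edge. -/
def join {A B : Type} (G : SimpleGraph A) (a : A) (H : SimpleGraph B) (b : B) :
    SimpleGraph (A ⊕ B) :=
  (G.sum H) ⊔ SimpleGraph.edge (Sum.inl a) (Sum.inr b)

section join
variable {A B : Type} {G : SimpleGraph A} {a : A} {H : SimpleGraph B} {b : B}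

@[simp] theorem join_ll (u v : A) : (join G a H b).Adj (Sum.inl u) (Sum.inl v) ↔ G.Adj u v := by
  simp [join, SimpleGraph.edge_adj]

@[simp] theorem join_rr (u v : B) : (join G a H b).Adj (Sum.inr u) (Sum.inr v) ↔ H.Adj u v := by
  simp [join, SimpleGraph.edge_adj]

@[simp] theorem join_lr (u : A) (v : B) :
    (join G a H b).Adj (Sum.inl u) (Sum.inr v) ↔ u = a ∧ v = b := by
  simp [join, SimpleGraph.edge_adj]

@[simp] theorem join_rl (u : A) (v : B) :
    (join G a H b).Adj (Sum.inr v) (Sum.inl u) ↔ u = a ∧ v = b := by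
  rw [SimpleGraph.adj_comm, join_lr]

theorem join_isTree [Finite A] [Finite B] (hG : G.IsTree) (hH : H.IsTree) :
    (join G a H b).IsTree := by
  rw [SimpleGraph.isTree_iff_connected_and_card] at *
  refine ⟨hG.1.sum_sup_edge hH.1, ?_⟩
  have hs : (join G a H b).edgeSet = (G.sum H).edgeSet ∪ {s(Sum.inl a, Sum.inr b)} := by
    ext e
    induction e with
    | _ x y =>
      rcases x with x | x <;> rcases y with y | y <;>
        simp [join, SimpleGraph.edge_adj]
  have hd : s(Sum.inl a, Sum.inr b) ∉ (G.sum H).edgeSet := by simp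
  have hc : Nat.card (G.sum H).edgeSet = Nat.card G.edgeSet + Nat.card H.edgeSet := by
    rw [Nat.card_congr SimpleGraph.edgeSetSumEquiv, Nat.card_sum]
  rw [Nat.card_coe_set_eq, hs, Set.union_singleton, Set.ncard_insert_of_notMem hd,
    ← Nat.card_coe_set_eq, hc, Nat.card_sum]
  omega

theorem join_nbr_inl_ne [Finite A] [Finite B] {v : A} (h : v ≠ a) :
    ((join G a H b).neighborSet (Sum.inl v)).ncard = (G.neighborSet v).ncard := by
  rw [← Set.ncard_image_of_injective (G.neighborSet v) (Sum.inl_injective (β := B))]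
  congr 1
  ext (x | x) <;> simp [h]

theorem join_nbr_inr_ne [Finite A] [Finite B] {v : B} (h : v ≠ b) :
    ((join G a H b).neighborSet (Sum.inr v)).ncard = (H.neighborSet v).ncard := by
  rw [← Set.ncard_image_of_injective (H.neighborSet v) (Sum.inr_injective (α := A))]
  congr 1
  ext (x | x) <;> simp [h]

theorem join_nbr_inl [Finite A] [Finite B] :
    ((join G a H b).neighborSet (Sum.inl a)).ncard ≤ (G.neighborSet a).ncard + 1 := by
  rw [← Set.ncard_image_of_injective (G.neighborSet a) (Sum.inl_injective (β := B))]
  refine le_trans (Set.ncard_le_ncard (t := insert (Sum.inr b) (Sum.inl '' G.neighborSet a)) ?_)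
    (Set.ncard_insert_le _ _)
  rintro (x | x) <;> simp

theorem join_nbr_inr [Finite A] [Finite B] :
    ((join G a H b).neighborSet (Sum.inr b)).ncard ≤ (H.neighborSet b).ncard + 1 := by
  rw [← Set.ncard_image_of_injective (H.neighborSet b) (Sum.inr_injective (α := A))]
  refine le_trans (Set.ncard_le_ncard (t := insert (Sum.inl a) (Sum.inr '' H.neighborSet b)) ?_)
    (Set.ncard_insert_le _ _)
  rintro (x | x) <;> simp

theorem join_deg [Finite A] [Finite B] (hG : ∀ v, (G.neighborSet v).ncard ≤ 3)
    (hH : ∀ v, (H.neighborSet v).ncard ≤ 3) (ha : (G.neighborSet a).ncard ≤ 2)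
    (hb : (H.neighborSet b).ncard ≤ 2) (v : A ⊕ B) :
    ((join G a H b).neighborSet v).ncard ≤ 3 := by
  rcases v with v | v
  · by_cases h : v = a
    · subst h
      exact join_nbr_inl.trans (by omega)
    · rw [join_nbr_inl_ne h]; exact hG v
  · by_cases h : v = b
    · subst h
      exact join_nbr_inr.trans (by omega)
    · rw [join_nbr_inr_ne h]; exact hH v

end join

/-- Adding a pendant vertex. -/
abbrev leaf {A : Type} (G : SimpleGraph A) (a : A) : SimpleGraph (A ⊕ Unit) :=
  join G a (⊥ : SimpleGraph Unit) ()

theorem leaf_ext {A : Type} (G : SimpleGraph A) (a : A) : Ext (leaf G a) G {a} :=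
  ⟨by simp, by simp⟩

theorem bot_unit_nbr (v : Unit) : ((⊥ : SimpleGraph Unit).neighborSet v).ncard = 0 := by
  have : (⊥ : SimpleGraph Unit).neighborSet v = ∅ := by ext; simp
  simp [this]

theorem leaf_nbr {A : Type} [Finite A] (G : SimpleGraph A) (a : A) :
    ((leaf G a).neighborSet (Sum.inr ())).ncard ≤ 1 := by
  have := join_nbr_inr (G := G) (a := a) (H := (⊥ : SimpleGraph Unit)) (b := ())
  rw [bot_unit_nbr] at this
  exact this

theorem leaf_isTree {A : Type} [Finite A] {G : SimpleGraph A} {a : A} (hG : G.IsTree) :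
    (leaf G a).IsTree := join_isTree hG SimpleGraph.IsTree.of_subsingleton

theorem leaf_deg {A : Type} [Finite A] {G : SimpleGraph A} {a : A}
    (hG : ∀ v, (G.neighborSet v).ncard ≤ 3) (ha : (G.neighborSet a).ncard ≤ 2) (v : A ⊕ Unit) :
    ((leaf G a).neighborSet v).ncard ≤ 3 :=
  join_deg hG (fun v => by rw [bot_unit_nbr]; omega) ha (by rw [bot_unit_nbr]; omega) v

/-! ### The inductive property -/

/-- `G(Δ)` embeds in `G(T)` for a rooted tree `T`, such that the elements avoiding the root
are exactly the elements of the parabolic subgroup on the complement of `S`. -/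
def Good {V : Type} (Δ : SimpleGraph V) (S : Set V) : Prop :=
  ∃ (W : Type) (_ : Fintype W) (T : SimpleGraph W) (r : W), T.IsTree ∧
    (∀ w, (T.neighborSet w).ncard ≤ 3) ∧ (T.neighborSet r).ncard ≤ 2 ∧
    ∃ φ : GG Δ →* GG T, Function.Injective φ ∧ ∀ g, φ g ∈ par T {r}ᶜ ↔ g ∈ par Δ Sᶜ

theorem Good.extend {V : Type} {Γ : SimpleGraph (V ⊕ Unit)} {Γ' : SimpleGraph V} {S : Set V}
    (E : Ext Γ Γ' S) (h : Good Γ' S) : Good Γ {Sum.inr ()} := by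
  obtain ⟨W, _, T, r, hT, h3, h2, φ, hφ, hm⟩ := h
  exact ⟨W ⊕ Unit, inferInstance, leaf T r, Sum.inr (), leaf_isTree hT, leaf_deg h3 h2,
    (leaf_nbr T r).trans (by omega), ext_step E (leaf_ext T r) φ hφ hm⟩

theorem Good.forget {V : Type} {Δ : SimpleGraph V} {S : Set V} (h : Good Δ S) : Good Δ ∅ := by
  obtain ⟨W, _, T, r, hT, h3, h2, φ, hφ, hm⟩ := h
  refine ⟨W ⊕ Unit, inferInstance, leaf T r, Sum.inr (), leaf_isTree hT, leaf_deg h3 h2,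
    (leaf_nbr T r).trans (by omega), (inc (leaf_ext T r)).comp φ,
    (inc_injective (leaf_ext T r)).comp hφ, ?_⟩
  intro g
  rw [Set.compl_empty]
  exact ⟨fun _ => par_univ _ _, fun _ => (par_compl_new (leaf_ext T r)).mpr ⟨_, rfl⟩⟩

theorem Good.merge {V : Type} {Δ : SimpleGraph V} {S₁ S₂ : Set V} (h₁ : Good Δ S₁)
    (h₂ : Good Δ S₂) : Good Δ (S₁ ∪ S₂) := by
  obtain ⟨W₁, _, T₁, r₁, hT₁, h31, h21, φ₁, hφ₁, hm₁⟩ := h₁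
  obtain ⟨W₂, _, T₂, r₂, hT₂, h32, h22, φ₂, hφ₂, hm₂⟩ := h₂
  let X := join (leaf T₁ r₁) (Sum.inr ()) T₂ r₂
  let x : GG X := gen X (Sum.inl (Sum.inr ()))
  have E₁ := leaf_ext T₁ r₁
  have E₂ := leaf_ext T₂ r₂
  let i₁ : GG T₁ →* GG X := glift T₁ (fun v => gen X (Sum.inl (Sum.inl v)))
    (fun u v h => gen_commute (by simpa [X] using h))
  let i₂ : GG T₂ →* GG X := glift T₂ (fun v => gen X (Sum.inr v))
    (fun u v h => gen_commute (by simpa [X] using h))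
  have hi : ∀ g k, Commute (i₁ g) (i₂ k) := by
    intro g k
    refine map_commute_of_par i₂ _ (A := Set.univ) ?_ (par_univ _ _)
    intro v _
    refine (map_commute_of_par i₁ _ (A := Set.univ) ?_ (par_univ _ _)).symm
    intro u _
    simp only [i₁, i₂, glift_gen]
    exact gen_commute (by simp [X])
  let θ : GG Δ →* GG X := (MonoidHom.noncommCoprod i₁ i₂ hi).comp (φ₁.prod φ₂)
  have hθ : ∀ g, θ g = i₁ (φ₁ g) * i₂ (φ₂ g) := by
    intro g; simp [θ]
  let φ : GG Δ →* GG X := (MulAut.conj x).toMonoidHom.comp θ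
  have hφ : ∀ g, φ g = x * (i₁ (φ₁ g) * i₂ (φ₂ g)) * x⁻¹ := by
    intro g
    simp [φ, hθ]
  let k₁ : GG X →* GG (leaf T₁ r₁) := glift X (Sum.elim (gen _) (fun _ => 1)) (by
    rintro (u | u) (v | v) h
    · exact gen_commute (by simpa [X] using h)
    · exact Commute.one_right _
    · exact Commute.one_left _
    · exact Commute.one_left _)
  let k₂ : GG X →* GG (leaf T₂ r₂) := glift X (Sum.elim (Sum.elim (fun _ => 1)
      (fun _ => gen _ (Sum.inr ()))) (fun v => gen _ (Sum.inl v))) (by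
    rintro ((u | u) | u) ((v | v) | v) h
    all_goals first
      | exact Commute.one_left _
      | exact Commute.one_right _
      | exact gen_commute (by simpa [X] using h))
  have k1x : k₁ x = gen _ (Sum.inr ()) := by simp [k₁, x]
  have k2x : k₂ x = gen _ (Sum.inr ()) := by simp [k₂, x]
  have k1i1 : ∀ g, k₁ (i₁ g) = inc E₁ g := by
    intro g
    have : k₁.comp i₁ = inc E₁ := ghom_ext (by intro v; simp [k₁, i₁])
    exact DFunLike.congr_fun this g
  have k2i2 : ∀ g, k₂ (i₂ g) = inc E₂ g := by
    intro g
    have : k₂.comp i₂ = inc E₂ := ghom_ext (by intro v; simp [k₂, i₂])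
    exact DFunLike.congr_fun this g
  have k1i2 : ∀ g, k₁ (i₂ g) = 1 := by
    intro g
    have : k₁.comp i₂ = 1 := ghom_ext (by intro v; simp [k₁, i₂])
    exact DFunLike.congr_fun this g
  have k2i1 : ∀ g, k₂ (i₁ g) = 1 := by
    intro g
    have : k₂.comp i₁ = 1 := ghom_ext (by intro v; simp [k₂, i₁])
    exact DFunLike.congr_fun this g
  -- an element of the base whose conjugate avoids the new vertex commutes with it
  have conj : ∀ {W : Type} {T : SimpleGraph W} {r : W} (E : Ext (leaf T r) T {r}) (h : GG T),
      gen (leaf T r) (Sum.inr ()) * inc E h * (gen (leaf T r) (Sum.inr ()))⁻¹ ∈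
        par (leaf T r) {Sum.inr ()}ᶜ → h ∈ par T {r}ᶜ := by
    intro W T r E h hh
    obtain ⟨k, hk⟩ := (par_compl_new E).mp hh
    have := congrArg (kil E) hk
    simp only [map_mul, map_inv, kil_inc, kil_inr, one_mul, inv_one, mul_one] at this
    subst this
    exact mem_par_of_commute E (mul_inv_eq_iff_eq_mul.mp hk.symm)
  refine ⟨(W₁ ⊕ Unit) ⊕ W₂, inferInstance, X, Sum.inl (Sum.inr ()),
    join_isTree (leaf_isTree hT₁) hT₂,
    join_deg (leaf_deg h31 h21) h32 ((leaf_nbr T₁ r₁).trans (by omega)) h22,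
    join_nbr_inl.trans (by have := leaf_nbr T₁ r₁; omega), φ, ?_, ?_⟩
  · rw [injective_iff_map_eq_one]
    intro g hg
    have := congrArg k₁ hg
    rw [hφ] at this
    simp only [map_mul, map_inv, k1i1, k1i2, mul_one, map_one] at this
    rw [mul_inv_eq_one, mul_eq_left] at this
    have h1 : φ₁ g = 1 := inc_injective E₁ (by rw [this, map_one])
    exact hφ₁ (by rw [h1, map_one])
  · intro g
    constructor
    · intro hg
      have m1 : k₁ (φ g) ∈ par (leaf T₁ r₁) {Sum.inr ()}ᶜ := by
        refine map_mem_of_par k₁ _ ?_ hg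
        rintro (v | v) hv
        · simp only [k₁, glift_gen, Sum.elim_inl]
          exact gen_mem_par (by simpa using hv)
        · simp only [k₁, glift_gen, Sum.elim_inr]
          exact one_mem _
      have m2 : k₂ (φ g) ∈ par (leaf T₂ r₂) {Sum.inr ()}ᶜ := by
        refine map_mem_of_par k₂ _ ?_ hg
        rintro ((v | v) | v) hv
        · simp only [k₂, glift_gen, Sum.elim_inl]
          exact one_mem _
        · exact absurd rfl hv
        · simp only [k₂, glift_gen, Sum.elim_inr]
          exact gen_mem_par (by simp)
      rw [hφ] at m1 m2
      simp only [map_mul, map_inv, k1i1, k1i2, k2i1, k2i2, mul_one, one_mul, k1x, k2x] at m1 m2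
      have p1 := (hm₁ g).mp (conj E₁ _ m1)
      have p2 := (hm₂ g).mp (conj E₂ _ m2)
      rw [Set.compl_union]
      exact par_inter p1 p2
    · intro hg
      rw [Set.compl_union] at hg
      have p1 := (hm₁ g).mpr (par_mono Set.inter_subset_left hg)
      have p2 := (hm₂ g).mpr (par_mono Set.inter_subset_right hg)
      have c1 : Commute x (i₁ (φ₁ g)) := by
        refine map_commute_of_par i₁ x ?_ p1
        intro v hv
        simp only [i₁, x, glift_gen]
        exact gen_commute (by simpa [X] using hv)
      have c2 : Commute x (i₂ (φ₂ g)) := by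
        refine map_commute_of_par i₂ x ?_ p2
        intro v hv
        simp only [i₂, x, glift_gen]
        exact gen_commute (by simpa [X] using hv)
      rw [hφ, (c1.mul_right c2).eq, mul_inv_cancel_right]
      refine mul_mem (map_mem_all i₁ _ ?_ _) (map_mem_all i₂ _ ?_ _)
      · intro v
        simp only [i₁, glift_gen]
        exact gen_mem_par (by simp)
      · intro v
        simp only [i₂, glift_gen]
        exact gen_mem_par (by simp)

theorem Good.transport {V V' : Type} (e : V ≃ V') {Δ : SimpleGraph V'} {S : Set V'}
    (h : Good (Δ.comap e) (e ⁻¹' S)) : Good Δ S := by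
  obtain ⟨W, _, T, r, hT, h3, h2, φ, hφ, hm⟩ := h
  let f : GG Δ →* GG (Δ.comap e) := glift Δ (fun v => gen _ (e.symm v))
    (fun u v h => gen_commute (by simpa using h))
  let f' : GG (Δ.comap e) →* GG Δ := glift _ (fun v => gen _ (e v))
    (fun u v h => gen_commute (by simpa using h))
  have hf : ∀ g, f' (f g) = g := by
    intro g
    have : f'.comp f = MonoidHom.id _ := ghom_ext (by intro v; simp [f, f'])
    exact DFunLike.congr_fun this g
  refine ⟨W, inferInstance, T, r, hT, h3, h2, φ.comp f,
    hφ.comp (Function.LeftInverse.injective hf), ?_⟩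
  intro g
  rw [MonoidHom.comp_apply, hm]
  constructor
  · intro h
    rw [← hf g]
    refine map_mem_of_par f' _ ?_ h
    intro v hv
    simp only [f', glift_gen]
    exact gen_mem_par hv
  · intro h
    refine map_mem_of_par f _ ?_ h
    intro v hv
    simp only [f, glift_gen]
    exact gen_mem_par (by simpa using hv)

theorem good_sum_unit {V : Type} [Finite V] (ih : ∀ (Δ : SimpleGraph V) (S : Set V), Good Δ S)
    (Δ : SimpleGraph (V ⊕ Unit)) (S : Set (V ⊕ Unit)) : Good Δ S := by
  classical
  have last : ∀ Δ : SimpleGraph (V ⊕ Unit), Good Δ {Sum.inr ()} := fun Δ =>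
    Good.extend (Γ' := Δ.comap Sum.inl) (S := {v | Δ.Adj (Sum.inr ()) (Sum.inl v)})
      ⟨by simp, by simp⟩ (ih _ _)
  have single : ∀ b, Good Δ {b} := by
    intro b
    refine Good.transport (Equiv.swap b (Sum.inr ())) ?_
    have : (Equiv.swap b (Sum.inr ())) ⁻¹' {b} = {Sum.inr ()} := by
      ext y
      simp only [Set.mem_preimage, Set.mem_singleton_iff]
      rw [Equiv.apply_eq_iff_eq_symm_apply, Equiv.symm_swap, Equiv.swap_apply_left]
    rw [this]
    exact last _
  induction S, S.toFinite using Set.Finite.induction_on with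
  | empty => exact (last Δ).forget
  | insert _ _ h => rw [Set.insert_eq]; exact (single _).merge h

theorem good_all (V : Type) [Finite V] : ∀ (Δ : SimpleGraph V) (S : Set V), Good Δ S := by
  induction V using Finite.induction_empty_option with
  | of_equiv e h => exact fun Δ S => Good.transport e (h _ _)
  | h_empty =>
    intro Δ S
    have hsub : ∀ g k : GG Δ, g = k := by
      intro g k
      have := map_mem_all (MonoidHom.id (GG Δ)) ⊥ (fun v => v.elim)
      have h1 := Subgroup.mem_bot.mp (this g)
      have h2 := Subgroup.mem_bot.mp (this k)
      exact h1.trans h2.symm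
    refine ⟨Unit, inferInstance, ⊥, (), SimpleGraph.IsTree.of_subsingleton, ?_, ?_, 1,
      fun g k _ => hsub g k, ?_⟩
    · intro w; rw [bot_unit_nbr]; omega
    · rw [bot_unit_nbr]; omega
    · intro g
      rw [hsub g 1]
      simp [one_mem]
  | h_option h =>
    exact fun Δ S => Good.transport (Equiv.optionEquivSumPUnit _).symm (good_sum_unit h _ _)

end AntiTree

/-- For every finite graph `Λ` there is a finite tree `T` of maximum degree at most 3
with `G(Λ) ↪ G(T)`. -/
theorem statement9 {V : Type} [Fintype V] (Λ : SimpleGraph V) :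
    ∃ (W : Type) (_ : Fintype W) (T : SimpleGraph W), T.IsTree ∧
      (∀ w : W, (T.neighborSet w).ncard ≤ 3) ∧
      ∃ φ : GG Λ →* GG T, Function.Injective φ := by
  obtain ⟨W, hW, T, r, hT, h3, _, φ, hφ, _⟩ := AntiTree.good_all V Λ ∅
  exact ⟨W, hW, T, hT, h3, φ, hφ⟩
end
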